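/- arXiv:2203.01632 — 12 statements merged into one kernel-verified Lean document; each statement's English description precedes it below -/
import Mathlib

section
/- Let a > 0, L > 0, real numbers 0 < b₁ < b₂ < c₁ < c₂ < d₁ < d₂ < L, a real number λ ≠ 0, and a real number c₀ ≠ 0 with |c₀|·(c₂ − c₁) < min(√a, 1). Let u, y : [0,L] → ℂ be continuously differentiable with u(0) = u(L) = y(0) = y(L) = 0, with u′(x) = 0 for all x ∈ (b₁,b₂) and y′(x) = 0 for all x ∈ (d₁,d₂). Assume u and y are twice differentiable on each of the open intervals (0,c₁), (c₁,c₂), (c₂,L) and satisfy there λ²u(x) + a·u″(x) − iλ·c(x)·y(x) = 0 and λ²y(x) + y″(x) + iλ·c(x)·u(x) = 0, where c(x) = c₀ for x ∈ (c₁,c₂) and c(x) = 0 otherwise. Then u(x) = 0 and y(x) = 0 for all x ∈ [0,L]. -/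
/-!
On an interval where the coupling vanishes, each unknown solves `α w'' + λ² w = 0`, and the energy
`λ²‖w‖² + α‖w'‖²` is conserved; hence zero Cauchy data at one point propagate to the whole closed
interval (`free_wave_vanish`). Where the derivative vanishes, the equation forces the function to
vanish (`damped_vanish`). So `u = 0` on `[0, c₁]` and `y = 0` on `[c₂, L]`.

On the coupling interval one uses the multiplier functional
`Φ x = (c₂ - x)(λ²‖u‖² + a‖u'‖²) - (x - c₁)(λ²‖y‖² + ‖y'‖²)`, which is zero at both ends because
`u, u'` vanish at `c₁` and `y, y'` vanish at `c₂`. The smallness of `|c₀|(c₂ - c₁)` makes `Φ'` at most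
a negative multiple of the total energy, so `Φ` is antitone, hence identically zero, hence the total
energy is zero (`coupled_vanish`). Continuity up to `c₁` and `c₂` then gives zero Cauchy data for `y`
at `c₁` and for `u` at `c₂`, and energy conservation finishes the proof.
-/

open Set

lemma hasDerivAt_norm_sq_re_im {w : ℝ → ℂ} {w' : ℂ} {x : ℝ} (h : HasDerivAt w w' x) :
    HasDerivAt (fun t => ‖w t‖ ^ 2) (2 * ((w x).re * w'.re + (w x).im * w'.im)) x := by
  convert h.norm_sq using 2
  simp [Complex.inner]
  ring

/-- Zero Cauchy data at one point of `[p, q]` force a solution of `α w'' + λ² w = 0` to vanish on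
`[p, q]`, by conservation of the energy `λ²‖w‖² + α‖w'‖²`. -/
lemma free_wave_vanish {α lam p q x₀ : ℝ} (hα : 0 < α) (hlam : lam ≠ 0)
    {w w' w'' : ℝ → ℂ} (hw : ∀ x ∈ Icc p q, HasDerivAt w (w' x) x)
    (hw'c : ContinuousOn w' (Icc p q))
    (hw'' : ∀ x ∈ Ioo p q, HasDerivAt w' (w'' x) x)
    (heq : ∀ x ∈ Ioo p q, (lam : ℂ) ^ 2 * w x + (α : ℂ) * w'' x = 0)
    (hx₀ : x₀ ∈ Icc p q) (h0 : w x₀ = 0) (h0' : w' x₀ = 0) :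
    ∀ x ∈ Icc p q, w x = 0 ∧ w' x = 0 := by
  set E : ℝ → ℝ := fun t => lam ^ 2 * ‖w t‖ ^ 2 + α * ‖w' t‖ ^ 2 with hE
  have hwc : ContinuousOn w (Icc p q) := fun x hx => (hw x hx).continuousAt.continuousWithinAt
  have hEc : ContinuousOn E (Icc p q) :=
    ((hwc.norm.pow 2).const_smul (lam ^ 2)).add ((hw'c.norm.pow 2).const_smul α)
  have hEd : ∀ x ∈ Ioo p q, HasDerivAt E 0 x := by
    intro x hx
    have h1 := (hasDerivAt_norm_sq_re_im (hw x (Ioo_subset_Icc_self hx))).const_mul (lam ^ 2)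
    have h2 := (hasDerivAt_norm_sq_re_im (hw'' x hx)).const_mul α
    refine (h1.add h2).congr_deriv ?_
    have e := heq x hx
    have er := congrArg Complex.re e
    have ei := congrArg Complex.im e
    simp [← Complex.ofReal_pow] at er ei
    linear_combination (2 * (w' x).re) * er + 2 * (w' x).im * ei
  have hconst : ∀ x ∈ Icc p q, ∀ z ∈ Icc p q, x ≤ z → E x = E z := by
    have hanti : AntitoneOn E (Icc p q) :=
      antitoneOn_of_deriv_nonpos (convex_Icc p q) hEc
        (fun x hx => by
          rw [interior_Icc] at hx
          exact (hEd x hx).differentiableAt.differentiableWithinAt)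
        (fun x hx => by
          rw [interior_Icc] at hx
          exact (hEd x hx).deriv.le)
    have hmono : MonotoneOn E (Icc p q) :=
      monotoneOn_of_deriv_nonneg (convex_Icc p q) hEc
        (fun x hx => by
          rw [interior_Icc] at hx
          exact (hEd x hx).differentiableAt.differentiableWithinAt)
        (fun x hx => by
          rw [interior_Icc] at hx
          exact (hEd x hx).deriv.ge)
    exact fun x hx z hz hxz => le_antisymm (hmono hx hz hxz) (hanti hx hz hxz)
  intro x hx
  have hEx : E x = 0 := by
    have hE0 : E x₀ = 0 := by simp [hE, h0, h0']
    rcases le_total x x₀ with h | h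
    · rw [hconst x hx x₀ hx₀ h, hE0]
    · rw [← hconst x₀ hx₀ x hx h, hE0]
  have hl : 0 < lam ^ 2 := by positivity
  have h1 : 0 ≤ lam ^ 2 * ‖w x‖ ^ 2 := by positivity
  have h2 : 0 ≤ α * ‖w' x‖ ^ 2 := by positivity
  have hEx' : lam ^ 2 * ‖w x‖ ^ 2 + α * ‖w' x‖ ^ 2 = 0 := hEx
  have h3 : lam ^ 2 * ‖w x‖ ^ 2 = 0 := by linarith
  have h4 : α * ‖w' x‖ ^ 2 = 0 := by linarith
  constructor
  · simpa [hlam] using h3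
  · simpa [hα.ne'] using h4

lemma damped_vanish {α lam p q : ℝ} (hlam : lam ≠ 0) {w w' w'' : ℝ → ℂ}
    (hw'0 : ∀ x ∈ Ioo p q, w' x = 0)
    (hw'' : ∀ x ∈ Ioo p q, HasDerivAt w' (w'' x) x)
    (heq : ∀ x ∈ Ioo p q, (lam : ℂ) ^ 2 * w x + (α : ℂ) * w'' x = 0) :
    ∀ x ∈ Ioo p q, w x = 0 := by
  intro x hx
  have hev : w' =ᶠ[nhds x] fun _ => 0 := by
    filter_upwards [Ioo_mem_nhds hx.1 hx.2] with t ht using hw'0 t ht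
  have h0 : w'' x = 0 :=
    (hw'' x hx).unique ((hasDerivAt_const x (0 : ℂ)).congr_of_eventuallyEq hev)
  simpa [h0, hlam] using heq x hx

/-- The coupling term `re (z̄ · i λ c v)`, weighted by `s ≤ ℓ`, is absorbed by the energies as soon
as `|c| ℓ ≤ θ r`. -/
lemma coupling_bound {lam c s ℓ θ r : ℝ} (hs0 : 0 ≤ s) (hs : s ≤ ℓ) (hθ : 0 ≤ θ)
    (hk : |c| * ℓ ≤ θ * r) (z v : ℂ) :
    |2 * s * (lam * c * (z.im * v.re - z.re * v.im))|
      ≤ θ * (r ^ 2 * ‖z‖ ^ 2 + lam ^ 2 * ‖v‖ ^ 2) := by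
  have hcs : |z.im * v.re - z.re * v.im| ≤ ‖z‖ * ‖v‖ := by
    rw [← Complex.norm_conj v, ← norm_mul]
    have := Complex.abs_im_le_norm (z * (starRingEnd ℂ) v)
    simpa [sub_eq_add_neg, add_comm, mul_comm] using this
  have h1 : |2 * s * (lam * c * (z.im * v.re - z.re * v.im))|
      = 2 * (|c| * s) * (|lam| * |z.im * v.re - z.re * v.im|) := by
    simp only [abs_mul, abs_two, abs_of_nonneg hs0]
    ring
  have h2 : |c| * s ≤ θ * r := (mul_le_mul_of_nonneg_left hs (abs_nonneg c)).trans hk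
  have h3 : 0 ≤ θ * r := (mul_nonneg (abs_nonneg c) hs0).trans h2
  rw [h1]
  calc 2 * (|c| * s) * (|lam| * |z.im * v.re - z.re * v.im|)
      ≤ 2 * (θ * r) * (|lam| * (‖z‖ * ‖v‖)) := by
        gcongr
    _ ≤ θ * (r ^ 2 * ‖z‖ ^ 2 + lam ^ 2 * ‖v‖ ^ 2) := by
        have := mul_nonneg hθ (sq_nonneg (r * ‖z‖ - |lam| * ‖v‖))
        rw [← sq_abs lam]
        linarith [this]

/-- On the coupling interval, zero Cauchy data for `u` at the left end and for `y` at the right end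
force both to vanish, provided the coupling is small relative to the wave speeds. -/
lemma coupled_vanish {a lam c₀ c₁ c₂ : ℝ} (ha : 0 < a) (hlam : lam ≠ 0) (hc : c₁ < c₂)
    (hsmall : |c₀| * (c₂ - c₁) < min (Real.sqrt a) 1)
    {u u' u'' y y' y'' : ℝ → ℂ}
    (hu : ∀ x ∈ Icc c₁ c₂, HasDerivAt u (u' x) x) (hu'c : ContinuousOn u' (Icc c₁ c₂))
    (hy : ∀ x ∈ Icc c₁ c₂, HasDerivAt y (y' x) x) (hy'c : ContinuousOn y' (Icc c₁ c₂))
    (hu'' : ∀ x ∈ Ioo c₁ c₂, HasDerivAt u' (u'' x) x)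
    (hy'' : ∀ x ∈ Ioo c₁ c₂, HasDerivAt y' (y'' x) x)
    (hequ : ∀ x ∈ Ioo c₁ c₂,
      (lam : ℂ) ^ 2 * u x + (a : ℂ) * u'' x - Complex.I * lam * c₀ * y x = 0)
    (heqy : ∀ x ∈ Ioo c₁ c₂,
      (lam : ℂ) ^ 2 * y x + y'' x + Complex.I * lam * c₀ * u x = 0)
    (hu1 : u c₁ = 0) (hu1' : u' c₁ = 0) (hy2 : y c₂ = 0) (hy2' : y' c₂ = 0) :
    ∀ x ∈ Ioo c₁ c₂, (u x = 0 ∧ u' x = 0) ∧ (y x = 0 ∧ y' x = 0) := by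
  have hsa : 0 < Real.sqrt a := Real.sqrt_pos.2 ha
  have hm : 0 < min (Real.sqrt a) 1 := lt_min hsa one_pos
  obtain ⟨θ, hθ0, hθ1, hθa, hθb⟩ : ∃ θ : ℝ, 0 ≤ θ ∧ θ < 1 ∧
      |c₀| * (c₂ - c₁) ≤ θ * Real.sqrt a ∧ |c₀| * (c₂ - c₁) ≤ θ * 1 := by
    have hk0 : 0 ≤ |c₀| * (c₂ - c₁) := mul_nonneg (abs_nonneg _) (by linarith)
    have hθ0 : 0 ≤ |c₀| * (c₂ - c₁) / min (Real.sqrt a) 1 := div_nonneg hk0 hm.le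
    have e : |c₀| * (c₂ - c₁) / min (Real.sqrt a) 1 * min (Real.sqrt a) 1 = |c₀| * (c₂ - c₁) :=
      div_mul_cancel₀ _ hm.ne'
    refine ⟨_, hθ0, (div_lt_one hm).2 hsmall, ?_, ?_⟩
    · exact e.symm.le.trans (mul_le_mul_of_nonneg_left (min_le_left _ _) hθ0)
    · exact e.symm.le.trans (mul_le_mul_of_nonneg_left (min_le_right _ _) hθ0)
  have huc : ContinuousOn u (Icc c₁ c₂) := fun x hx => (hu x hx).continuousAt.continuousWithinAt
  have hyc : ContinuousOn y (Icc c₁ c₂) := fun x hx => (hy x hx).continuousAt.continuousWithinAt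
  set Φ : ℝ → ℝ := fun t => (c₂ - t) * (lam ^ 2 * ‖u t‖ ^ 2 + a * ‖u' t‖ ^ 2)
    - (t - c₁) * (lam ^ 2 * ‖y t‖ ^ 2 + 1 * ‖y' t‖ ^ 2) with hΦ
  have hΦc : ContinuousOn Φ (Icc c₁ c₂) := by fun_prop
  set E : ℝ → ℝ := fun t => (lam ^ 2 * ‖u t‖ ^ 2 + a * ‖u' t‖ ^ 2)
    + (lam ^ 2 * ‖y t‖ ^ 2 + ‖y' t‖ ^ 2) with hE
  have hE0 : ∀ x, 0 ≤ E x := fun x => by positivity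
  have hΦd : ∀ x ∈ Ioo c₁ c₂, ∃ D, HasDerivAt Φ D x ∧ D ≤ -((1 - θ) * E x) := by
    intro x hx
    have hxI := Ioo_subset_Icc_self hx
    have h1 := ((hasDerivAt_norm_sq_re_im (hu x hxI)).const_mul (lam ^ 2)).add
      ((hasDerivAt_norm_sq_re_im (hu'' x hx)).const_mul a)
    have h2 := ((hasDerivAt_norm_sq_re_im (hy x hxI)).const_mul (lam ^ 2)).add
      ((hasDerivAt_norm_sq_re_im (hy'' x hx)).const_mul 1)
    have h3 := (((hasDerivAt_id x).const_sub c₂).mul h1).sub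
      (((hasDerivAt_id x).sub_const c₁).mul h2)
    refine ⟨_, h3, ?_⟩
    have er := congrArg Complex.re (hequ x hx)
    have ei := congrArg Complex.im (hequ x hx)
    have fr := congrArg Complex.re (heqy x hx)
    have fi := congrArg Complex.im (heqy x hx)
    simp [← Complex.ofReal_pow] at er ei fr fi
    have b1 := (abs_le.1 (coupling_bound (lam := lam) (s := c₂ - x) (by linarith [hx.2])
      (by linarith [hx.1]) hθ0 hθa (u' x) (y x))).2
    have b2 := (abs_le.1 (coupling_bound (lam := lam) (s := x - c₁) (by linarith [hx.1])
      (by linarith [hx.2]) hθ0 hθb (y' x) (u x))).2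
    rw [Real.sq_sqrt ha.le] at b1
    simp only [hE, Pi.add_apply, id]
    -- The equations turn the derivatives of the two partial energies into the coupling terms.
    have g1 : lam ^ 2 * (2 * ((u x).re * (u' x).re + (u x).im * (u' x).im))
        + a * (2 * ((u' x).re * (u'' x).re + (u' x).im * (u'' x).im))
        = 2 * (lam * c₀ * ((u' x).im * (y x).re - (u' x).re * (y x).im)) := by
      linear_combination (2 * (u' x).re) * er + 2 * (u' x).im * ei
    have g2 : lam ^ 2 * (2 * ((y x).re * (y' x).re + (y x).im * (y' x).im))
        + 1 * (2 * ((y' x).re * (y'' x).re + (y' x).im * (y'' x).im))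
        = -(2 * (lam * c₀ * ((y' x).im * (u x).re - (y' x).re * (u x).im))) := by
      linear_combination (2 * (y' x).re) * fr + 2 * (y' x).im * fi
    rw [g1, g2]
    linarith [b1, b2]
  have hanti : AntitoneOn Φ (Icc c₁ c₂) := by
    refine antitoneOn_of_deriv_nonpos (convex_Icc c₁ c₂) hΦc (fun x hx => ?_) (fun x hx => ?_)
    · rw [interior_Icc] at hx
      obtain ⟨D, hD, -⟩ := hΦd x hx
      exact hD.differentiableAt.differentiableWithinAt
    · rw [interior_Icc] at hx
      obtain ⟨D, hD, hDle⟩ := hΦd x hx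
      rw [hD.deriv]
      linarith [mul_nonneg (by linarith : 0 ≤ 1 - θ) (hE0 x)]
  have hΦ1 : Φ c₁ = 0 := by simp [hΦ, hu1, hu1']
  have hΦ2 : Φ c₂ = 0 := by simp [hΦ, hy2, hy2']
  have hΦ0 : ∀ x ∈ Icc c₁ c₂, Φ x = 0 := fun x hx => le_antisymm
    (hΦ1 ▸ hanti (left_mem_Icc.2 hc.le) hx hx.1) (hΦ2 ▸ hanti hx (right_mem_Icc.2 hc.le) hx.2)
  intro x hx
  obtain ⟨D, hD, hDle⟩ := hΦd x hx
  have hev : Φ =ᶠ[nhds x] fun _ => 0 := by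
    filter_upwards [Ioo_mem_nhds hx.1 hx.2] with t ht using hΦ0 t (Ioo_subset_Icc_self ht)
  have hDz : D = 0 := hD.unique ((hasDerivAt_const x (0 : ℝ)).congr_of_eventuallyEq hev)
  have hEx : E x ≤ 0 := by
    by_contra! h
    have := mul_pos (by linarith : 0 < 1 - θ) h
    linarith
  have hEx' : (lam ^ 2 * ‖u x‖ ^ 2 + a * ‖u' x‖ ^ 2)
    + (lam ^ 2 * ‖y x‖ ^ 2 + ‖y' x‖ ^ 2) ≤ 0 := hEx
  have p1 : 0 ≤ lam ^ 2 * ‖u x‖ ^ 2 := by positivity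
  have p2 : 0 ≤ a * ‖u' x‖ ^ 2 := by positivity
  have p3 : 0 ≤ lam ^ 2 * ‖y x‖ ^ 2 := by positivity
  have p4 : 0 ≤ ‖y' x‖ ^ 2 := by positivity
  have q1 : lam ^ 2 * ‖u x‖ ^ 2 = 0 := by linarith
  have q2 : a * ‖u' x‖ ^ 2 = 0 := by linarith
  have q3 : lam ^ 2 * ‖y x‖ ^ 2 = 0 := by linarith
  have q4 : ‖y' x‖ ^ 2 = 0 := by linarith
  exact ⟨⟨by simpa [hlam] using q1, by simpa [ha.ne'] using q2⟩,
    ⟨by simpa [hlam] using q3, by simpa using q4⟩⟩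

lemma eq_zero_on_Icc_of_Ioo {f : ℝ → ℂ} {p q : ℝ} (hpq : p < q)
    (hf : ContinuousOn f (Icc p q)) (h : ∀ x ∈ Ioo p q, f x = 0) : ∀ x ∈ Icc p q, f x = 0 := by
  have h' : EqOn f (fun _ => 0) (Icc p q) :=
    EqOn.of_subset_closure (s := Ioo p q) (fun x hx => h x hx) hf continuousOn_const
      Ioo_subset_Icc_self (closure_Ioo hpq.ne).ge
  exact fun x hx => h' hx


/-- Vanishing of eigenfunctions, Case 1 (damping regions on both
sides of the coupling region). -/
theorem eigenfunctions_vanish_case1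
    (a L b₁ b₂ c₁ c₂ d₁ d₂ lam c₀ : ℝ)
    (ha : 0 < a) (hL : 0 < L)
    (h0b : 0 < b₁) (hb : b₁ < b₂) (hbc : b₂ < c₁) (hc : c₁ < c₂)
    (hcd : c₂ < d₁) (hd : d₁ < d₂) (hdL : d₂ < L)
    (hlam : lam ≠ 0) (hc₀ : c₀ ≠ 0)
    (hsmall : |c₀| * (c₂ - c₁) < min (Real.sqrt a) 1)
    (u u' u'' y y' y'' : ℝ → ℂ)
    (hu : ∀ x ∈ Set.Icc 0 L, HasDerivAt u (u' x) x)
    (hu'c : ContinuousOn u' (Set.Icc 0 L))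
    (hy : ∀ x ∈ Set.Icc 0 L, HasDerivAt y (y' x) x)
    (hy'c : ContinuousOn y' (Set.Icc 0 L))
    (hu0 : u 0 = 0) (huL : u L = 0) (hy0 : y 0 = 0) (hyL : y L = 0)
    (hdampu : ∀ x ∈ Set.Ioo b₁ b₂, u' x = 0)
    (hdampy : ∀ x ∈ Set.Ioo d₁ d₂, y' x = 0)
    (hu'' : ∀ x ∈ Set.Ioo 0 c₁ ∪ Set.Ioo c₁ c₂ ∪ Set.Ioo c₂ L,
      HasDerivAt u' (u'' x) x)
    (hy'' : ∀ x ∈ Set.Ioo 0 c₁ ∪ Set.Ioo c₁ c₂ ∪ Set.Ioo c₂ L,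
      HasDerivAt y' (y'' x) x)
    (hequ : ∀ x ∈ Set.Ioo 0 c₁ ∪ Set.Ioo c₁ c₂ ∪ Set.Ioo c₂ L,
      (lam : ℂ) ^ 2 * u x + (a : ℂ) * u'' x
        - Complex.I * lam * (if c₁ < x ∧ x < c₂ then (c₀ : ℂ) else 0) * y x = 0)
    (heqy : ∀ x ∈ Set.Ioo 0 c₁ ∪ Set.Ioo c₁ c₂ ∪ Set.Ioo c₂ L,
      (lam : ℂ) ^ 2 * y x + y'' x
        + Complex.I * lam * (if c₁ < x ∧ x < c₂ then (c₀ : ℂ) else 0) * u x = 0) :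
    ∀ x ∈ Set.Icc 0 L, u x = 0 ∧ y x = 0 := by
  have sub1 : Icc 0 c₁ ⊆ Icc 0 L := Icc_subset_Icc le_rfl (by linarith)
  have sub2 : Icc c₁ c₂ ⊆ Icc 0 L := Icc_subset_Icc (by linarith) (by linarith)
  have sub3 : Icc c₂ L ⊆ Icc 0 L := Icc_subset_Icc (by linarith) le_rfl
  have m1 : ∀ x ∈ Ioo 0 c₁, x ∈ Ioo 0 c₁ ∪ Ioo c₁ c₂ ∪ Ioo c₂ L := fun x hx => Or.inl (Or.inl hx)
  have m2 : ∀ x ∈ Ioo c₁ c₂, x ∈ Ioo 0 c₁ ∪ Ioo c₁ c₂ ∪ Ioo c₂ L := fun x hx => Or.inl (Or.inr hx)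
  have m3 : ∀ x ∈ Ioo c₂ L, x ∈ Ioo 0 c₁ ∪ Ioo c₁ c₂ ∪ Ioo c₂ L := fun x hx => Or.inr hx
  have hequ1 : ∀ x ∈ Ioo 0 c₁, (lam : ℂ) ^ 2 * u x + (a : ℂ) * u'' x = 0 := fun x hx => by
    simpa [hx.2.le.not_gt] using hequ x (m1 x hx)
  have heqy1 : ∀ x ∈ Ioo 0 c₁, (lam : ℂ) ^ 2 * y x + ((1 : ℝ) : ℂ) * y'' x = 0 := fun x hx => by
    simpa [hx.2.le.not_gt] using heqy x (m1 x hx)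
  have hequ3 : ∀ x ∈ Ioo c₂ L, (lam : ℂ) ^ 2 * u x + (a : ℂ) * u'' x = 0 := fun x hx => by
    simpa [hx.1.le.not_gt] using hequ x (m3 x hx)
  have heqy3 : ∀ x ∈ Ioo c₂ L, (lam : ℂ) ^ 2 * y x + ((1 : ℝ) : ℂ) * y'' x = 0 := fun x hx => by
    simpa [hx.1.le.not_gt] using heqy x (m3 x hx)
  have u1 : ∀ x ∈ Icc 0 c₁, u x = 0 ∧ u' x = 0 := by
    have hsub : ∀ x ∈ Ioo b₁ b₂, x ∈ Ioo 0 c₁ := fun x hx =>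
      ⟨by linarith [hx.1], by linarith [hx.2]⟩
    have hmid : (b₁ + b₂) / 2 ∈ Ioo b₁ b₂ := ⟨by linarith, by linarith⟩
    exact free_wave_vanish ha hlam (fun x hx => hu x (sub1 hx)) (hu'c.mono sub1)
      (fun x hx => hu'' x (m1 x hx)) hequ1 (Ioo_subset_Icc_self (hsub _ hmid))
      (damped_vanish hlam hdampu (fun x hx => hu'' x (m1 x (hsub x hx)))
        (fun x hx => hequ1 x (hsub x hx)) _ hmid) (hdampu _ hmid)
  have y3 : ∀ x ∈ Icc c₂ L, y x = 0 ∧ y' x = 0 := by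
    have hsub : ∀ x ∈ Ioo d₁ d₂, x ∈ Ioo c₂ L := fun x hx =>
      ⟨by linarith [hx.1], by linarith [hx.2]⟩
    have hmid : (d₁ + d₂) / 2 ∈ Ioo d₁ d₂ := ⟨by linarith, by linarith⟩
    exact free_wave_vanish one_pos hlam (fun x hx => hy x (sub3 hx)) (hy'c.mono sub3)
      (fun x hx => hy'' x (m3 x hx)) heqy3 (Ioo_subset_Icc_self (hsub _ hmid))
      (damped_vanish hlam hdampy (fun x hx => hy'' x (m3 x (hsub x hx)))
        (fun x hx => heqy3 x (hsub x hx)) _ hmid) (hdampy _ hmid)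
  have l1 : c₁ ∈ Icc 0 c₁ := ⟨by linarith, le_rfl⟩
  have l3 : c₂ ∈ Icc c₂ L := ⟨le_rfl, by linarith⟩
  have hmidI := coupled_vanish ha hlam hc hsmall (fun x hx => hu x (sub2 hx)) (hu'c.mono sub2)
    (fun x hx => hy x (sub2 hx)) (hy'c.mono sub2) (fun x hx => hu'' x (m2 x hx))
    (fun x hx => hy'' x (m2 x hx))
    (fun x hx => by simpa only [if_pos (show c₁ < x ∧ x < c₂ from hx)] using hequ x (m2 x hx))
    (fun x hx => by simpa only [if_pos (show c₁ < x ∧ x < c₂ from hx)] using heqy x (m2 x hx))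
    (u1 _ l1).1 (u1 _ l1).2 (y3 _ l3).1 (y3 _ l3).2
  have huc : ContinuousOn u (Icc c₁ c₂) := fun x hx =>
    (hu x (sub2 hx)).continuousAt.continuousWithinAt
  have hyc : ContinuousOn y (Icc c₁ c₂) := fun x hx =>
    (hy x (sub2 hx)).continuousAt.continuousWithinAt
  have u2 := eq_zero_on_Icc_of_Ioo hc huc (fun x hx => (hmidI x hx).1.1)
  have u2' := eq_zero_on_Icc_of_Ioo hc (hu'c.mono sub2) (fun x hx => (hmidI x hx).1.2)
  have y2 := eq_zero_on_Icc_of_Ioo hc hyc (fun x hx => (hmidI x hx).2.1)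
  have y2' := eq_zero_on_Icc_of_Ioo hc (hy'c.mono sub2) (fun x hx => (hmidI x hx).2.2)
  have e1 : c₁ ∈ Icc c₁ c₂ := left_mem_Icc.2 hc.le
  have e2 : c₂ ∈ Icc c₁ c₂ := right_mem_Icc.2 hc.le
  have u3 := free_wave_vanish ha hlam (fun x hx => hu x (sub3 hx)) (hu'c.mono sub3)
    (fun x hx => hu'' x (m3 x hx)) hequ3 l3 (u2 _ e2) (u2' _ e2)
  have y1 := free_wave_vanish one_pos hlam (fun x hx => hy x (sub1 hx)) (hy'c.mono sub1)
    (fun x hx => hy'' x (m1 x hx)) heqy1 l1 (y2 _ e1) (y2' _ e1)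
  intro x hx
  rcases le_total x c₁ with h | h
  · exact ⟨(u1 x ⟨hx.1, h⟩).1, (y1 x ⟨hx.1, h⟩).1⟩
  rcases le_total x c₂ with h' | h'
  · exact ⟨u2 x ⟨h, h'⟩, y2 x ⟨h, h'⟩⟩
  · exact ⟨(u3 x ⟨h', hx.2⟩).1, (y3 x ⟨h', hx.2⟩).1⟩
end

section
/- Let a > 0, L > 0, real numbers 0 < b₁ < b₂ < d₁ < d₂ < c₁ < c₂ < L, a real number λ ≠ 0, and a real number c₀ ≠ 0. Let u, y : [0,L] → ℂ be continuously differentiable with u(0) = u(L) = y(0) = y(L) = 0, with u′(x) = 0 for all x ∈ (b₁,b₂) and y′(x) = 0 for all x ∈ (d₁,d₂). Assume u and y are twice differentiable on each of the open intervals (0,c₁), (c₁,c₂), (c₂,L) and satisfy there λ²u(x) + a·u″(x) − iλ·c(x)·y(x) = 0 and λ²y(x) + y″(x) + iλ·c(x)·u(x) = 0, where c(x) = c₀ for x ∈ (c₁,c₂) and c(x) = 0 otherwise. Then u(x) = 0 and y(x) = 0 for all x ∈ [0,L]. -/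
/-!
The proof is a unique continuation argument. Inside a damping region one component has vanishing
first derivative, hence vanishing second derivative; the coupling is absent there, so the equation
`λ² u + a u'' = 0` with `λ ≠ 0` forces that component to vanish too. Both damping regions lie
to the left of the coupling region, where the two equations are decoupled, so uniqueness for the
linear Cauchy problem gives `u = u' = y = y' = 0` on `[0, c₁]`. These zero Cauchy data at `c₁` are
then carried across `[c₁, c₂]` and `[c₂, L]` by uniqueness for the coupled system.

Uniqueness (`cauchy_unique`) is a Grönwall estimate (`eq_zero_of_abs_deriv_le`) for the energy
`‖u‖² + ‖u'‖² + ‖y‖² + ‖y'‖²`. It needs the equations only in the open interval and continuity of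
the Cauchy data up to the endpoints, so the jump of the coefficient at `c₁` and `c₂` is harmless.
-/

/-- Two-sided Grönwall inequality with zero data: the base point may be an endpoint, while the
differential inequality is assumed only in the interior. -/
lemma eq_zero_of_abs_deriv_le {p q x₀ K : ℝ} {E E' : ℝ → ℝ}
    (hx₀ : x₀ ∈ Set.Icc p q) (hcont : ContinuousOn E (Set.Icc p q))
    (hder : ∀ x ∈ Set.Ioo p q, HasDerivAt E (E' x) x)
    (hbound : ∀ x ∈ Set.Ioo p q, |E' x| ≤ K * E x)
    (hnonneg : ∀ x, 0 ≤ E x) (hzero : E x₀ = 0) :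
    ∀ x ∈ Set.Icc p q, E x = 0 := by
  have hexp (k x : ℝ) : HasDerivAt (fun t => Real.exp (k * t)) (Real.exp (k * x) * k) x := by
    simpa using ((hasDerivAt_id x).const_mul k).exp
  have hd (k x : ℝ) (hx : x ∈ Set.Ioo p q) : HasDerivAt (fun t => Real.exp (k * t) * E t)
      (Real.exp (k * x) * (k * E x + E' x)) x :=
    ((hexp k x).mul (hder x hx)).congr_deriv (by ring)
  have hc (k : ℝ) : ContinuousOn (fun t => Real.exp (k * t) * E t) (Set.Icc p q) :=
    ContinuousOn.mul (by fun_prop) hcont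
  -- The weights `exp (-K t)` and `exp (K t)` make the energy antitone and monotone respectively.
  have hanti : AntitoneOn (fun t => Real.exp (-K * t) * E t) (Set.Icc p q) := by
    refine antitoneOn_of_deriv_nonpos (convex_Icc p q) (hc _) ?_ ?_ <;> rw [interior_Icc]
    · exact fun x hx => (hd _ x hx).differentiableAt.differentiableWithinAt
    · intro x hx
      rw [(hd _ x hx).deriv]
      have := (abs_le.1 (hbound x hx)).2
      exact mul_nonpos_of_nonneg_of_nonpos (Real.exp_pos _).le (by linarith)
  have hmono : MonotoneOn (fun t => Real.exp (K * t) * E t) (Set.Icc p q) := by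
    refine monotoneOn_of_deriv_nonneg (convex_Icc p q) (hc _) ?_ ?_ <;> rw [interior_Icc]
    · exact fun x hx => (hd _ x hx).differentiableAt.differentiableWithinAt
    · intro x hx
      rw [(hd _ x hx).deriv]
      have := (abs_le.1 (hbound x hx)).1
      exact mul_nonneg (Real.exp_pos _).le (by linarith)
  intro x hx
  refine le_antisymm ?_ (hnonneg x)
  rcases le_total x₀ x with h | h
  · have := hanti hx₀ hx h
    simp only [hzero, mul_zero] at this
    exact nonpos_of_mul_nonpos_right this (Real.exp_pos _)
  · have := hmono hx hx₀ h
    simp only [hzero, mul_zero] at this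
    exact nonpos_of_mul_nonpos_right this (Real.exp_pos _)

/-- Uniqueness for the Cauchy problem of a second-order linear system in two unknowns. Only the
growth bound on the second derivatives enters, not the explicit form of the coefficients. -/
lemma cauchy_unique {p q x₀ M : ℝ} {u u' u'' y y' y'' : ℝ → ℂ} (hM : 0 ≤ M)
    (hx₀ : x₀ ∈ Set.Icc p q)
    (hu : ∀ x ∈ Set.Icc p q, HasDerivAt u (u' x) x) (hu'c : ContinuousOn u' (Set.Icc p q))
    (hy : ∀ x ∈ Set.Icc p q, HasDerivAt y (y' x) x) (hy'c : ContinuousOn y' (Set.Icc p q))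
    (hu'' : ∀ x ∈ Set.Ioo p q, HasDerivAt u' (u'' x) x)
    (hy'' : ∀ x ∈ Set.Ioo p q, HasDerivAt y' (y'' x) x)
    (hub : ∀ x ∈ Set.Ioo p q, ‖u'' x‖ ≤ M * (‖u x‖ + ‖y x‖))
    (hyb : ∀ x ∈ Set.Ioo p q, ‖y'' x‖ ≤ M * (‖u x‖ + ‖y x‖))
    (hu0 : u x₀ = 0) (hu'0 : u' x₀ = 0) (hy0 : y x₀ = 0) (hy'0 : y' x₀ = 0) :
    ∀ x ∈ Set.Icc p q, u x = 0 ∧ u' x = 0 ∧ y x = 0 ∧ y' x = 0 := by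
  have huc : ContinuousOn u (Set.Icc p q) := fun x hx => (hu x hx).continuousAt.continuousWithinAt
  have hyc : ContinuousOn y (Set.Icc p q) := fun x hx => (hy x hx).continuousAt.continuousWithinAt
  have key := eq_zero_of_abs_deriv_le (K := 1 + 2 * M) hx₀
    (E := fun x => ‖u x‖ ^ 2 + ‖u' x‖ ^ 2 + ‖y x‖ ^ 2 + ‖y' x‖ ^ 2)
    (E' := fun x => 2 * inner ℝ (u x) (u' x) + 2 * inner ℝ (u' x) (u'' x)
      + 2 * inner ℝ (y x) (y' x) + 2 * inner ℝ (y' x) (y'' x))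
    (by fun_prop)
    (fun x hx => by
      have hx' := Set.Ioo_subset_Icc_self hx
      exact (((hu x hx').norm_sq.add (hu'' x hx).norm_sq).add (hy x hx').norm_sq).add
        (hy'' x hx).norm_sq)
    (fun x hx => by
      have i1 := abs_le.1 (abs_real_inner_le_norm (u x) (u' x))
      have i2 := abs_le.1 ((abs_real_inner_le_norm (u' x) (u'' x)).trans
        (mul_le_mul_of_nonneg_left (hub x hx) (norm_nonneg _)))
      have i3 := abs_le.1 (abs_real_inner_le_norm (y x) (y' x))
      have i4 := abs_le.1 ((abs_real_inner_le_norm (y' x) (y'' x)).trans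
        (mul_le_mul_of_nonneg_left (hyb x hx) (norm_nonneg _)))
      have s1 := sq_nonneg (‖u x‖ - ‖u' x‖)
      have s2 := sq_nonneg (‖y x‖ - ‖y' x‖)
      have hcross : 2 * ((‖u' x‖ + ‖y' x‖) * (‖u x‖ + ‖y x‖)) ≤
          2 * (‖u x‖ ^ 2 + ‖u' x‖ ^ 2 + ‖y x‖ ^ 2 + ‖y' x‖ ^ 2) := by
        nlinarith [sq_nonneg (‖u' x‖ + ‖y' x‖ - (‖u x‖ + ‖y x‖)), sq_nonneg (‖u' x‖ - ‖y' x‖),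
          sq_nonneg (‖u x‖ - ‖y x‖)]
      have s3 := mul_le_mul_of_nonneg_left hcross hM
      refine abs_le.2 ⟨?_, ?_⟩
      · linarith [i1.1, i2.1, i3.1, i4.1]
      · linarith [i1.2, i2.2, i3.2, i4.2])
    (fun x => by positivity) (by simp [hu0, hu'0, hy0, hy'0])
  intro x hx
  have h : ‖u x‖ ^ 2 + ‖u' x‖ ^ 2 + ‖y x‖ ^ 2 + ‖y' x‖ ^ 2 = 0 := key x hx
  have n1 := sq_nonneg ‖u x‖
  have n2 := sq_nonneg ‖u' x‖
  have n3 := sq_nonneg ‖y x‖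
  have n4 := sq_nonneg ‖y' x‖
  refine ⟨?_, ?_, ?_, ?_⟩ <;> rw [← norm_eq_zero, ← sq_eq_zero_iff] <;> linarith

/-- A solution of `k w + m w'' = 0`, `k ≠ 0`, that is constant on a subinterval vanishes. -/
lemma decoupled_vanish {p q s t m k : ℝ} {w w' w'' : ℝ → ℂ} (hm : 0 < m) (hk : k ≠ 0)
    (hps : p < s) (hst : s < t) (htq : t < q)
    (hw : ∀ x ∈ Set.Icc p q, HasDerivAt w (w' x) x) (hw'c : ContinuousOn w' (Set.Icc p q))
    (hw'' : ∀ x ∈ Set.Ioo p q, HasDerivAt w' (w'' x) x)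
    (heq : ∀ x ∈ Set.Ioo p q, (k : ℂ) * w x + (m : ℂ) * w'' x = 0)
    (hdamp : ∀ x ∈ Set.Ioo s t, w' x = 0) :
    ∀ x ∈ Set.Icc p q, w x = 0 ∧ w' x = 0 := by
  obtain ⟨x₀, hx₀⟩ : (Set.Ioo s t).Nonempty := Set.nonempty_Ioo.2 hst
  have hx₀' : x₀ ∈ Set.Ioo p q := ⟨hps.trans hx₀.1, hx₀.2.trans htq⟩
  have h2 : w'' x₀ = 0 := by
    refine (hw'' x₀ hx₀').unique ((hasDerivAt_const x₀ (0 : ℂ)).congr_of_eventuallyEq ?_)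
    filter_upwards [Ioo_mem_nhds hx₀.1 hx₀.2] with x hx using hdamp x hx
  have h0 : w x₀ = 0 := by
    have := heq x₀ hx₀'
    simpa [h2, hk] using this
  have hmC : (m : ℂ) ≠ 0 := by exact_mod_cast hm.ne'
  have key := cauchy_unique (M := |k| / m) (y := fun _ => 0) (y' := fun _ => 0)
    (y'' := fun _ => 0) (by positivity) (Set.Ioo_subset_Icc_self hx₀') hw hw'c
    (fun x _ => hasDerivAt_const x _) continuousOn_const hw'' (fun x _ => hasDerivAt_const x _)
    (fun x hx => by
      have : w'' x = -(k / m : ℂ) * w x := by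
        field_simp
        linear_combination heq x hx
      rw [this]
      simp [abs_of_pos hm])
    (fun x _ => by rw [norm_zero]; positivity) h0 (hdamp x₀ hx₀) rfl rfl
  exact fun x hx => ⟨(key x hx).1, (key x hx).2.1⟩


/-- Vanishing of eigenfunctions, Case 2 (both damping regions to
the left of the coupling region; no smallness condition required). -/
theorem eigenfunctions_vanish_case2
    (a L b₁ b₂ d₁ d₂ c₁ c₂ lam c₀ : ℝ)
    (ha : 0 < a) (hL : 0 < L)
    (h0b : 0 < b₁) (hb : b₁ < b₂) (hbd : b₂ < d₁) (hd : d₁ < d₂)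
    (hdc : d₂ < c₁) (hc : c₁ < c₂) (hcL : c₂ < L)
    (hlam : lam ≠ 0) (hc₀ : c₀ ≠ 0)
    (u u' u'' y y' y'' : ℝ → ℂ)
    (hu : ∀ x ∈ Set.Icc 0 L, HasDerivAt u (u' x) x)
    (hu'c : ContinuousOn u' (Set.Icc 0 L))
    (hy : ∀ x ∈ Set.Icc 0 L, HasDerivAt y (y' x) x)
    (hy'c : ContinuousOn y' (Set.Icc 0 L))
    (hu0 : u 0 = 0) (huL : u L = 0) (hy0 : y 0 = 0) (hyL : y L = 0)
    (hdampu : ∀ x ∈ Set.Ioo b₁ b₂, u' x = 0)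
    (hdampy : ∀ x ∈ Set.Ioo d₁ d₂, y' x = 0)
    (hu'' : ∀ x ∈ Set.Ioo 0 c₁ ∪ Set.Ioo c₁ c₂ ∪ Set.Ioo c₂ L,
      HasDerivAt u' (u'' x) x)
    (hy'' : ∀ x ∈ Set.Ioo 0 c₁ ∪ Set.Ioo c₁ c₂ ∪ Set.Ioo c₂ L,
      HasDerivAt y' (y'' x) x)
    (hequ : ∀ x ∈ Set.Ioo 0 c₁ ∪ Set.Ioo c₁ c₂ ∪ Set.Ioo c₂ L,
      (lam : ℂ) ^ 2 * u x + (a : ℂ) * u'' x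
        - Complex.I * lam * (if c₁ < x ∧ x < c₂ then (c₀ : ℂ) else 0) * y x = 0)
    (heqy : ∀ x ∈ Set.Ioo 0 c₁ ∪ Set.Ioo c₁ c₂ ∪ Set.Ioo c₂ L,
      (lam : ℂ) ^ 2 * y x + y'' x
        + Complex.I * lam * (if c₁ < x ∧ x < c₂ then (c₀ : ℂ) else 0) * u x = 0) :
    ∀ x ∈ Set.Icc 0 L, u x = 0 ∧ y x = 0 := by
  have hulow := decoupled_vanish (p := 0) (q := c₁) ha (pow_ne_zero 2 hlam) h0b hb
    (by linarith) (fun x hx => hu x ⟨hx.1, by linarith [hx.2]⟩)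
    (hu'c.mono (Set.Icc_subset_Icc_right (by linarith)))
    (fun x hx => hu'' x (Or.inl (Or.inl hx)))
    (fun x hx => by
      have := hequ x (Or.inl (Or.inl hx))
      rw [if_neg (fun h => absurd h.1 (not_lt.2 hx.2.le))] at this
      push_cast
      linear_combination this) hdampu
  have hylow := decoupled_vanish (p := 0) (q := c₁) one_pos (pow_ne_zero 2 hlam)
    (by linarith) hd hdc (fun x hx => hy x ⟨hx.1, by linarith [hx.2]⟩)
    (hy'c.mono (Set.Icc_subset_Icc_right (by linarith)))
    (fun x hx => hy'' x (Or.inl (Or.inl hx)))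
    (fun x hx => by
      have := heqy x (Or.inl (Or.inl hx))
      rw [if_neg (fun h => absurd h.1 (not_lt.2 hx.2.le))] at this
      push_cast
      linear_combination this) hdampy
  have haC : (a : ℂ) ≠ 0 := by exact_mod_cast ha.ne'
  have hite (x : ℝ) : ‖(if c₁ < x ∧ x < c₂ then (c₀ : ℂ) else 0)‖ ≤ |c₀| := by
    split_ifs <;> simp
  -- A common bound for all coefficients of `u''` and `y''`, where `c` is estimated by `|c₀|`.
  set N : ℝ := lam ^ 2 + |lam| * |c₀| with hN
  have hN0 : 0 ≤ N := by positivity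
  have hforce (x : ℝ) (v w : ℂ) : ‖(lam : ℂ) ^ 2 * v‖
      + ‖Complex.I * lam * (if c₁ < x ∧ x < c₂ then (c₀ : ℂ) else 0) * w‖
        ≤ N * (‖v‖ + ‖w‖) := by
    have h1 : |lam| * ‖(if c₁ < x ∧ x < c₂ then (c₀ : ℂ) else 0)‖ * ‖w‖
        ≤ |lam| * |c₀| * ‖w‖ := by
      gcongr
      exact hite x
    have h2 : 0 ≤ |lam| * |c₀| * ‖v‖ := by positivity
    have h3 : 0 ≤ lam ^ 2 * ‖w‖ := by positivity
    simp only [norm_mul, norm_pow, Complex.norm_I, Complex.norm_real, Real.norm_eq_abs, one_mul,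
      sq_abs]
    rw [hN]
    linarith
  set M : ℝ := N / a + N with hMdef
  have hM0 : 0 ≤ M := by positivity
  have hub : ∀ x ∈ Set.Ioo 0 c₁ ∪ Set.Ioo c₁ c₂ ∪ Set.Ioo c₂ L,
      ‖u'' x‖ ≤ M * (‖u x‖ + ‖y x‖) := fun x hx => by
    have h : (a : ℂ) * u'' x = -((lam : ℂ) ^ 2 * u x)
        + Complex.I * lam * (if c₁ < x ∧ x < c₂ then (c₀ : ℂ) else 0) * y x := by
      linear_combination hequ x hx
    have h1 : a * ‖u'' x‖ ≤ N * (‖u x‖ + ‖y x‖) := by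
      calc a * ‖u'' x‖ = ‖(a : ℂ) * u'' x‖ := by simp [abs_of_pos ha]
        _ ≤ _ := by
          rw [h]
          refine (norm_add_le _ _).trans ?_
          rw [norm_neg]
          exact hforce x _ _
    have h2 : ‖u'' x‖ ≤ N * (‖u x‖ + ‖y x‖) / a := by
      rw [le_div_iff₀ ha]
      linarith
    have h3 : 0 ≤ N * (‖u x‖ + ‖y x‖) := by positivity
    calc ‖u'' x‖ ≤ N * (‖u x‖ + ‖y x‖) / a + N * (‖u x‖ + ‖y x‖) := by linarith
      _ = M * (‖u x‖ + ‖y x‖) := by rw [hMdef]; ring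
  have hyb : ∀ x ∈ Set.Ioo 0 c₁ ∪ Set.Ioo c₁ c₂ ∪ Set.Ioo c₂ L,
      ‖y'' x‖ ≤ M * (‖u x‖ + ‖y x‖) := fun x hx => by
    have h : y'' x = -((lam : ℂ) ^ 2 * y x)
        - Complex.I * lam * (if c₁ < x ∧ x < c₂ then (c₀ : ℂ) else 0) * u x := by
      linear_combination heqy x hx
    have h1 : ‖y'' x‖ ≤ N * (‖y x‖ + ‖u x‖) := by
      rw [h]
      refine (norm_sub_le _ _).trans ?_
      rw [norm_neg]
      exact hforce x _ _
    have h3 : 0 ≤ N / a * (‖u x‖ + ‖y x‖) := by positivity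
    calc ‖y'' x‖ ≤ N / a * (‖u x‖ + ‖y x‖) + N * (‖u x‖ + ‖y x‖) := by linarith
      _ = M * (‖u x‖ + ‖y x‖) := by rw [hMdef]; ring
  have step {p q : ℝ} (hp : 0 ≤ p) (hpq : p ≤ q) (hq : q ≤ L)
      (hsub : Set.Ioo p q ⊆ Set.Ioo 0 c₁ ∪ Set.Ioo c₁ c₂ ∪ Set.Ioo c₂ L)
      (h : u p = 0 ∧ u' p = 0 ∧ y p = 0 ∧ y' p = 0) :
      ∀ x ∈ Set.Icc p q, u x = 0 ∧ u' x = 0 ∧ y x = 0 ∧ y' x = 0 := by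
    have hI : Set.Icc p q ⊆ Set.Icc 0 L := Set.Icc_subset_Icc hp hq
    exact cauchy_unique hM0 (Set.left_mem_Icc.2 hpq) (fun x hx => hu x (hI hx)) (hu'c.mono hI)
      (fun x hx => hy x (hI hx)) (hy'c.mono hI) (fun x hx => hu'' x (hsub hx))
      (fun x hx => hy'' x (hsub hx)) (fun x hx => hub x (hsub hx)) (fun x hx => hyb x (hsub hx))
      h.1 h.2.1 h.2.2.1 h.2.2.2
  have hc₁ : c₁ ∈ Set.Icc 0 c₁ := ⟨by linarith, le_rfl⟩
  have hmid := step (by linarith) hc.le hcL.le (fun x hx => Or.inl (Or.inr hx))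
    ⟨(hulow c₁ hc₁).1, (hulow c₁ hc₁).2, (hylow c₁ hc₁).1, (hylow c₁ hc₁).2⟩
  have hhigh := step (by linarith) hcL.le le_rfl (fun x hx => Or.inr hx)
    (hmid c₂ (Set.right_mem_Icc.2 hc.le))
  intro x hx
  rcases le_total x c₁ with h1 | h1
  · exact ⟨(hulow x ⟨hx.1, h1⟩).1, (hylow x ⟨hx.1, h1⟩).1⟩
  rcases le_total x c₂ with h2 | h2
  · exact ⟨(hmid x ⟨h1, h2⟩).1, (hmid x ⟨h1, h2⟩).2.2.1⟩
  · exact ⟨(hhigh x ⟨h2, hx.2⟩).1, (hhigh x ⟨h2, hx.2⟩).2.2.1⟩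
end

section
/- Let L > 0, real numbers 0 < b₁ < b₂ < c₁ < c₂ < L, a real number λ ≠ 0, and a real number c₀ ≠ 0 with |c₀|·(c₂ − c₁) < 1. Let u, y : [0,L] → ℂ be continuously differentiable with u(0) = u(L) = y(0) = y(L) = 0 and u′(x) = 0 for all x ∈ (b₁,b₂). Assume u and y are twice differentiable on each of the open intervals (0,c₁), (c₁,c₂), (c₂,L) and satisfy there λ²u(x) + u″(x) − iλ·c(x)·y(x) = 0 and λ²y(x) + y″(x) + iλ·c(x)·u(x) = 0, where c(x) = c₀ for x ∈ (c₁,c₂) and c(x) = 0 otherwise. Then u(x) = 0 and y(x) = 0 for all x ∈ [0,L]. -/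
/-!
Writing `u = a + i b` and `y = p + i q`, the coupled system splits into two independent real systems
of the same shape, one for `(a, q)` with coupling `c` and one for `(b, p)` with coupling `-c`:
`f'' = -λ² f - λ c g`, `g'' = -λ² g - λ c f`. It suffices to treat a real pair `(f, g)`.

On the damping region `f' = 0`, hence `f'' = 0` and so `f = 0` there; conservation of the energy
`f'² + λ² f²` off the coupling region propagates this to `[0, c₁]`. The Wronskian `W = f' g - f g'`
is constant off the coupling region, so `W(c₂) = W(L) = 0`, and `W(c₁) = 0` as `f` and `f'` vanish at `c₁`, while
`W' = λ c (f² - g²)` inside it. With `k = |c| (c₂ - c₁) < 1`, the function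
`G = (c₂ - x) (f'² + λ² f²) + (k λ / c) W` vanishes at `c₁` and `c₂`, and by Young's inequality
`G' ≤ -(1 - k) (f'² + λ² f²)`. Hence `G` is constant and `f = 0` on the coupling region
(`coupled_vanish`). The first equation then forces `g = 0` there, and energy conservation for
`f` and `g` propagates the vanishing to the rest of `[0, L]` (`real_pair_vanish`).
-/

lemma eq_of_deriv_zero_Icc {a b : ℝ} {f : ℝ → ℝ} (hf : ContinuousOn f (Set.Icc a b))
    (hd : ∀ x ∈ Set.Ioo a b, HasDerivAt f 0 x) :
    ∀ x ∈ Set.Icc a b, ∀ z ∈ Set.Icc a b, f x = f z := by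
  have key : ∀ x ∈ Set.Icc a b, ∀ z ∈ Set.Icc a b, x < z → f x = f z := by
    intro x hx z hz hxz
    obtain ⟨t, _, hs⟩ := exists_hasDerivAt_eq_slope f (fun _ => 0) hxz
      (hf.mono (Set.Icc_subset_Icc hx.1 hz.2))
      (fun t ht => hd t ⟨hx.1.trans_lt ht.1, ht.2.trans_le hz.2⟩)
    have h := (eq_div_iff (sub_pos.2 hxz).ne').1 hs
    linarith
  intro x hx z hz
  rcases lt_trichotomy x z with h | h | h
  · exact key x hx z hz h
  · rw [h]
  · exact (key z hz x hx h).symm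

/-- Conservation of the energy `f'² + λ² f²`: zero Cauchy data at one point of a closed interval
force a solution of `f'' = -λ² f` to vanish on that interval. -/
lemma free_vanish {a b lam x₀ : ℝ} (hlam : lam ≠ 0) {f f' : ℝ → ℝ}
    (hfc : ContinuousOn f (Set.Icc a b)) (hf'c : ContinuousOn f' (Set.Icc a b))
    (hf : ∀ x ∈ Set.Ioo a b, HasDerivAt f (f' x) x)
    (hf' : ∀ x ∈ Set.Ioo a b, HasDerivAt f' (-lam ^ 2 * f x) x)
    (hx₀ : x₀ ∈ Set.Icc a b) (h0 : f x₀ = 0) (h0' : f' x₀ = 0) :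
    ∀ x ∈ Set.Icc a b, f x = 0 ∧ f' x = 0 := by
  intro x hx
  have h := eq_of_deriv_zero_Icc (f := fun x => f' x ^ 2 + lam ^ 2 * f x ^ 2)
    ((hf'c.pow 2).add (continuousOn_const.mul (hfc.pow 2)))
    (fun t ht => by
      refine (((hf' t ht).pow 2).add (((hf t ht).pow 2).const_mul (lam ^ 2))).congr_deriv ?_
      push_cast
      ring) x hx x₀ hx₀
  simp only [h0, h0'] at h
  have hl : 0 < lam ^ 2 := by positivity
  have h1 : f' x ^ 2 = 0 := by nlinarith [sq_nonneg (f' x), mul_nonneg hl.le (sq_nonneg (f x))]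
  have h2 : lam ^ 2 * f x ^ 2 = 0 := by nlinarith
  refine ⟨?_, by simpa using h1⟩
  simpa [hlam] using h2

/-- On the coupling region, zero Cauchy data of `f` at the left end and a Wronskian vanishing at
the right end force `f = 0` when the coupling is small. -/
lemma coupled_vanish_s2 {c₁ c₂ lam c : ℝ} (hc : c₁ < c₂) (hlam : lam ≠ 0) (hc0 : c ≠ 0)
    (hsmall : |c| * (c₂ - c₁) < 1) {f f' g g' : ℝ → ℝ}
    (hfc : ContinuousOn f (Set.Icc c₁ c₂)) (hf'c : ContinuousOn f' (Set.Icc c₁ c₂))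
    (hgc : ContinuousOn g (Set.Icc c₁ c₂)) (hg'c : ContinuousOn g' (Set.Icc c₁ c₂))
    (hf : ∀ x ∈ Set.Ioo c₁ c₂, HasDerivAt f (f' x) x)
    (hg : ∀ x ∈ Set.Ioo c₁ c₂, HasDerivAt g (g' x) x)
    (hf' : ∀ x ∈ Set.Ioo c₁ c₂, HasDerivAt f' (-lam ^ 2 * f x - lam * c * g x) x)
    (hg' : ∀ x ∈ Set.Ioo c₁ c₂, HasDerivAt g' (-lam ^ 2 * g x - lam * c * f x) x)
    (h1 : f c₁ = 0) (h1' : f' c₁ = 0) (hW : f' c₂ * g c₂ - f c₂ * g' c₂ = 0) :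
    ∀ x ∈ Set.Ioo c₁ c₂, f x = 0 := by
  set k := |c| * (c₂ - c₁) with hk
  set G : ℝ → ℝ := fun x => (c₂ - x) * (f' x ^ 2 + lam ^ 2 * f x ^ 2)
    + k * lam / c * (f' x * g x - f x * g' x) with hG
  have hGc : ContinuousOn G (Set.Icc c₁ c₂) :=
    ((continuousOn_const.sub continuousOn_id).mul
      ((hf'c.pow 2).add (continuousOn_const.mul (hfc.pow 2)))).add
      (continuousOn_const.mul ((hf'c.mul hgc).sub (hfc.mul hg'c)))
  have hGd : ∀ x ∈ Set.Ioo c₁ c₂, HasDerivAt G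
      (-(f' x ^ 2 + lam ^ 2 * f x ^ 2) - 2 * (c₂ - x) * lam * c * g x * f' x
        + k * lam ^ 2 * (f x ^ 2 - g x ^ 2)) x := by
    intro x hx
    have hE := ((hf' x hx).pow 2).add (((hf x hx).pow 2).const_mul (lam ^ 2))
    have hWd := (((hf' x hx).mul (hg x hx)).sub ((hf x hx).mul (hg' x hx))).const_mul (k * lam / c)
    refine ((((hasDerivAt_id x).const_sub c₂).mul hE).add hWd).congr_deriv ?_
    simp only [id, Pi.add_apply, Pi.pow_apply]
    field_simp
    push_cast
    ring
  have hle : ∀ x ∈ Set.Ioo c₁ c₂,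
      -(f' x ^ 2 + lam ^ 2 * f x ^ 2) - 2 * (c₂ - x) * lam * c * g x * f' x
        + k * lam ^ 2 * (f x ^ 2 - g x ^ 2) ≤ -(1 - k) * (f' x ^ 2 + lam ^ 2 * f x ^ 2) := by
    intro x hx
    have hd : |(c₂ - x) * c| ≤ k := by
      rw [abs_mul, abs_of_pos (sub_pos.2 hx.2), hk, mul_comm]
      exact mul_le_mul_of_nonneg_left (by linarith [hx.1]) (abs_nonneg c)
    obtain ⟨hd1, hd2⟩ := abs_le.1 hd
    -- Young's inequality for the cross term, as `|s| ≤ k` gives `-2 s X Y ≤ k (X² + Y²)`.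
    have hY : -(2 * ((c₂ - x) * c) * (lam * g x) * f' x)
        ≤ k * ((lam * g x) ^ 2 + f' x ^ 2) := by
      nlinarith [mul_nonneg (by linarith : 0 ≤ k - (c₂ - x) * c) (sq_nonneg (lam * g x - f' x)),
        mul_nonneg (by linarith : 0 ≤ k + (c₂ - x) * c) (sq_nonneg (lam * g x + f' x))]
    nlinarith
  have hE0 : ∀ x, 0 ≤ f' x ^ 2 + lam ^ 2 * f x ^ 2 := fun x => by positivity
  have hanti : AntitoneOn G (Set.Icc c₁ c₂) := by
    refine antitoneOn_of_deriv_nonpos (convex_Icc _ _) hGc ?_ ?_ <;> rw [interior_Icc]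
    · exact fun x hx => (hGd x hx).differentiableAt.differentiableWithinAt
    · intro x hx
      rw [(hGd x hx).deriv]
      nlinarith [hle x hx, hE0 x]
  have hG1 : G c₁ = 0 := by simp [hG, h1, h1']
  have hG2 : G c₂ = 0 := by simp [hG, hW]
  have hG0 : ∀ x ∈ Set.Icc c₁ c₂, G x = 0 := fun x hx => le_antisymm
    (hG1 ▸ hanti (Set.left_mem_Icc.2 hc.le) hx hx.1)
    (hG2 ▸ hanti hx (Set.right_mem_Icc.2 hc.le) hx.2)
  intro x hx
  have hz : HasDerivAt G 0 x := (hasDerivAt_const x (0 : ℝ)).congr_of_eventuallyEq <|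
    Filter.eventuallyEq_of_mem (Ioo_mem_nhds hx.1 hx.2)
      fun t ht => hG0 t (Set.Ioo_subset_Icc_self ht)
  have h := hle x hx
  rw [(hGd x hx).unique hz] at h
  have hE : f' x ^ 2 + lam ^ 2 * f x ^ 2 = 0 := by nlinarith [hE0 x]
  have hl : 0 < lam ^ 2 := by positivity
  have h2 : lam ^ 2 * f x ^ 2 = 0 := by
    nlinarith [sq_nonneg (f' x), mul_nonneg hl.le (sq_nonneg (f x))]
  simpa [hlam] using h2

/-- The real version of the theorem; the complex system is two copies of it. -/
lemma real_pair_vanish {L b₁ b₂ c₁ c₂ lam c : ℝ}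
    (h0b : 0 < b₁) (hb : b₁ < b₂) (hbc : b₂ < c₁) (hc : c₁ < c₂) (hcL : c₂ < L)
    (hlam : lam ≠ 0) (hc0 : c ≠ 0) (hsmall : |c| * (c₂ - c₁) < 1)
    {f f' g g' : ℝ → ℝ}
    (hf : ∀ x ∈ Set.Icc 0 L, HasDerivAt f (f' x) x) (hf'c : ContinuousOn f' (Set.Icc 0 L))
    (hg : ∀ x ∈ Set.Icc 0 L, HasDerivAt g (g' x) x) (hg'c : ContinuousOn g' (Set.Icc 0 L))
    (hfL : f L = 0) (hgL : g L = 0)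
    (hdamp : ∀ x ∈ Set.Ioo b₁ b₂, f' x = 0)
    (hf' : ∀ x ∈ Set.Ioo 0 c₁ ∪ Set.Ioo c₁ c₂ ∪ Set.Ioo c₂ L,
      HasDerivAt f' (-lam ^ 2 * f x - lam * (if c₁ < x ∧ x < c₂ then c else 0) * g x) x)
    (hg' : ∀ x ∈ Set.Ioo 0 c₁ ∪ Set.Ioo c₁ c₂ ∪ Set.Ioo c₂ L,
      HasDerivAt g' (-lam ^ 2 * g x - lam * (if c₁ < x ∧ x < c₂ then c else 0) * f x) x) :
    ∀ x ∈ Set.Icc 0 L, f x = 0 ∧ g x = 0 := by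
  have hfc : ContinuousOn f (Set.Icc 0 L) := fun x hx => (hf x hx).continuousAt.continuousWithinAt
  have hgc : ContinuousOn g (Set.Icc 0 L) := fun x hx => (hg x hx).continuousAt.continuousWithinAt
  have sl : Set.Icc 0 c₁ ⊆ Set.Icc 0 L := Set.Icc_subset_Icc le_rfl (by linarith)
  have sm : Set.Icc c₁ c₂ ⊆ Set.Icc 0 L := Set.Icc_subset_Icc (by linarith) (by linarith)
  have sr : Set.Icc c₂ L ⊆ Set.Icc 0 L := Set.Icc_subset_Icc (by linarith) le_rfl
  have hf'l : ∀ x ∈ Set.Ioo 0 c₁, HasDerivAt f' (-lam ^ 2 * f x) x := fun x hx => by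
    simpa [hx.2.not_gt] using hf' x (Or.inl (Or.inl hx))
  have hg'l : ∀ x ∈ Set.Ioo 0 c₁, HasDerivAt g' (-lam ^ 2 * g x) x := fun x hx => by
    simpa [hx.2.not_gt] using hg' x (Or.inl (Or.inl hx))
  have hf'r : ∀ x ∈ Set.Ioo c₂ L, HasDerivAt f' (-lam ^ 2 * f x) x := fun x hx => by
    simpa [hx.1.not_gt] using hf' x (Or.inr hx)
  have hg'r : ∀ x ∈ Set.Ioo c₂ L, HasDerivAt g' (-lam ^ 2 * g x) x := fun x hx => by
    simpa [hx.1.not_gt] using hg' x (Or.inr hx)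
  have hf'm : ∀ x ∈ Set.Ioo c₁ c₂, HasDerivAt f' (-lam ^ 2 * f x - lam * c * g x) x :=
    fun x hx => by simpa [hx.1, hx.2] using hf' x (Or.inl (Or.inr hx))
  have hg'm : ∀ x ∈ Set.Ioo c₁ c₂, HasDerivAt g' (-lam ^ 2 * g x - lam * c * f x) x :=
    fun x hx => by simpa [hx.1, hx.2] using hg' x (Or.inl (Or.inr hx))
  -- `f' = 0` near the midpoint of the damping region, so `f'' = 0` and hence `f = 0` there.
  obtain ⟨m, hm1, hm2⟩ := exists_between hb
  have hm : m ∈ Set.Ioo 0 c₁ := ⟨by linarith, by linarith⟩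
  have hfm : f m = 0 := by
    have hz : HasDerivAt f' 0 m := (hasDerivAt_const m (0 : ℝ)).congr_of_eventuallyEq <|
      Filter.eventuallyEq_of_mem (Ioo_mem_nhds hm1 hm2) fun t ht => hdamp t ht
    simpa [hlam] using (hf'l m hm).unique hz
  have hfl := free_vanish hlam (hfc.mono sl) (hf'c.mono sl)
    (fun x hx => hf x (sl (Set.Ioo_subset_Icc_self hx))) hf'l
    (Set.Ioo_subset_Icc_self hm) hfm (hdamp m ⟨hm1, hm2⟩)
  obtain ⟨hf1, hdf_left⟩ := hfl c₁ ⟨by linarith, le_rfl⟩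
  have hW : f' c₂ * g c₂ - f c₂ * g' c₂ = 0 := by
    have h := eq_of_deriv_zero_Icc (a := c₂) (b := L) (f := fun x => f' x * g x - f x * g' x)
      (((hf'c.mul hgc).sub (hfc.mul hg'c)).mono sr)
      (fun x hx => by
        have hx' := sr (Set.Ioo_subset_Icc_self hx)
        refine (((hf'r x hx).mul (hg x hx')).sub ((hf x hx').mul (hg'r x hx))).congr_deriv ?_
        ring) c₂ ⟨le_rfl, hcL.le⟩ L ⟨hcL.le, le_rfl⟩
    simpa [hfL, hgL] using h
  have hfmid := coupled_vanish_s2 hc hlam hc0 hsmall (hfc.mono sm) (hf'c.mono sm) (hgc.mono sm)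
    (hg'c.mono sm) (fun x hx => hf x (sm (Set.Ioo_subset_Icc_self hx)))
    (fun x hx => hg x (sm (Set.Ioo_subset_Icc_self hx))) hf'm hg'm hf1 hdf_left hW
  -- A continuous function vanishing on the open coupling region vanishes on its closure.
  have hext : ∀ h : ℝ → ℝ, ContinuousOn h (Set.Icc 0 L) → (∀ x ∈ Set.Ioo c₁ c₂, h x = 0) →
      ∀ x ∈ Set.Icc c₁ c₂, h x = 0 := by
    intro h hcont h0
    refine Set.EqOn.of_subset_closure (g := fun _ => (0 : ℝ)) h0 (hcont.mono sm) continuousOn_const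
      Set.Ioo_subset_Icc_self ?_
    rw [closure_Ioo hc.ne]
  have hd0 : ∀ h h' : ℝ → ℝ, (∀ x ∈ Set.Ioo c₁ c₂, h x = 0) → ∀ x ∈ Set.Ioo c₁ c₂,
      HasDerivAt h (h' x) x → h' x = 0 := by
    intro h h' h0 x hx hd
    exact hd.unique ((hasDerivAt_const x (0 : ℝ)).congr_of_eventuallyEq <|
      Filter.eventuallyEq_of_mem (Ioo_mem_nhds hx.1 hx.2) fun t ht => h0 t ht)
  have hf'mid : ∀ x ∈ Set.Ioo c₁ c₂, f' x = 0 := fun x hx =>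
    hd0 f f' hfmid x hx (hf x (sm (Set.Ioo_subset_Icc_self hx)))
  have hgmid : ∀ x ∈ Set.Ioo c₁ c₂, g x = 0 := fun x hx => by
    have h := hd0 f' (fun x => -lam ^ 2 * f x - lam * c * g x) hf'mid x hx (hf'm x hx)
    simpa [hfmid x hx, hlam, hc0] using h
  have hg'mid : ∀ x ∈ Set.Ioo c₁ c₂, g' x = 0 := fun x hx =>
    hd0 g g' hgmid x hx (hg x (sm (Set.Ioo_subset_Icc_self hx)))
  have hfM := hext f hfc hfmid
  have hf'M := hext f' hf'c hf'mid
  have hgM := hext g hgc hgmid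
  have hg'M := hext g' hg'c hg'mid
  have e1 : c₁ ∈ Set.Icc c₁ c₂ := ⟨le_rfl, hc.le⟩
  have e2 : c₂ ∈ Set.Icc c₁ c₂ := ⟨hc.le, le_rfl⟩
  have hgl := free_vanish hlam (hgc.mono sl) (hg'c.mono sl)
    (fun x hx => hg x (sl (Set.Ioo_subset_Icc_self hx))) hg'l
    (Set.right_mem_Icc.2 (by linarith)) (hgM c₁ e1) (hg'M c₁ e1)
  have hfr := free_vanish hlam (hfc.mono sr) (hf'c.mono sr)
    (fun x hx => hf x (sr (Set.Ioo_subset_Icc_self hx))) hf'r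
    (Set.left_mem_Icc.2 hcL.le) (hfM c₂ e2) (hf'M c₂ e2)
  have hgr := free_vanish hlam (hgc.mono sr) (hg'c.mono sr)
    (fun x hx => hg x (sr (Set.Ioo_subset_Icc_self hx))) hg'r
    (Set.left_mem_Icc.2 hcL.le) (hgM c₂ e2) (hg'M c₂ e2)
  intro x hx
  rcases le_total x c₁ with h | h
  · exact ⟨(hfl x ⟨hx.1, h⟩).1, (hgl x ⟨hx.1, h⟩).1⟩
  rcases le_total x c₂ with h' | h'
  · exact ⟨hfM x ⟨h, h'⟩, hgM x ⟨h, h'⟩⟩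
  · exact ⟨(hfr x ⟨h', hx.2⟩).1, (hgr x ⟨h', hx.2⟩).1⟩

lemma hasDerivAt_re_part {f : ℝ → ℂ} {d : ℂ} {x : ℝ} (h : HasDerivAt f d x) :
    HasDerivAt (fun t => (f t).re) d.re x :=
  Complex.reCLM.hasFDerivAt.comp_hasDerivAt x h

lemma hasDerivAt_im_part {f : ℝ → ℂ} {d : ℂ} {x : ℝ} (h : HasDerivAt f d x) :
    HasDerivAt (fun t => (f t).im) d.im x :=
  Complex.imCLM.hasFDerivAt.comp_hasDerivAt x h


/-- Vanishing of eigenfunctions, Case 3 (single damping region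
acting on `u`, equal wave speeds `a = 1`). -/
theorem eigenfunctions_vanish_case3
    (L b₁ b₂ c₁ c₂ lam c₀ : ℝ)
    (hL : 0 < L)
    (h0b : 0 < b₁) (hb : b₁ < b₂) (hbc : b₂ < c₁) (hc : c₁ < c₂) (hcL : c₂ < L)
    (hlam : lam ≠ 0) (hc₀ : c₀ ≠ 0)
    (hsmall : |c₀| * (c₂ - c₁) < 1)
    (u u' u'' y y' y'' : ℝ → ℂ)
    (hu : ∀ x ∈ Set.Icc 0 L, HasDerivAt u (u' x) x)
    (hu'c : ContinuousOn u' (Set.Icc 0 L))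
    (hy : ∀ x ∈ Set.Icc 0 L, HasDerivAt y (y' x) x)
    (hy'c : ContinuousOn y' (Set.Icc 0 L))
    (hu0 : u 0 = 0) (huL : u L = 0) (hy0 : y 0 = 0) (hyL : y L = 0)
    (hdampu : ∀ x ∈ Set.Ioo b₁ b₂, u' x = 0)
    (hu'' : ∀ x ∈ Set.Ioo 0 c₁ ∪ Set.Ioo c₁ c₂ ∪ Set.Ioo c₂ L,
      HasDerivAt u' (u'' x) x)
    (hy'' : ∀ x ∈ Set.Ioo 0 c₁ ∪ Set.Ioo c₁ c₂ ∪ Set.Ioo c₂ L,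
      HasDerivAt y' (y'' x) x)
    (hequ : ∀ x ∈ Set.Ioo 0 c₁ ∪ Set.Ioo c₁ c₂ ∪ Set.Ioo c₂ L,
      (lam : ℂ) ^ 2 * u x + u'' x
        - Complex.I * lam * (if c₁ < x ∧ x < c₂ then (c₀ : ℂ) else 0) * y x = 0)
    (heqy : ∀ x ∈ Set.Ioo 0 c₁ ∪ Set.Ioo c₁ c₂ ∪ Set.Ioo c₂ L,
      (lam : ℂ) ^ 2 * y x + y'' x
        + Complex.I * lam * (if c₁ < x ∧ x < c₂ then (c₀ : ℂ) else 0) * u x = 0) :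
    ∀ x ∈ Set.Icc 0 L, u x = 0 ∧ y x = 0 := by

  have hre : ∀ {h : ℝ → ℂ}, ContinuousOn h (Set.Icc 0 L) →
      ContinuousOn (fun t => (h t).re) (Set.Icc 0 L) :=
    fun h => Complex.continuous_re.comp_continuousOn h
  have him : ∀ {h : ℝ → ℂ}, ContinuousOn h (Set.Icc 0 L) →
      ContinuousOn (fun t => (h t).im) (Set.Icc 0 L) :=
    fun h => Complex.continuous_im.comp_continuousOn h
  have hsq : (lam : ℂ) ^ 2 = ((lam ^ 2 : ℝ) : ℂ) := by push_cast; rfl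
  have A := real_pair_vanish (f := fun t => (u t).re) (g := fun t => (y t).im)
    h0b hb hbc hc hcL hlam hc₀ hsmall
    (fun x hx => hasDerivAt_re_part (hu x hx)) (hre hu'c)
    (fun x hx => hasDerivAt_im_part (hy x hx)) (him hy'c)
    (by simp [huL]) (by simp [hyL]) (fun x hx => by simp [hdampu x hx])
    (fun x hx => (hasDerivAt_re_part (hu'' x hx)).congr_deriv (by
      have h := congrArg Complex.re (hequ x hx)
      rw [hsq] at h
      split_ifs at h ⊢ <;> simp [-Complex.ofReal_pow] at h ⊢ <;> linarith))
    (fun x hx => (hasDerivAt_im_part (hy'' x hx)).congr_deriv (by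
      have h := congrArg Complex.im (heqy x hx)
      rw [hsq] at h
      split_ifs at h ⊢ <;> simp [-Complex.ofReal_pow] at h ⊢ <;> linarith))
  have B := real_pair_vanish (c := -c₀) (f := fun t => (u t).im) (g := fun t => (y t).re)
    h0b hb hbc hc hcL hlam (neg_ne_zero.2 hc₀) (by rwa [abs_neg])
    (fun x hx => hasDerivAt_im_part (hu x hx)) (him hu'c)
    (fun x hx => hasDerivAt_re_part (hy x hx)) (hre hy'c)
    (by simp [huL]) (by simp [hyL]) (fun x hx => by simp [hdampu x hx])
    (fun x hx => (hasDerivAt_im_part (hu'' x hx)).congr_deriv (by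
      have h := congrArg Complex.im (hequ x hx)
      rw [hsq] at h
      split_ifs at h ⊢ <;> simp [-Complex.ofReal_pow] at h ⊢ <;> linarith))
    (fun x hx => (hasDerivAt_re_part (hy'' x hx)).congr_deriv (by
      have h := congrArg Complex.re (heqy x hx)
      rw [hsq] at h
      split_ifs at h ⊢ <;> simp [-Complex.ofReal_pow] at h ⊢ <;> linarith))
  exact fun x hx => ⟨Complex.ext (A x hx).1 (B x hx).1, Complex.ext (B x hx).2 (A x hx).2⟩
end

section
/- Let a > 0, real numbers c₁ < c₂, a real number λ ≠ 0, and a real number c₀ ≠ 0 with |c₀|·(c₂ − c₁) < min(√a, 1). Let u, y : [c₁,c₂] → ℂ be twice continuously differentiable and satisfy λ²u(x) + a·u″(x) − iλ·c₀·y(x) = 0 and λ²y(x) + y″(x) + iλ·c₀·u(x) = 0 for all x ∈ [c₁,c₂], together with the boundary conditions u(c₁) = u′(c₁) = 0 and y(c₂) = y′(c₂) = 0. Then u(x) = 0 and y(x) = 0 for all x ∈ [c₁,c₂]. -/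
/-!
Write `L = c₂ - c₁`, and let `M`, `N` be the maxima of `‖y‖`, `‖u‖` on the interval. Each equation is
a forced oscillator `w'' + ω² w = g`, with frequency `ω = |λ| / √a` for `u` and `ω = |λ|` for `y`,
and the Cauchy data vanish at one endpoint. Factoring the operator as
`(d/dx - iω) (d/dx + iω)` and using the integrating factors `exp (∓ iωx)`, which have modulus one,
gives `‖w x‖ ≤ (sup ‖g‖ / ω) |x - p|` when `w` has zero Cauchy data at `p`
(`norm_le_of_forced_oscillator`). The factor `λ` in the coupling cancels against `ω`, leaving
`N ≤ (|c₀| L / √a) M` and `M ≤ |c₀| L N`. Both constants are less than one, so `M = N = 0`.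
-/

/-- The first-order factor `w' + κ w`, with `κ = ±iω` purely imaginary, of a forced oscillator
`w'' + ω² w = g` grows at most at the rate `sup ‖g‖`, away from a point `p` with zero Cauchy
data. -/
lemma norm_first_order_factor_le {c₁ c₂ p G : ℝ} {κ : ℂ} (hκ : κ.re = 0)
    (hp : p ∈ Set.Icc c₁ c₂) {w w' w'' : ℝ → ℂ}
    (hw : ∀ x ∈ Set.Icc c₁ c₂, HasDerivAt w (w' x) x)
    (hw' : ∀ x ∈ Set.Icc c₁ c₂, HasDerivAt w' (w'' x) x)
    (hp0 : w p = 0) (hp1 : w' p = 0)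
    (hG : ∀ x ∈ Set.Icc c₁ c₂, ‖w'' x - κ ^ 2 * w x‖ ≤ G)
    {x : ℝ} (hx : x ∈ Set.Icc c₁ c₂) :
    ‖w' x + κ * w x‖ ≤ G * |x - p| := by
  have hunit : ∀ t : ℝ, ‖Complex.exp (-κ * t)‖ = 1 := by
    intro t
    simp [Complex.norm_exp, hκ]
  have hexp : ∀ t : ℝ,
      HasDerivAt (fun t : ℝ => Complex.exp (-κ * t)) (Complex.exp (-κ * t) * (-κ * 1)) t := by
    intro t
    exact ((Complex.ofRealCLM.hasDerivAt (x := t)).const_mul (-κ)).cexp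
  have hder : ∀ t ∈ Set.Icc c₁ c₂,
      HasDerivWithinAt (fun t : ℝ => Complex.exp (-κ * t) * (w' t + κ * w t))
        (Complex.exp (-κ * t) * (w'' t - κ ^ 2 * w t)) (Set.Icc c₁ c₂) t := by
    intro t ht
    have h := (hexp t).mul ((hw' t ht).add ((hw t ht).const_mul κ))
    refine HasDerivAt.hasDerivWithinAt (h.congr_deriv ?_)
    simp only [Pi.add_apply]
    ring
  have h := (convex_Icc c₁ c₂).norm_image_sub_le_of_norm_hasDerivWithin_le (C := G) hder
    (fun t ht => by rw [norm_mul, hunit, one_mul]; exact hG t ht) hp hx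
  simpa only [hp0, hp1, mul_zero, add_zero, sub_zero, norm_mul, hunit, one_mul,
    Real.norm_eq_abs] using h

/-- A forced oscillator with frequency `ω` and forcing of size at most `ω K`, at rest at `p`, has
displacement at most `K |x - p|`. -/
lemma norm_le_of_forced_oscillator {c₁ c₂ p ω K : ℝ} (hω : 0 < ω)
    (hp : p ∈ Set.Icc c₁ c₂) {w w' w'' : ℝ → ℂ}
    (hw : ∀ x ∈ Set.Icc c₁ c₂, HasDerivAt w (w' x) x)
    (hw' : ∀ x ∈ Set.Icc c₁ c₂, HasDerivAt w' (w'' x) x)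
    (hp0 : w p = 0) (hp1 : w' p = 0)
    (hK : ∀ x ∈ Set.Icc c₁ c₂, ‖w'' x + (ω : ℂ) ^ 2 * w x‖ ≤ ω * K)
    {x : ℝ} (hx : x ∈ Set.Icc c₁ c₂) :
    ‖w x‖ ≤ K * |x - p| := by
  have h1 := norm_first_order_factor_le (κ := Complex.I * ω) (G := ω * K) (by simp) hp hw hw'
    hp0 hp1 (fun t ht => by simpa [mul_pow] using hK t ht) hx
  have h2 := norm_first_order_factor_le (κ := -(Complex.I * ω)) (G := ω * K) (by simp) hp hw hw'
    hp0 hp1 (fun t ht => by simpa [mul_pow] using hK t ht) hx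
  have h3 := norm_sub_le (w' x + Complex.I * ω * w x) (w' x + -(Complex.I * ω) * w x)
  -- The difference of the two first-order factors recovers `w` itself.
  have h4 : ‖(w' x + Complex.I * ω * w x) - (w' x + -(Complex.I * ω) * w x)‖
      = 2 * (ω * ‖w x‖) := by
    rw [show (w' x + Complex.I * ω * w x) - (w' x + -(Complex.I * ω) * w x)
      = 2 * (Complex.I * (ω * w x)) by ring]
    simp [abs_of_pos hω]
  rw [h4] at h3
  refine le_of_mul_le_mul_left ?_ hω
  linarith

/-- Coupled eigenfunctions on the coupling region with opposite
zero Cauchy data vanish when the coupling is small. -/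
theorem coupling_region_vanishing
    (a c₁ c₂ lam c₀ : ℝ) (ha : 0 < a) (hc : c₁ < c₂)
    (hlam : lam ≠ 0) (hc₀ : c₀ ≠ 0)
    (hsmall : |c₀| * (c₂ - c₁) < min (Real.sqrt a) 1)
    (u u' u'' y y' y'' : ℝ → ℂ)
    (hu : ∀ x ∈ Set.Icc c₁ c₂, HasDerivAt u (u' x) x)
    (hu' : ∀ x ∈ Set.Icc c₁ c₂, HasDerivAt u' (u'' x) x)
    (hu''c : ContinuousOn u'' (Set.Icc c₁ c₂))
    (hy : ∀ x ∈ Set.Icc c₁ c₂, HasDerivAt y (y' x) x)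
    (hy' : ∀ x ∈ Set.Icc c₁ c₂, HasDerivAt y' (y'' x) x)
    (hy''c : ContinuousOn y'' (Set.Icc c₁ c₂))
    (hequ : ∀ x ∈ Set.Icc c₁ c₂,
      (lam : ℂ) ^ 2 * u x + (a : ℂ) * u'' x - Complex.I * lam * c₀ * y x = 0)
    (heqy : ∀ x ∈ Set.Icc c₁ c₂,
      (lam : ℂ) ^ 2 * y x + y'' x + Complex.I * lam * c₀ * u x = 0)
    (hu1 : u c₁ = 0) (hu1' : u' c₁ = 0) (hy2 : y c₂ = 0) (hy2' : y' c₂ = 0) :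
    ∀ x ∈ Set.Icc c₁ c₂, u x = 0 ∧ y x = 0 := by
  have hs : 0 < Real.sqrt a := Real.sqrt_pos.2 ha
  have hss : Real.sqrt a * Real.sqrt a = a := Real.mul_self_sqrt ha.le
  have hssC : (Real.sqrt a : ℂ) ^ 2 = a := by exact_mod_cast Real.sq_sqrt ha.le
  have haC : (a : ℂ) ≠ 0 := by exact_mod_cast ha.ne'
  have hl : 0 < |lam| := abs_pos.2 hlam
  have hlC : ((|lam| : ℝ) : ℂ) ^ 2 = (lam : ℂ) ^ 2 := by exact_mod_cast sq_abs lam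
  have hc1 : c₁ ∈ Set.Icc c₁ c₂ := Set.left_mem_Icc.2 hc.le
  have hc2 : c₂ ∈ Set.Icc c₁ c₂ := Set.right_mem_Icc.2 hc.le
  obtain ⟨q, hq, hqmax⟩ := isCompact_Icc.exists_isMaxOn ⟨c₁, hc1⟩
    (f := fun x => ‖u x‖) (fun x hx => (hu x hx).continuousAt.continuousWithinAt.norm)
  obtain ⟨r, hr, hrmax⟩ := isCompact_Icc.exists_isMaxOn ⟨c₁, hc1⟩
    (f := fun x => ‖y x‖) (fun x hx => (hy x hx).continuousAt.continuousWithinAt.norm)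
  have hN : ∀ x ∈ Set.Icc c₁ c₂, ‖u x‖ ≤ ‖u q‖ := fun x hx => hqmax hx
  have hM : ∀ x ∈ Set.Icc c₁ c₂, ‖y x‖ ≤ ‖y r‖ := fun x hx => hrmax hx
  obtain ⟨hsm1, hsm2⟩ := lt_min_iff.1 hsmall
  have hbu : ‖u q‖ ≤ |c₀| * ‖y r‖ / Real.sqrt a * |q - c₁| := by
    refine norm_le_of_forced_oscillator (ω := |lam| / Real.sqrt a) (by positivity) hc1 hu hu'
      hu1 hu1' (fun x hx => ?_) hq
    have e : u'' x + ((|lam| / Real.sqrt a : ℝ) : ℂ) ^ 2 * u x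
        = Complex.I * lam * c₀ * y x / a := by
      rw [Complex.ofReal_div, div_pow, hlC, hssC]
      field_simp
      linear_combination hequ x hx
    have e2 : |lam| / Real.sqrt a * (|c₀| * ‖y r‖ / Real.sqrt a) = |lam| * |c₀| * ‖y r‖ / a := by
      rw [div_mul_div_comm, hss, mul_assoc]
    rw [e, e2]
    simp only [norm_div, norm_mul, Complex.norm_I, Complex.norm_real, Real.norm_eq_abs, one_mul,
      abs_of_pos ha]
    have := hM x hx
    gcongr
  have hby : ‖y r‖ ≤ |c₀| * ‖u q‖ * |r - c₂| := by
    refine norm_le_of_forced_oscillator (ω := |lam|) hl hc2 hy hy' hy2 hy2' (fun x hx => ?_) hr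
    have e : y'' x + ((|lam| : ℝ) : ℂ) ^ 2 * y x = -(Complex.I * lam * c₀ * u x) := by
      rw [hlC]
      linear_combination heqy x hx
    rw [e]
    simp only [norm_neg, norm_mul, Complex.norm_I, Complex.norm_real, Real.norm_eq_abs, one_mul,
      ← mul_assoc]
    have := hN x hx
    gcongr
  have hqL : |q - c₁| ≤ c₂ - c₁ := by
    rw [abs_of_nonneg (by linarith [hq.1])]; linarith [hq.2]
  have hrL : |r - c₂| ≤ c₂ - c₁ := by
    rw [abs_of_nonpos (by linarith [hr.2])]; linarith [hr.1]
  have hNM : ‖u q‖ ≤ ‖y r‖ := by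
    calc ‖u q‖ ≤ |c₀| * ‖y r‖ / Real.sqrt a * (c₂ - c₁) := hbu.trans (by gcongr)
      _ = (|c₀| * (c₂ - c₁)) / Real.sqrt a * ‖y r‖ := by ring
      _ ≤ 1 * ‖y r‖ := by
        gcongr
        exact (div_le_one hs).2 hsm1.le
      _ = ‖y r‖ := one_mul _
  have hMM : ‖y r‖ ≤ |c₀| * (c₂ - c₁) * ‖y r‖ := by
    calc ‖y r‖ ≤ |c₀| * ‖y r‖ * (c₂ - c₁) := hby.trans (by gcongr)
      _ = |c₀| * (c₂ - c₁) * ‖y r‖ := by ring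
  have hM0 : ‖y r‖ ≤ 0 := by
    by_contra! h
    exact absurd hMM (not_le.2 (by simpa using mul_lt_mul_of_pos_right hsm2 h))
  intro x hx
  exact ⟨norm_le_zero_iff.1 ((hN x hx).trans (hNM.trans hM0)),
    norm_le_zero_iff.1 ((hM x hx).trans hM0)⟩
end

section
/- Let a > 0, real numbers c₁ < c₂, λ ∈ ℝ, and c₀ ∈ ℝ. Let u : [c₁,c₂] → ℂ be twice continuously differentiable and y : [c₁,c₂] → ℂ be continuous, satisfying λ²u(x) + a·u″(x) − iλ·c₀·y(x) = 0 for all x ∈ [c₁,c₂] and u(c₁) = u′(c₁) = 0. Then λ²·∫_{c₁}^{c₂} |u(x)|² dx + a·∫_{c₁}^{c₂} |u′(x)|² dx + 2·Re( iλ·c₀·∫_{c₁}^{c₂} (x − c₂)·y(x)·conj(u′(x)) dx ) = 0. -/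
/-!
The function `F x = (x - c₂) * (λ² |u x|² + a |u' x|²)` vanishes at both endpoints: at `c₂` because
of the weight, at `c₁` because of the zero Cauchy data. Since `λ² u + a u'' = i λ c₀ y`, its
derivative is
`λ² |u|² + a |u'|² + 2 Re (i λ c₀ (x - c₂) y conj u')`,
so the identity is the fundamental theorem of calculus for `F`.
-/

/-- Multiplier identity for `λ²u + a·u″ − iλ·c₀·y = 0` on `[c₁,c₂]`
with zero Cauchy data of `u` at `c₁`. -/
theorem multiplier_identity_u
    (a c₁ c₂ lam c₀ : ℝ) (ha : 0 < a) (hc : c₁ < c₂)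
    (u u' u'' y : ℝ → ℂ)
    (hu : ∀ x ∈ Set.Icc c₁ c₂, HasDerivAt u (u' x) x)
    (hu' : ∀ x ∈ Set.Icc c₁ c₂, HasDerivAt u' (u'' x) x)
    (hu''c : ContinuousOn u'' (Set.Icc c₁ c₂))
    (hyc : ContinuousOn y (Set.Icc c₁ c₂))
    (heq : ∀ x ∈ Set.Icc c₁ c₂,
      (lam : ℂ) ^ 2 * u x + (a : ℂ) * u'' x - Complex.I * lam * c₀ * y x = 0)
    (hu1 : u c₁ = 0) (hu1' : u' c₁ = 0) :
    lam ^ 2 * (∫ x in c₁..c₂, ‖u x‖ ^ 2)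
      + a * (∫ x in c₁..c₂, ‖u' x‖ ^ 2)
      + 2 * (Complex.I * lam * c₀ *
          ∫ x in c₁..c₂, ((x : ℂ) - (c₂ : ℂ)) * y x * (starRingEnd ℂ) (u' x)).re
      = 0 := by
  have hle : c₁ ≤ c₂ := hc.le
  have hIcc : Set.uIcc c₁ c₂ = Set.Icc c₁ c₂ := Set.uIcc_of_le hle
  have cu : ContinuousOn u (Set.uIcc c₁ c₂) := fun x hx =>
    (hu x (hIcc ▸ hx)).continuousAt.continuousWithinAt
  have cu' : ContinuousOn u' (Set.uIcc c₁ c₂) := fun x hx =>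
    (hu' x (hIcc ▸ hx)).continuousAt.continuousWithinAt
  have cy : ContinuousOn y (Set.uIcc c₁ c₂) := hIcc ▸ hyc
  set k : ℂ := Complex.I * lam * c₀ with hk
  have cg : ContinuousOn (fun x : ℝ => ((x : ℂ) - (c₂ : ℂ)) * y x * (starRingEnd ℂ) (u' x))
      (Set.uIcc c₁ c₂) :=
    ((by fun_prop : Continuous fun x : ℝ => (x : ℂ) - (c₂ : ℂ)).continuousOn.mul cy).mul
      (Complex.continuous_conj.comp_continuousOn cu')
  have ckg := continuousOn_const (c := k) |>.mul cg
  have i1 : IntervalIntegrable (fun x => lam ^ 2 * ‖u x‖ ^ 2) MeasureTheory.volume c₁ c₂ :=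
    (continuousOn_const.mul (cu.norm.pow 2)).intervalIntegrable
  have i2 : IntervalIntegrable (fun x => a * ‖u' x‖ ^ 2) MeasureTheory.volume c₁ c₂ :=
    (continuousOn_const.mul (cu'.norm.pow 2)).intervalIntegrable
  have i3 : IntervalIntegrable
      (fun x : ℝ => 2 * (k * (((x : ℂ) - (c₂ : ℂ)) * y x * (starRingEnd ℂ) (u' x))).re)
      MeasureTheory.volume c₁ c₂ :=
    (continuousOn_const.mul (Complex.continuous_re.comp_continuousOn ckg)).intervalIntegrable
  have hre : (k * ∫ x in c₁..c₂, ((x : ℂ) - (c₂ : ℂ)) * y x * (starRingEnd ℂ) (u' x)).re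
      = ∫ x in c₁..c₂, (k * (((x : ℂ) - (c₂ : ℂ)) * y x * (starRingEnd ℂ) (u' x))).re := by
    rw [← intervalIntegral.integral_const_mul]
    exact (Complex.reCLM.intervalIntegral_comp_comm ckg.intervalIntegrable).symm
  have hF : ∀ x ∈ Set.uIcc c₁ c₂,
      HasDerivAt (fun x : ℝ => (x - c₂) * (lam ^ 2 * ‖u x‖ ^ 2 + a * ‖u' x‖ ^ 2))
        (lam ^ 2 * ‖u x‖ ^ 2 + a * ‖u' x‖ ^ 2
          + 2 * (k * (((x : ℂ) - (c₂ : ℂ)) * y x * (starRingEnd ℂ) (u' x))).re) x := by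
    intro x hx
    rw [hIcc] at hx
    have h := ((hasDerivAt_id x).sub_const c₂).mul
      (((hu x hx).norm_sq.const_mul (lam ^ 2)).add ((hu' x hx).norm_sq.const_mul a))
    refine h.congr_deriv ?_
    have e : k * (((x : ℂ) - (c₂ : ℂ)) * y x * (starRingEnd ℂ) (u' x))
        = ((x - c₂ : ℝ) : ℂ) * (((lam ^ 2 : ℝ) : ℂ) * (u x * (starRingEnd ℂ) (u' x))
          + (a : ℂ) * (u'' x * (starRingEnd ℂ) (u' x))) := by
      push_cast
      linear_combination (-((x : ℂ) - c₂) * (starRingEnd ℂ) (u' x)) * heq x hx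
    rw [e, Complex.re_ofReal_mul, Complex.add_re, Complex.re_ofReal_mul, Complex.re_ofReal_mul]
    simp only [Complex.inner, Complex.mul_re, Complex.conj_re, Complex.conj_im, id, Pi.add_apply]
    ring
  have key := intervalIntegral.integral_eq_sub_of_hasDerivAt hF ((i1.add i2).add i3)
  rw [intervalIntegral.integral_add (i1.add i2) i3, intervalIntegral.integral_add i1 i2,
    intervalIntegral.integral_const_mul, intervalIntegral.integral_const_mul,
    intervalIntegral.integral_const_mul, ← hre] at key
  rw [key]
  simp [hu1, hu1']
end

section
/- Let real numbers c₁ < c₂, λ ∈ ℝ, and c₀ ∈ ℝ. Let y : [c₁,c₂] → ℂ be twice continuously differentiable and u : [c₁,c₂] → ℂ be continuous, satisfying λ²y(x) + y″(x) + iλ·c₀·u(x) = 0 for all x ∈ [c₁,c₂] and y(c₂) = y′(c₂) = 0. Then λ²·∫_{c₁}^{c₂} |y(x)|² dx + ∫_{c₁}^{c₂} |y′(x)|² dx = 2·Re( iλ·c₀·∫_{c₁}^{c₂} (x − c₁)·u(x)·conj(y′(x)) dx ). -/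
/-!
The function `F x = (x - c₁) * (lam ^ 2 * ‖y x‖ ^ 2 + ‖y' x‖ ^ 2)` vanishes at `c₁` because of its
weight and at `c₂` because of the zero Cauchy data. By the equation for `y''`,
`F' = lam ^ 2 * ‖y‖ ^ 2 + ‖y'‖ ^ 2 - 2 Re (i lam c₀ (x - c₁) u conj y')`, so the fundamental theorem
of calculus says that the integral of the right-hand side is `0`, which is the identity.
-/

/-- Multiplier identity for `λ²y + y″ + iλ·c₀·u = 0` on `[c₁,c₂]`
with zero Cauchy data of `y` at `c₂`. -/
theorem multiplier_identity_y
    (c₁ c₂ lam c₀ : ℝ) (hc : c₁ < c₂)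
    (y y' y'' u : ℝ → ℂ)
    (hy : ∀ x ∈ Set.Icc c₁ c₂, HasDerivAt y (y' x) x)
    (hy' : ∀ x ∈ Set.Icc c₁ c₂, HasDerivAt y' (y'' x) x)
    (hy''c : ContinuousOn y'' (Set.Icc c₁ c₂))
    (huc : ContinuousOn u (Set.Icc c₁ c₂))
    (heq : ∀ x ∈ Set.Icc c₁ c₂,
      (lam : ℂ) ^ 2 * y x + y'' x + Complex.I * lam * c₀ * u x = 0)
    (hy2 : y c₂ = 0) (hy2' : y' c₂ = 0) :
    lam ^ 2 * (∫ x in c₁..c₂, ‖y x‖ ^ 2)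
      + (∫ x in c₁..c₂, ‖y' x‖ ^ 2)
      = 2 * (Complex.I * lam * c₀ *
          ∫ x in c₁..c₂, ((x : ℂ) - (c₁ : ℂ)) * u x * (starRingEnd ℂ) (y' x)).re := by
  have huI : Set.uIcc c₁ c₂ = Set.Icc c₁ c₂ := Set.uIcc_of_le hc.le
  have hyc : ContinuousOn y (Set.uIcc c₁ c₂) := by
    rw [huI]; exact fun x hx => (hy x hx).continuousAt.continuousWithinAt
  have hyc' : ContinuousOn y' (Set.uIcc c₁ c₂) := by
    rw [huI]; exact fun x hx => (hy' x hx).continuousAt.continuousWithinAt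
  have hu : ContinuousOn u (Set.uIcc c₁ c₂) := by rwa [huI]
  set g : ℝ → ℂ := fun x => ((x : ℂ) - (c₁ : ℂ)) * u x * (starRingEnd ℂ) (y' x) with hg
  set k : ℂ := Complex.I * lam * c₀ with hk
  have hgc : ContinuousOn g (Set.uIcc c₁ c₂) :=
    (((Complex.continuous_ofReal.sub continuous_const).continuousOn).mul hu).mul
      (Complex.continuous_conj.comp_continuousOn hyc')
  have hkg : IntervalIntegrable (fun x => k * g x) MeasureTheory.volume c₁ c₂ :=
    (continuousOn_const.mul hgc).intervalIntegrable
  have hi1 : IntervalIntegrable (fun x => lam ^ 2 * ‖y x‖ ^ 2) MeasureTheory.volume c₁ c₂ :=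
    (continuousOn_const.mul (hyc.norm.pow 2)).intervalIntegrable
  have hi2 : IntervalIntegrable (fun x => ‖y' x‖ ^ 2) MeasureTheory.volume c₁ c₂ :=
    (hyc'.norm.pow 2).intervalIntegrable
  have hi3 : IntervalIntegrable (fun x => 2 * (k * g x).re) MeasureTheory.volume c₁ c₂ :=
    (continuousOn_const.mul (Complex.continuous_re.comp_continuousOn
      (continuousOn_const.mul hgc))).intervalIntegrable
  have hre : 2 * (k * ∫ x in c₁..c₂, g x).re = ∫ x in c₁..c₂, 2 * (k * g x).re := by
    rw [intervalIntegral.integral_const_mul, ← intervalIntegral.integral_const_mul]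
    congr 1
    exact (Complex.reCLM.intervalIntegral_comp_comm hkg).symm
  have hF : ∀ x ∈ Set.uIcc c₁ c₂,
      HasDerivAt (fun x : ℝ => (x - c₁) * (lam ^ 2 * ‖y x‖ ^ 2 + ‖y' x‖ ^ 2))
        (lam ^ 2 * ‖y x‖ ^ 2 + ‖y' x‖ ^ 2 - 2 * (k * g x).re) x := by
    intro x hx
    rw [huI] at hx
    have h := ((hasDerivAt_id x).sub_const c₁).mul
      (((hy x hx).norm_sq.const_mul (lam ^ 2)).add (hy' x hx).norm_sq)
    refine h.congr_deriv ?_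
    have e : y'' x = -((lam : ℂ) ^ 2 * y x) - k * u x := by linear_combination heq x hx
    simp only [Complex.inner, e, hg, hk, id, Pi.add_apply]
    simp [pow_two]
    ring
  have hFTC := intervalIntegral.integral_eq_sub_of_hasDerivAt hF ((hi1.add hi2).sub hi3)
  rw [intervalIntegral.integral_sub (hi1.add hi2) hi3, intervalIntegral.integral_add hi1 hi2,
    intervalIntegral.integral_const_mul] at hFTC
  simp only [hy2, hy2', norm_zero, sub_self] at hFTC
  rw [hre]
  linarith
end

section
/- Let a > 0, real numbers c₁ < c₂, λ ∈ ℝ, and c₀ ∈ ℝ. Let u, y : [c₁,c₂] → ℂ be twice continuously differentiable and satisfy λ²u(x) + a·u″(x) − iλ·c₀·y(x) = 0 and λ²y(x) + y″(x) + iλ·c₀·u(x) = 0 for all x ∈ [c₁,c₂], together with u(c₁) = u′(c₁) = 0 and y(c₂) = y′(c₂) = 0. Then (1 − c₀²(c₂ − c₁)²/a)·λ²·∫_{c₁}^{c₂} |y(x)|² dx + (1 − c₀²(c₂ − c₁)²)·λ²·∫_{c₁}^{c₂} |u(x)|² dx ≤ 0. -/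
/-!
The function `F x = (x - p) (λ² ‖w‖² + b ‖w'‖²)` has derivative
`λ² ‖w‖² + b ‖w'‖² + 2 (x - p) ⟪w', λ² w + b w''⟫`. For `w = u`, `p = c₂`, `b = a`, and likewise for
`w = y`, `p = c₁`, `b = 1`, it vanishes at both ends of the interval: at one end because of the
weight, at the other because of the Cauchy data. So `∫ F' = 0`. The equation turns
`λ² w + b w''` into a coupling term of norm `|λ c₀| ‖g‖`, with `g` the other unknown, and Young's
inequality absorbs `⟪w', ·⟫` into `b ‖w'‖²`, which leaves
`λ² ∫ ‖w‖² ≤ (c₀² (c₂ - c₁)² / b) λ² ∫ ‖g‖²` (`weighted_multiplier_estimate`).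
Adding the two estimates gives the theorem.
-/

/-- The weighted multiplier identity with weight `x - p`, combined with Young's
inequality. Only the size of `λ² w + b w''` enters (`heq`), so the phase of the coupling is
irrelevant; `hp` bounds the weight, and `hF1` and `hF2` are the vanishing of the boundary terms. -/
lemma weighted_multiplier_estimate
    (b p c₁ c₂ lam c₀ : ℝ) (hb : 0 < b) (hc : c₁ < c₂)
    (hp : ∀ x ∈ Set.Icc c₁ c₂, |x - p| ≤ c₂ - c₁)
    (w w' w'' g : ℝ → ℂ)
    (hw : ∀ x ∈ Set.Icc c₁ c₂, HasDerivAt w (w' x) x)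
    (hw' : ∀ x ∈ Set.Icc c₁ c₂, HasDerivAt w' (w'' x) x)
    (hw'' : ContinuousOn w'' (Set.Icc c₁ c₂))
    (hg : ContinuousOn g (Set.Icc c₁ c₂))
    (heq : ∀ x ∈ Set.Icc c₁ c₂, ‖lam ^ 2 • w x + b • w'' x‖ = |lam * c₀| * ‖g x‖)
    (hF1 : (c₁ - p) * (lam ^ 2 * ‖w c₁‖ ^ 2 + b * ‖w' c₁‖ ^ 2) = 0)
    (hF2 : (c₂ - p) * (lam ^ 2 * ‖w c₂‖ ^ 2 + b * ‖w' c₂‖ ^ 2) = 0) :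
    lam ^ 2 * (∫ x in c₁..c₂, ‖w x‖ ^ 2)
      ≤ c₀ ^ 2 * (c₂ - c₁) ^ 2 / b * lam ^ 2 * (∫ x in c₁..c₂, ‖g x‖ ^ 2) := by
  have hI : Set.uIcc c₁ c₂ = Set.Icc c₁ c₂ := Set.uIcc_of_le hc.le
  have hwc : ContinuousOn w (Set.Icc c₁ c₂) :=
    fun x hx => (hw x hx).continuousAt.continuousWithinAt
  have hwc' : ContinuousOn w' (Set.Icc c₁ c₂) :=
    fun x hx => (hw' x hx).continuousAt.continuousWithinAt
  let F' : ℝ → ℝ := fun x => 1 * (lam ^ 2 * ‖w x‖ ^ 2 + b * ‖w' x‖ ^ 2) +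
    (x - p) * (lam ^ 2 * (2 * inner ℝ (w x) (w' x)) + b * (2 * inner ℝ (w' x) (w'' x)))
  have hF : ∀ x ∈ Set.uIcc c₁ c₂,
      HasDerivAt (fun x => (x - p) * (lam ^ 2 * ‖w x‖ ^ 2 + b * ‖w' x‖ ^ 2)) (F' x) x := by
    intro x hx
    rw [hI] at hx
    exact ((hasDerivAt_id x).sub_const p).mul
      (((hw x hx).norm_sq.const_mul _).add ((hw' x hx).norm_sq.const_mul _))
  have hF'c : ContinuousOn F' (Set.Icc c₁ c₂) := by
    have h1 := hwc.inner (𝕜 := ℝ) hwc'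
    have h2 := hwc'.inner (𝕜 := ℝ) hw''
    fun_prop
  have hint : ∀ f : ℝ → ℝ, ContinuousOn f (Set.Icc c₁ c₂) →
      IntervalIntegrable f MeasureTheory.volume c₁ c₂ :=
    fun f hf => ContinuousOn.intervalIntegrable (by rwa [hI])
  have hFint := intervalIntegral.integral_eq_sub_of_hasDerivAt hF (hint _ hF'c)
  rw [hF1, hF2, sub_zero] at hFint
  have hiw := hint (fun x => lam ^ 2 * ‖w x‖ ^ 2) (by fun_prop)
  have hig := hint (fun x => c₀ ^ 2 * (c₂ - c₁) ^ 2 / b * lam ^ 2 * ‖g x‖ ^ 2) (by fun_prop)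
  have hmono := intervalIntegral.integral_mono_on hc.le (hiw.sub hig) (hint _ hF'c) (by
    intro x hx
    set N := ‖w' x‖
    set G := |lam * c₀| * ‖g x‖ with hG
    set L := c₂ - c₁ with hL
    have hCS : |inner ℝ (w' x) (lam ^ 2 • w x + b • w'' x)| ≤ N * G := by
      rw [hG, ← heq x hx]; exact abs_real_inner_le_norm _ _
    have hexp : F' x = lam ^ 2 * ‖w x‖ ^ 2 + b * N ^ 2 +
        2 * ((x - p) * inner ℝ (w' x) (lam ^ 2 • w x + b • w'' x)) := by
      simp only [F', inner_add_right, inner_smul_right, real_inner_comm (w' x) (w x), N]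
      ring
    have hprod : -(L * (N * G)) ≤
        (x - p) * inner ℝ (w' x) (lam ^ 2 • w x + b • w'' x) := by
      refine neg_le_of_abs_le ?_
      rw [abs_mul]
      exact mul_le_mul (hp x hx) hCS (abs_nonneg _) (by linarith)
    have hyoung : 2 * (L * (N * G)) ≤ b * N ^ 2 + L ^ 2 * G ^ 2 / b := by
      have h : 0 ≤ (b * N - L * G) ^ 2 / b := by positivity
      have h2 : (b * N - L * G) ^ 2 / b = b * N ^ 2 + L ^ 2 * G ^ 2 / b - 2 * (L * (N * G)) := by
        field_simp
        ring
      linarith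
    have hG2 : c₀ ^ 2 * L ^ 2 / b * lam ^ 2 * ‖g x‖ ^ 2 = L ^ 2 * G ^ 2 / b := by
      rw [hG, mul_pow, sq_abs]; ring
    rw [hexp]
    linarith)
  rw [hFint, intervalIntegral.integral_sub hiw hig, intervalIntegral.integral_const_mul,
    intervalIntegral.integral_const_mul] at hmono
  linarith

/-- Combined weighted multiplier inequality on the coupling region. -/
theorem combined_multiplier_inequality
    (a c₁ c₂ lam c₀ : ℝ) (ha : 0 < a) (hc : c₁ < c₂)
    (u u' u'' y y' y'' : ℝ → ℂ)
    (hu : ∀ x ∈ Set.Icc c₁ c₂, HasDerivAt u (u' x) x)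
    (hu' : ∀ x ∈ Set.Icc c₁ c₂, HasDerivAt u' (u'' x) x)
    (hu''c : ContinuousOn u'' (Set.Icc c₁ c₂))
    (hy : ∀ x ∈ Set.Icc c₁ c₂, HasDerivAt y (y' x) x)
    (hy' : ∀ x ∈ Set.Icc c₁ c₂, HasDerivAt y' (y'' x) x)
    (hy''c : ContinuousOn y'' (Set.Icc c₁ c₂))
    (hequ : ∀ x ∈ Set.Icc c₁ c₂,
      (lam : ℂ) ^ 2 * u x + (a : ℂ) * u'' x - Complex.I * lam * c₀ * y x = 0)
    (heqy : ∀ x ∈ Set.Icc c₁ c₂,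
      (lam : ℂ) ^ 2 * y x + y'' x + Complex.I * lam * c₀ * u x = 0)
    (hu1 : u c₁ = 0) (hu1' : u' c₁ = 0) (hy2 : y c₂ = 0) (hy2' : y' c₂ = 0) :
    (1 - c₀ ^ 2 * (c₂ - c₁) ^ 2 / a) * lam ^ 2 * (∫ x in c₁..c₂, ‖y x‖ ^ 2)
      + (1 - c₀ ^ 2 * (c₂ - c₁) ^ 2) * lam ^ 2 * (∫ x in c₁..c₂, ‖u x‖ ^ 2)
      ≤ 0 := by
  have hu_le := weighted_multiplier_estimate a c₂ c₁ c₂ lam c₀ ha hc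
    (fun x hx => by rw [abs_le]; constructor <;> linarith [hx.1, hx.2])
    u u' u'' y hu hu' hu''c (fun x hx => (hy x hx).continuousAt.continuousWithinAt)
    (fun x hx => by
      have h : lam ^ 2 • u x + a • u'' x = Complex.I * ((lam * c₀ : ℝ) : ℂ) * y x := by
        simp only [Complex.real_smul]; push_cast; linear_combination hequ x hx
      rw [h, norm_mul, norm_mul, Complex.norm_I, Complex.norm_real, one_mul, Real.norm_eq_abs])
    (by simp [hu1, hu1']) (by simp)
  have hy_le := weighted_multiplier_estimate 1 c₁ c₁ c₂ lam c₀ one_pos hc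
    (fun x hx => by rw [abs_le]; constructor <;> linarith [hx.1, hx.2])
    y y' y'' u hy hy' hy''c (fun x hx => (hu x hx).continuousAt.continuousWithinAt)
    (fun x hx => by
      have h : lam ^ 2 • y x + (1 : ℝ) • y'' x = -(Complex.I * ((lam * c₀ : ℝ) : ℂ) * u x) := by
        simp only [Complex.real_smul]; push_cast; linear_combination heqy x hx
      rw [h, norm_neg, norm_mul, norm_mul, Complex.norm_I, Complex.norm_real, one_mul,
        Real.norm_eq_abs])
    (by simp) (by simp [hy2, hy2'])
  rw [div_one] at hy_le
  linarith
end

section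
/- Let L > 0, real numbers 0 < c₁ < c₂ < L, a real number λ ≠ 0, and a real number c₀ ≠ 0. Let u, y : [0,L] → ℂ be continuously differentiable with u(0) = u(L) = y(0) = y(L) = 0. Assume u and y are twice differentiable on each of the open intervals (0,c₁), (c₁,c₂), (c₂,L) and satisfy there λ²u(x) + u″(x) − iλ·c(x)·y(x) = 0 and λ²y(x) + y″(x) + iλ·c(x)·u(x) = 0, where c(x) = c₀ for x ∈ (c₁,c₂) and c(x) = 0 otherwise. Then ∫_{c₁}^{c₂} |u(x)|² dx = ∫_{c₁}^{c₂} |y(x)|² dx. -/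
/-!
The quantity `G = Im (u' * conj y + y' * conj u)` is an integrated form of the two tested equations.
Where the coupling coefficient has the constant value `κ`, the terms `u' * conj y' + y' * conj u'`
and `-λ² (u * conj y + y * conj u)` in the derivative are real, so `G' = λ κ (|y|² - |u|²)`; this is
`flux_sub_flux`. Since `u` and `y` are `C¹`, `G` is continuous across `c₁` and `c₂`, and it vanishes
at `0` and `L` by the Dirichlet conditions. It is constant on `[0, c₁]` and `[c₂, L]`, where the
coupling is absent, so `G c₁ = G c₂ = 0`. Integrating `G'` over `[c₁, c₂]` and dividing by
`λ c₀ ≠ 0` gives the equality of the two masses.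
-/

/-- The imaginary part of the boundary term that arises on testing the equation for `u` with
`conj y` and the equation for `y` with `conj u`; `u'` and `y'` stand for the derivatives. -/
noncomputable def flux (u u' y y' : ℝ → ℂ) (x : ℝ) : ℝ :=
  (u' x * star (y x) + y' x * star (u x)).im

/-- Balance law for the flux on an interval where the coupling coefficient is a constant `κ`. The
second derivatives are only needed in the interior, as the flux is continuous up to the ends. -/
theorem flux_sub_flux {a b lam κ : ℝ} (hab : a ≤ b) {u u' u'' y y' y'' : ℝ → ℂ}
    (hu : ∀ x ∈ Set.Icc a b, HasDerivAt u (u' x) x)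
    (hu'c : ContinuousOn u' (Set.Icc a b))
    (hy : ∀ x ∈ Set.Icc a b, HasDerivAt y (y' x) x)
    (hy'c : ContinuousOn y' (Set.Icc a b))
    (hu'' : ∀ x ∈ Set.Ioo a b, HasDerivAt u' (u'' x) x)
    (hy'' : ∀ x ∈ Set.Ioo a b, HasDerivAt y' (y'' x) x)
    (hequ : ∀ x ∈ Set.Ioo a b,
      (lam : ℂ) ^ 2 * u x + u'' x - Complex.I * lam * (κ : ℂ) * y x = 0)
    (heqy : ∀ x ∈ Set.Ioo a b,
      (lam : ℂ) ^ 2 * y x + y'' x + Complex.I * lam * (κ : ℂ) * u x = 0) :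
    flux u u' y y' b - flux u u' y y' a
      = lam * κ * ((∫ x in a..b, ‖y x‖ ^ 2) - ∫ x in a..b, ‖u x‖ ^ 2) := by
  have huc : ContinuousOn u (Set.Icc a b) := HasDerivAt.continuousOn hu
  have hyc : ContinuousOn y (Set.Icc a b) := HasDerivAt.continuousOn hy
  have hui : IntervalIntegrable (fun x => ‖u x‖ ^ 2) MeasureTheory.volume a b :=
    (huc.norm.pow 2).intervalIntegrable_of_Icc hab
  have hyi : IntervalIntegrable (fun x => ‖y x‖ ^ 2) MeasureTheory.volume a b :=
    (hyc.norm.pow 2).intervalIntegrable_of_Icc hab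
  have hGc : ContinuousOn (flux u u' y y') (Set.Icc a b) :=
    Complex.continuous_im.comp_continuousOn ((hu'c.mul hyc.star).add (hy'c.mul huc.star))
  have hG' : ∀ x ∈ Set.Ioo a b,
      HasDerivAt (flux u u' y y') (lam * κ * (‖y x‖ ^ 2 - ‖u x‖ ^ 2)) x := by
    intro x hx
    have hxc := Set.Ioo_subset_Icc_self hx
    have h := Complex.imCLM.hasFDerivAt.comp_hasDerivAt x
      (((hu'' x hx).mul (hy x hxc).star).add ((hy'' x hx).mul (hu x hxc).star))
    refine h.congr_deriv ?_
    have e1 : u'' x = Complex.I * lam * κ * y x - (lam : ℂ) ^ 2 * u x := by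
      linear_combination hequ x hx
    have e2 : y'' x = -(Complex.I * lam * κ * u x) - (lam : ℂ) ^ 2 * y x := by
      linear_combination heqy x hx
    rw [e1, e2, ← Complex.normSq_eq_norm_sq, ← Complex.normSq_eq_norm_sq,
      Complex.normSq_apply, Complex.normSq_apply]
    simp [pow_two]
    ring
  rw [← intervalIntegral.integral_sub hyi hui, ← intervalIntegral.integral_const_mul]
  exact (intervalIntegral.integral_eq_sub_of_hasDerivAt_of_le hab hGc hG'
    ((hyi.sub hui).const_mul _)).symm

/-- L²-balance identity on the coupling region (Step 1 of Case 3,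
equal wave speeds). -/
theorem l2_balance_identity
    (L c₁ c₂ lam c₀ : ℝ)
    (hL : 0 < L) (h0c : 0 < c₁) (hc : c₁ < c₂) (hcL : c₂ < L)
    (hlam : lam ≠ 0) (hc₀ : c₀ ≠ 0)
    (u u' u'' y y' y'' : ℝ → ℂ)
    (hu : ∀ x ∈ Set.Icc 0 L, HasDerivAt u (u' x) x)
    (hu'c : ContinuousOn u' (Set.Icc 0 L))
    (hy : ∀ x ∈ Set.Icc 0 L, HasDerivAt y (y' x) x)
    (hy'c : ContinuousOn y' (Set.Icc 0 L))
    (hu0 : u 0 = 0) (huL : u L = 0) (hy0 : y 0 = 0) (hyL : y L = 0)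
    (hu'' : ∀ x ∈ Set.Ioo 0 c₁ ∪ Set.Ioo c₁ c₂ ∪ Set.Ioo c₂ L,
      HasDerivAt u' (u'' x) x)
    (hy'' : ∀ x ∈ Set.Ioo 0 c₁ ∪ Set.Ioo c₁ c₂ ∪ Set.Ioo c₂ L,
      HasDerivAt y' (y'' x) x)
    (hequ : ∀ x ∈ Set.Ioo 0 c₁ ∪ Set.Ioo c₁ c₂ ∪ Set.Ioo c₂ L,
      (lam : ℂ) ^ 2 * u x + u'' x
        - Complex.I * lam * (if c₁ < x ∧ x < c₂ then (c₀ : ℂ) else 0) * y x = 0)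
    (heqy : ∀ x ∈ Set.Ioo 0 c₁ ∪ Set.Ioo c₁ c₂ ∪ Set.Ioo c₂ L,
      (lam : ℂ) ^ 2 * y x + y'' x
        + Complex.I * lam * (if c₁ < x ∧ x < c₂ then (c₀ : ℂ) else 0) * u x = 0) :
    (∫ x in c₁..c₂, ‖u x‖ ^ 2) = ∫ x in c₁..c₂, ‖y x‖ ^ 2 := by
  -- The three subintervals, with constant coupling `0`, `c₀` and `0` respectively.
  have s1 : Set.Icc 0 c₁ ⊆ Set.Icc 0 L := Set.Icc_subset_Icc le_rfl (hc.trans hcL).le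
  have s2 : Set.Icc c₁ c₂ ⊆ Set.Icc 0 L := Set.Icc_subset_Icc h0c.le hcL.le
  have s3 : Set.Icc c₂ L ⊆ Set.Icc 0 L := Set.Icc_subset_Icc (h0c.trans hc).le le_rfl
  have t1 : ∀ x ∈ Set.Ioo 0 c₁, x ∈ Set.Ioo 0 c₁ ∪ Set.Ioo c₁ c₂ ∪ Set.Ioo c₂ L :=
    fun x hx => Or.inl (Or.inl hx)
  have t2 : ∀ x ∈ Set.Ioo c₁ c₂, x ∈ Set.Ioo 0 c₁ ∪ Set.Ioo c₁ c₂ ∪ Set.Ioo c₂ L :=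
    fun x hx => Or.inl (Or.inr hx)
  have t3 : ∀ x ∈ Set.Ioo c₂ L, x ∈ Set.Ioo 0 c₁ ∪ Set.Ioo c₁ c₂ ∪ Set.Ioo c₂ L :=
    fun x hx => Or.inr hx
  have n1 : ∀ x ∈ Set.Ioo 0 c₁, ¬(c₁ < x ∧ x < c₂) := fun x hx h => lt_asymm hx.2 h.1
  have n3 : ∀ x ∈ Set.Ioo c₂ L, ¬(c₁ < x ∧ x < c₂) := fun x hx h => lt_asymm hx.1 h.2
  have b1 := flux_sub_flux (lam := lam) (κ := 0) h0c.le
    (fun x hx => hu x (s1 hx)) (hu'c.mono s1) (fun x hx => hy x (s1 hx)) (hy'c.mono s1)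
    (fun x hx => hu'' x (t1 x hx)) (fun x hx => hy'' x (t1 x hx))
    (fun x hx => by simpa [n1 x hx] using hequ x (t1 x hx))
    (fun x hx => by simpa [n1 x hx] using heqy x (t1 x hx))
  have b2 := flux_sub_flux (lam := lam) (κ := c₀) hc.le
    (fun x hx => hu x (s2 hx)) (hu'c.mono s2) (fun x hx => hy x (s2 hx)) (hy'c.mono s2)
    (fun x hx => hu'' x (t2 x hx)) (fun x hx => hy'' x (t2 x hx))
    (fun x hx => by simpa only [if_pos (show c₁ < x ∧ x < c₂ from hx)] using hequ x (t2 x hx))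
    (fun x hx => by simpa only [if_pos (show c₁ < x ∧ x < c₂ from hx)] using heqy x (t2 x hx))
  have b3 := flux_sub_flux (lam := lam) (κ := 0) hcL.le
    (fun x hx => hu x (s3 hx)) (hu'c.mono s3) (fun x hx => hy x (s3 hx)) (hy'c.mono s3)
    (fun x hx => hu'' x (t3 x hx)) (fun x hx => hy'' x (t3 x hx))
    (fun x hx => by simpa [n3 x hx] using hequ x (t3 x hx))
    (fun x hx => by simpa [n3 x hx] using heqy x (t3 x hx))
  have g0 : flux u u' y y' 0 = 0 := by simp [flux, hu0, hy0]
  have gL : flux u u' y y' L = 0 := by simp [flux, huL, hyL]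
  have key : lam * c₀ * ((∫ x in c₁..c₂, ‖y x‖ ^ 2) - ∫ x in c₁..c₂, ‖u x‖ ^ 2) = 0 := by
    linarith
  have hdiff := (mul_eq_zero.mp key).resolve_left (mul_ne_zero hlam hc₀)
  exact (sub_eq_zero.mp hdiff).symm
end

section
/- Let real numbers c₁ < c₂, a real number λ ≠ 0, and a real number c₀ ≠ 0 with |c₀|·(c₂ − c₁) < 1. Let u : [c₁,c₂] → ℂ be twice continuously differentiable and y : [c₁,c₂] → ℂ be continuous, satisfying λ²u(x) + u″(x) − iλ·c₀·y(x) = 0 for all x ∈ [c₁,c₂], u(c₁) = u′(c₁) = 0, and ∫_{c₁}^{c₂} |u(x)|² dx = ∫_{c₁}^{c₂} |y(x)|² dx. Then u(x) = 0 for all x ∈ [c₁,c₂] and y(x) = 0 for all x ∈ [c₁,c₂]. -/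
/-! The multiplier argument, run on the energy density `G = |u'|² + λ²|u|²`. The equation gives
`G' = 2 Re (conj u' · iλc₀y)`, so `x ↦ (c₂ - x) G x`, which vanishes at both endpoints, has derivative
`-G + 2 (c₂ - x) Re (conj u' · iλc₀y)`. By Cauchy-Schwarz and Young, with `L = c₂ - c₁`, this
derivative is at most `-λ²|u|² + (c₀L)²λ²|y|²`. Integrating yields `∫|u|² ≤ (c₀L)² ∫|y|²`, and the
balance identity together with `|c₀|L < 1` makes both integrals zero; continuity then gives
pointwise vanishing.
-/

lemma eq_zero_of_integral_norm_sq {a b : ℝ} (hab : a < b) {f : ℝ → ℂ}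
    (hf : ContinuousOn f (Set.Icc a b)) (h : (∫ x in a..b, ‖f x‖ ^ 2) ≤ 0) :
    ∀ x ∈ Set.Icc a b, f x = 0 := by
  intro x hx
  by_contra hne
  exact absurd (intervalIntegral.integral_pos hab (hf.norm.pow 2) (fun _ _ => sq_nonneg _)
    ⟨x, hx, pow_pos (norm_pos_iff.mpr hne) 2⟩) (not_lt.mpr h)

/-- Cauchy-Schwarz and Young for the weighted source term: `t` is the multiplier weight `c₂ - x`,
`p` stands for `u'`, `q` for `u''`, and `z` for the source `iλc₀y` of modulus `m`. -/
lemma young_bound {t L l m : ℝ} {w p q z : ℂ} (ht : 0 ≤ t) (htL : t ≤ L)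
    (hz : (l : ℂ) ^ 2 * w + q = z) (hm : ‖z‖ = m) :
    -1 * (‖p‖ ^ 2 + l ^ 2 * ‖w‖ ^ 2) + t * (2 * inner ℝ p q + l ^ 2 * (2 * inner ℝ w p))
      ≤ -(l ^ 2 * ‖w‖ ^ 2) + L ^ 2 * m ^ 2 := by
  have h1 : 2 * inner ℝ p q + l ^ 2 * (2 * inner ℝ w p) = 2 * inner ℝ p z := by
    have h2 : z = (l ^ 2) • w + q := by rw [← hz]; simp
    rw [h2, inner_add_right, inner_smul_right, real_inner_comm w p]
    ring
  have h3 : inner ℝ p z ≤ ‖p‖ * m := hm ▸ real_inner_le_norm p z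
  have hm0 : 0 ≤ m := hm ▸ norm_nonneg z
  have h4 : t * inner ℝ p z ≤ t * (‖p‖ * m) := mul_le_mul_of_nonneg_left h3 ht
  have h5 : t ^ 2 * m ^ 2 ≤ L ^ 2 * m ^ 2 := by gcongr
  rw [h1]
  nlinarith [sq_nonneg (‖p‖ - t * m)]


/-- Step 2 of Case 3: the multiplier argument with the L²-balance
identity and the smallness condition forces both components to vanish on the
coupling region. -/
theorem coupling_region_vanishing_case3
    (c₁ c₂ lam c₀ : ℝ) (hc : c₁ < c₂) (hlam : lam ≠ 0) (hc₀ : c₀ ≠ 0)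
    (hsmall : |c₀| * (c₂ - c₁) < 1)
    (u u' u'' y : ℝ → ℂ)
    (hu : ∀ x ∈ Set.Icc c₁ c₂, HasDerivAt u (u' x) x)
    (hu' : ∀ x ∈ Set.Icc c₁ c₂, HasDerivAt u' (u'' x) x)
    (hu''c : ContinuousOn u'' (Set.Icc c₁ c₂))
    (hyc : ContinuousOn y (Set.Icc c₁ c₂))
    (hequ : ∀ x ∈ Set.Icc c₁ c₂,
      (lam : ℂ) ^ 2 * u x + u'' x - Complex.I * lam * c₀ * y x = 0)
    (hu1 : u c₁ = 0) (hu1' : u' c₁ = 0)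
    (hbal : (∫ x in c₁..c₂, ‖u x‖ ^ 2) = ∫ x in c₁..c₂, ‖y x‖ ^ 2) :
    (∀ x ∈ Set.Icc c₁ c₂, u x = 0) ∧ ∀ x ∈ Set.Icc c₁ c₂, y x = 0 := by
  have huc : ContinuousOn u (Set.Icc c₁ c₂) := fun x hx => (hu x hx).continuousAt.continuousWithinAt
  have huc' : ContinuousOn u' (Set.Icc c₁ c₂) :=
    fun x hx => (hu' x hx).continuousAt.continuousWithinAt
  have hI : Set.uIcc c₁ c₂ = Set.Icc c₁ c₂ := Set.uIcc_of_le hc.le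
  have hder : ∀ x ∈ Set.uIcc c₁ c₂,
      HasDerivAt (fun x => (c₂ - x) * (‖u' x‖ ^ 2 + lam ^ 2 * ‖u x‖ ^ 2))
        (-1 * (‖u' x‖ ^ 2 + lam ^ 2 * ‖u x‖ ^ 2) + (c₂ - x) *
          (2 * inner ℝ (u' x) (u'' x) + lam ^ 2 * (2 * inner ℝ (u x) (u' x)))) x := by
    intro x hx
    rw [hI] at hx
    exact ((hasDerivAt_id x).const_sub c₂).mul
      ((hu' x hx).norm_sq.add ((hu x hx).norm_sq.const_mul (lam ^ 2)))
  have hint : IntervalIntegrable (fun x => -1 * (‖u' x‖ ^ 2 + lam ^ 2 * ‖u x‖ ^ 2) + (c₂ - x) *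
      (2 * inner ℝ (u' x) (u'' x) + lam ^ 2 * (2 * inner ℝ (u x) (u' x))))
      MeasureTheory.volume c₁ c₂ := by
    apply ContinuousOn.intervalIntegrable
    rw [hI]
    fun_prop
  have hiu : IntervalIntegrable (fun x => ‖u x‖ ^ 2) MeasureTheory.volume c₁ c₂ := by
    apply ContinuousOn.intervalIntegrable
    rw [hI]
    fun_prop
  have hiy : IntervalIntegrable (fun x => ‖y x‖ ^ 2) MeasureTheory.volume c₁ c₂ := by
    apply ContinuousOn.intervalIntegrable
    rw [hI]
    fun_prop
  have hzero := intervalIntegral.integral_eq_sub_of_hasDerivAt hder hint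
  simp only [hu1, hu1', sub_self, norm_zero] at hzero
  have hmono := intervalIntegral.integral_mono_on hc.le hint
    ((hiu.const_mul (-lam ^ 2)).add (hiy.const_mul ((c₂ - c₁) ^ 2 * (lam ^ 2 * c₀ ^ 2))))
    (fun x hx => by
      have hz : (lam : ℂ) ^ 2 * u x + u'' x = Complex.I * lam * c₀ * y x := by
        linear_combination hequ x hx
      have hm : ‖Complex.I * lam * c₀ * y x‖ = |lam| * |c₀| * ‖y x‖ := by simp
      refine (young_bound (p := u' x) (sub_nonneg.mpr hx.2)
        (sub_le_sub_left hx.1 c₂) hz hm).trans_eq ?_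
      simp only [mul_pow, sq_abs]
      ring)
  rw [hzero, intervalIntegral.integral_add (hiu.const_mul _) (hiy.const_mul _),
    intervalIntegral.integral_const_mul, intervalIntegral.integral_const_mul, ← hbal] at hmono
  have hk : c₀ ^ 2 * (c₂ - c₁) ^ 2 < 1 := by
    rw [← sq_abs c₀, ← mul_pow]
    exact pow_lt_one₀ (mul_nonneg (abs_nonneg _) (sub_pos.mpr hc).le) hsmall two_ne_zero
  have hl : 0 < lam ^ 2 := by positivity
  have hu0 : (∫ x in c₁..c₂, ‖u x‖ ^ 2) ≤ 0 := by
    by_contra! hpos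
    have := mul_pos (mul_pos hl (sub_pos.mpr hk)) hpos
    linarith
  exact ⟨eq_zero_of_integral_norm_sq hc huc hu0,
    eq_zero_of_integral_norm_sq hc hyc (hbal ▸ hu0)⟩
end

section
/- Let a > 0, b₀ > 0, and real numbers b₁ < b₂. Let (λₙ) be a sequence of positive reals with λₙ → ∞. For each n, let uₙ, vₙ, f₁ₙ : [b₁,b₂] → ℂ be continuously differentiable and f₂ₙ : [b₁,b₂] → ℂ continuous, such that the function wₙ := a·uₙ′ + b₀·vₙ′ is continuously differentiable on [b₁,b₂], and on [b₁,b₂]: iλₙ·uₙ − vₙ = λₙ^{-1/2}·f₁ₙ and iλₙ·vₙ − wₙ′ = λₙ^{-1/2}·f₂ₙ. Assume: λₙ^{1/2}·∫_{b₁}^{b₂}|vₙ′|² dx → 0, λₙ^{5/2}·∫_{b₁}^{b₂}|uₙ′|² dx → 0, sup_n ∫_{b₁}^{b₂}|vₙ|² dx < ∞, ∫_{b₁}^{b₂}|f₁ₙ′|² dx → 0, and ∫_{b₁}^{b₂}|f₂ₙ|² dx → 0 as n → ∞. Then λₙ^{3/2}·∫_{b₁}^{b₂}|vₙ|² dx →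 0 as n → ∞. -/
/-!
The equation gives `w' = iλv - λ^{-1/2} f₂` with `w = a u' + b₀ v'`. Pairing it (real inner product)
with `iv` and integrating by parts bounds `λ ∫|v|²` by the boundary values of `|w||v|`, by
`∫|v'||w|` and by a lower-order source term (`energy_bound`).

Each boundary value is controlled by the one-dimensional trace inequality
`L |g|² ≤ (1 + L t) ∫|g|² + (L / t) ∫|g'|²`, with `t > 0` free (`trace_right`, `trace_left`).
Writing `r = λ^{1/2}` and choosing `t` proportional to `r`, both for `v` and for `w`, all
contributions of `∫|v|²` to the right-hand side are absorbed, which leaves (`key_bound`), for `r ≥ 1`,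
`r³ ∫|v|² ≤ K (r ∫|v'|² + r ∫|w|² + ∫|f₂|²)` with `K` depending only on the length `L = b₂ - b₁`.
The right-hand side tends to zero, since `∫|w|² ≤ 2a² ∫|u'|² + 2b₀² ∫|v'|²`.
-/

open intervalIntegral

lemma intervalIntegrable_norm_sq {c d : ℝ} (hcd : c ≤ d) {g : ℝ → ℂ}
    (hg : ContinuousOn g (Set.Icc c d)) :
    IntervalIntegrable (fun x => ‖g x‖ ^ 2) MeasureTheory.volume c d :=
  ContinuousOn.intervalIntegrable_of_Icc hcd (hg.norm.pow 2)

/-- Young's inequality with the weight `t`. -/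
lemma two_abs_inner_le (z w : ℂ) {t : ℝ} (ht : 0 < t) :
    2 * |inner ℝ z w| ≤ t * ‖z‖ ^ 2 + ‖w‖ ^ 2 / t := by
  have h := abs_real_inner_le_norm z w
  have h2 : t * ‖z‖ ^ 2 + ‖w‖ ^ 2 / t - 2 * (‖z‖ * ‖w‖) = (t * ‖z‖ - ‖w‖) ^ 2 / t := by
    field_simp
    ring
  have h3 : 0 ≤ (t * ‖z‖ - ‖w‖) ^ 2 / t := by positivity
  linarith

/-- Integrating the derivative of `(x - e) |g x|²`. Taking `e` to be one endpoint isolates the value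
of `g` at the other one. -/
lemma weighted_trace {c d e t : ℝ} (hcd : c < d) (hec : |c - e| ≤ d - c) (hed : |d - e| ≤ d - c)
    (ht : 0 < t) {g g' : ℝ → ℂ}
    (hg : ∀ x ∈ Set.Icc c d, HasDerivAt g (g' x) x) (hg' : ContinuousOn g' (Set.Icc c d)) :
    (d - e) * ‖g d‖ ^ 2 - (c - e) * ‖g c‖ ^ 2 ≤
      (1 + (d - c) * t) * (∫ x in c..d, ‖g x‖ ^ 2) + (d - c) / t * ∫ x in c..d, ‖g' x‖ ^ 2 := by
  have hgc : ContinuousOn g (Set.Icc c d) := fun x hx => (hg x hx).continuousAt.continuousWithinAt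
  have hder : ∀ x ∈ Set.uIcc c d, HasDerivAt (fun x => (x - e) * ‖g x‖ ^ 2)
      (1 * ‖g x‖ ^ 2 + (x - e) * (2 * inner ℝ (g x) (g' x))) x := by
    intro x hx
    rw [Set.uIcc_of_le hcd.le] at hx
    exact ((hasDerivAt_id x).sub_const e).mul (hg x hx).norm_sq
  have hint : IntervalIntegrable
      (fun x => 1 * ‖g x‖ ^ 2 + (x - e) * (2 * inner ℝ (g x) (g' x))) MeasureTheory.volume c d := by
    apply ContinuousOn.intervalIntegrable_of_Icc hcd.le
    have := hgc.inner (𝕜 := ℝ) hg'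
    fun_prop
  have ig := intervalIntegrable_norm_sq hcd.le hgc
  have ig' := intervalIntegrable_norm_sq hcd.le hg'
  rw [← integral_eq_sub_of_hasDerivAt hder hint, ← integral_const_mul, ← integral_const_mul,
    ← integral_add (ig.const_mul _) (ig'.const_mul _)]
  refine integral_mono_on hcd.le hint ((ig.const_mul _).add (ig'.const_mul _)) fun x hx => ?_
  have hy := two_abs_inner_le (g x) (g' x) ht
  have hxe : |x - e| ≤ d - c := by
    rw [abs_le] at *
    constructor <;> linarith [hx.1, hx.2]
  have h1 : (x - e) * (2 * inner ℝ (g x) (g' x)) ≤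
      (d - c) * (t * ‖g x‖ ^ 2 + ‖g' x‖ ^ 2 / t) := by
    refine (le_abs_self _).trans ?_
    rw [abs_mul, abs_mul, abs_two]
    exact mul_le_mul hxe hy (by positivity) (by linarith)
  have h2 : (d - c) / t * ‖g' x‖ ^ 2 = (d - c) * (‖g' x‖ ^ 2 / t) := by ring
  rw [h2]
  linarith

lemma trace_right {c d t : ℝ} (hcd : c < d) (ht : 0 < t) {g g' : ℝ → ℂ}
    (hg : ∀ x ∈ Set.Icc c d, HasDerivAt g (g' x) x) (hg' : ContinuousOn g' (Set.Icc c d)) :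
    (d - c) * ‖g d‖ ^ 2 ≤
      (1 + (d - c) * t) * (∫ x in c..d, ‖g x‖ ^ 2) + (d - c) / t * ∫ x in c..d, ‖g' x‖ ^ 2 := by
  have := weighted_trace (e := c) hcd (by simp [hcd.le]) (abs_of_pos (sub_pos.2 hcd)).le ht hg hg'
  linarith

lemma trace_left {c d t : ℝ} (hcd : c < d) (ht : 0 < t) {g g' : ℝ → ℂ}
    (hg : ∀ x ∈ Set.Icc c d, HasDerivAt g (g' x) x) (hg' : ContinuousOn g' (Set.Icc c d)) :
    (d - c) * ‖g c‖ ^ 2 ≤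
      (1 + (d - c) * t) * (∫ x in c..d, ‖g x‖ ^ 2) + (d - c) / t * ∫ x in c..d, ‖g' x‖ ^ 2 := by
  have := weighted_trace (e := d) hcd (by rw [abs_sub_comm, abs_of_pos (sub_pos.2 hcd)])
    (by simp [hcd.le]) ht hg hg'
  linarith

/-- The real part of the pairing of the resolvent equation with `iv`, after integration by parts. -/
lemma energy_bound {c d l m : ℝ} (hcd : c < d) (hm : 0 < m) {v v' w w' f : ℝ → ℂ}
    (hv : ∀ x ∈ Set.Icc c d, HasDerivAt v (v' x) x) (hv' : ContinuousOn v' (Set.Icc c d))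
    (hw : ∀ x ∈ Set.Icc c d, HasDerivAt w (w' x) x) (hw' : ContinuousOn w' (Set.Icc c d))
    (hf : ContinuousOn f (Set.Icc c d))
    (heq : ∀ x ∈ Set.Icc c d, Complex.I * l * v x - w' x = (m : ℂ) * f x) :
    l * (∫ x in c..d, ‖v x‖ ^ 2) ≤ ‖v d‖ * ‖w d‖ + ‖v c‖ * ‖w c‖
      + ((∫ x in c..d, ‖v' x‖ ^ 2) + ∫ x in c..d, ‖w x‖ ^ 2) / 2
      + m * ((∫ x in c..d, ‖v x‖ ^ 2) / 4 + ∫ x in c..d, ‖f x‖ ^ 2) := by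
  have hvc : ContinuousOn v (Set.Icc c d) := fun x hx => (hv x hx).continuousAt.continuousWithinAt
  have hwc : ContinuousOn w (Set.Icc c d) := fun x hx => (hw x hx).continuousAt.continuousWithinAt
  have hder : ∀ x ∈ Set.uIcc c d, HasDerivAt (fun x => inner ℝ (Complex.I * v x) (w x))
      (inner ℝ (Complex.I * v x) (w' x) + inner ℝ (Complex.I * v' x) (w x)) x := by
    intro x hx
    rw [Set.uIcc_of_le hcd.le] at hx
    exact ((hv x hx).const_mul Complex.I).inner ℝ (hw x hx)
  have hint : IntervalIntegrable
      (fun x => inner ℝ (Complex.I * v x) (w' x) + inner ℝ (Complex.I * v' x) (w x))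
      MeasureTheory.volume c d := by
    apply ContinuousOn.intervalIntegrable_of_Icc hcd.le
    exact ((continuousOn_const.mul hvc).inner (𝕜 := ℝ) hw').add
      ((continuousOn_const.mul hv').inner (𝕜 := ℝ) hwc)
  have iv := intervalIntegrable_norm_sq hcd.le hvc
  have iv' := intervalIntegrable_norm_sq hcd.le hv'
  have iw := intervalIntegrable_norm_sq hcd.le hwc
  have jf := intervalIntegrable_norm_sq hcd.le hf
  have hFTC := integral_eq_sub_of_hasDerivAt hder hint
  have hbd : ∀ x, |inner ℝ (Complex.I * v x) (w x)| ≤ ‖v x‖ * ‖w x‖ := fun x => by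
    simpa using abs_real_inner_le_norm (Complex.I * v x) (w x)
  have key : (∫ x in c..d, l * ‖v x‖ ^ 2) ≤ ∫ x in c..d,
      ((inner ℝ (Complex.I * v x) (w' x) + inner ℝ (Complex.I * v' x) (w x))
        + (1 / 2 * (‖v' x‖ ^ 2 + ‖w x‖ ^ 2) + m * (1 / 4 * ‖v x‖ ^ 2 + ‖f x‖ ^ 2))) := by
    refine integral_mono_on hcd.le (iv.const_mul _)
      (hint.add (((iv'.add iw).const_mul _).add (((iv.const_mul _).add jf).const_mul _)))
      fun x hx => ?_
    have e1 : w' x = (l : ℝ) • (Complex.I * v x) - (m : ℝ) • f x := by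
      simp only [Complex.real_smul]
      linear_combination -(heq x hx)
    have e2 : inner ℝ (Complex.I * v x) (w' x)
        = l * ‖v x‖ ^ 2 - m * inner ℝ (Complex.I * v x) (f x) := by
      rw [e1, inner_sub_right, real_inner_smul_right, real_inner_smul_right,
        real_inner_self_eq_norm_sq]
      simp
    have y1 := two_abs_inner_le (Complex.I * v' x) (w x) one_pos
    have y2 := two_abs_inner_le (Complex.I * v x) (f x) (t := 1 / 2) (by norm_num)
    simp only [norm_mul, Complex.norm_I, one_mul, div_one] at y1 y2
    have y3 := neg_abs_le (inner ℝ (Complex.I * v' x) (w x))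
    have y4 : m * inner ℝ (Complex.I * v x) (f x) ≤ m * (1 / 4 * ‖v x‖ ^ 2 + ‖f x‖ ^ 2) := by
      apply mul_le_mul_of_nonneg_left _ hm.le
      linarith [le_abs_self (inner ℝ (Complex.I * v x) (f x))]
    rw [e2]
    linarith
  rw [integral_add hint (((iv'.add iw).const_mul _).add (((iv.const_mul _).add jf).const_mul _)),
    hFTC, integral_add ((iv'.add iw).const_mul _) (((iv.const_mul _).add jf).const_mul _),
    integral_const_mul, integral_const_mul, integral_const_mul, integral_add iv' iw,
    integral_add (iv.const_mul _) jf, integral_const_mul] at key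
  have b1 := (le_abs_self _).trans (hbd d)
  have b2 := (neg_le_abs _).trans (hbd c)
  linarith

/-- The boundary term: with the trace inequalities applied for `t = r / L` to `v` and for
`t = 256 r / L` to `w`, the coefficient of `∫|v|²` (here `A`) is
`r³ / 8`, small enough for both endpoints to be absorbed. -/
lemma boundary_bound {L r A B W D F p q : ℝ} (hL : 0 < L) (hr : 1 ≤ r)
    (hA : 0 ≤ A) (hW : 0 ≤ W) (hF : 0 ≤ F)
    (hD : D ≤ 2 * r ^ 4 * A + 2 * F)
    (hp : L * p ^ 2 ≤ (1 + L * (r / L)) * A + L / (r / L) * B)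
    (hq : L * q ^ 2 ≤ (1 + L * (256 * r / L)) * W + L / (256 * r / L) * D) :
    r * (p * q) ≤ r ^ 3 * A / 8 + L ^ 2 / 32 * (r * B) + 2056 / L ^ 2 * (r * W) + F / 16 := by
  have hr0 : 0 < r := by linarith
  have hp' : L * r ^ 2 * p ^ 2 ≤ 2 * r ^ 3 * A + L ^ 2 * (r * B) := by
    have h1 : r ^ 2 * ((1 + L * (r / L)) * A + L / (r / L) * B)
        = (r ^ 2 + r ^ 3) * A + L ^ 2 * (r * B) := by
      field_simp
    have h2 : r ^ 2 * A ≤ r ^ 3 * A := by gcongr; norm_num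
    have h3 := mul_le_mul_of_nonneg_left hp (sq_nonneg r)
    rw [h1] at h3
    linarith
  have hq' : L * q ^ 2 ≤ 257 * (r * W) + L ^ 2 / 128 * (r ^ 3 * A) + L ^ 2 / 128 * F := by
    have h1 : (1 + L * (256 * r / L)) * W + L / (256 * r / L) * D
        = W + 256 * (r * W) + L ^ 2 / 256 * (D / r) := by
      field_simp
    have h2 : D / r ≤ 2 * (r ^ 3 * A) + 2 * F := by
      rw [div_le_iff₀ hr0]
      nlinarith [mul_le_mul_of_nonneg_left hr hF]
    have h3 := mul_le_mul_of_nonneg_left h2 (show 0 ≤ L ^ 2 / 256 by positivity)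
    have h4 := mul_le_mul_of_nonneg_right hr hW
    linarith
  -- Young's inequality, balanced so that both squares contribute `r³ A / 16`.
  have hy : r * (p * q) ≤ 1 / 32 * (L * r ^ 2 * p ^ 2) + 8 / L ^ 2 * (L * q ^ 2) := by
    have h : 1 / 32 * (L * r ^ 2 * p ^ 2) + 8 / L ^ 2 * (L * q ^ 2) - r * (p * q)
        = (L * r * p - 16 * q) ^ 2 / (32 * L) := by
      field_simp
      ring
    have : 0 ≤ (L * r * p - 16 * q) ^ 2 / (32 * L) := by positivity
    linarith
  have h5 := mul_le_mul_of_nonneg_left hq' (show 0 ≤ 8 / L ^ 2 by positivity)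
  have h6 : 8 / L ^ 2 * (257 * (r * W) + L ^ 2 / 128 * (r ^ 3 * A) + L ^ 2 / 128 * F)
      = 2056 / L ^ 2 * (r * W) + r ^ 3 * A / 16 + F / 16 := by
    field_simp
    ring
  linarith

/-- The absorbed estimate at a fixed frequency `λ = r²`. -/
lemma key_bound {c d r : ℝ} (hcd : c < d) (hr : 1 ≤ r) {v v' w w' f : ℝ → ℂ}
    (hv : ∀ x ∈ Set.Icc c d, HasDerivAt v (v' x) x) (hv' : ContinuousOn v' (Set.Icc c d))
    (hw : ∀ x ∈ Set.Icc c d, HasDerivAt w (w' x) x) (hw' : ContinuousOn w' (Set.Icc c d))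
    (hf : ContinuousOn f (Set.Icc c d))
    (heq : ∀ x ∈ Set.Icc c d,
      Complex.I * (r ^ 2 : ℝ) * v x - w' x = ((r⁻¹ : ℝ) : ℂ) * f x) :
    r ^ 3 * (∫ x in c..d, ‖v x‖ ^ 2) ≤
      ((d - c) ^ 2 / 8 + 1) * (r * ∫ x in c..d, ‖v' x‖ ^ 2)
      + (8224 / (d - c) ^ 2 + 1) * (r * ∫ x in c..d, ‖w x‖ ^ 2)
      + 9 / 4 * ∫ x in c..d, ‖f x‖ ^ 2 := by
  have hr0 : 0 < r := by linarith
  have hL : 0 < d - c := sub_pos.2 hcd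
  have hE := energy_bound hcd (inv_pos.2 hr0) hv hv' hw hw' hf heq
  have hvc : ContinuousOn v (Set.Icc c d) := fun x hx => (hv x hx).continuousAt.continuousWithinAt
  have iv := intervalIntegrable_norm_sq hcd.le hvc
  have iw' := intervalIntegrable_norm_sq hcd.le hw'
  have jf := intervalIntegrable_norm_sq hcd.le hf
  have hD : (∫ x in c..d, ‖w' x‖ ^ 2) ≤
      2 * r ^ 4 * (∫ x in c..d, ‖v x‖ ^ 2) + 2 * ∫ x in c..d, ‖f x‖ ^ 2 := by
    rw [← integral_const_mul, ← integral_const_mul,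
      ← integral_add (iv.const_mul _) (jf.const_mul _)]
    refine integral_mono_on hcd.le iw' ((iv.const_mul _).add (jf.const_mul _)) fun x hx => ?_
    have e1 : w' x = Complex.I * (r ^ 2 : ℝ) * v x - ((r⁻¹ : ℝ) : ℂ) * f x := by
      linear_combination -(heq x hx)
    have e2 : ‖w' x‖ ≤ r ^ 2 * ‖v x‖ + ‖f x‖ := by
      rw [e1]
      refine (norm_sub_le _ _).trans (add_le_add ?_ ?_)
      · rw [norm_mul, norm_mul, Complex.norm_I, Complex.norm_real, Real.norm_of_nonneg (sq_nonneg r),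
          one_mul]
      · rw [norm_mul, Complex.norm_real, Real.norm_of_nonneg (inv_pos.2 hr0).le]
        exact mul_le_of_le_one_left (norm_nonneg _) (inv_le_one_of_one_le₀ hr)
    have e3 := pow_le_pow_left₀ (norm_nonneg _) e2 2
    nlinarith [sq_nonneg (r ^ 2 * ‖v x‖ - ‖f x‖)]
  have nonneg : ∀ g : ℝ → ℂ, 0 ≤ ∫ x in c..d, ‖g x‖ ^ 2 := fun g =>
    integral_nonneg hcd.le fun x _ => sq_nonneg _
  have ht1 : 0 < r / (d - c) := by positivity
  have ht2 : 0 < 256 * r / (d - c) := by positivity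
  have hR := boundary_bound hL hr (nonneg v) (nonneg w) (nonneg f) hD
    (trace_right hcd ht1 hv hv') (trace_right hcd ht2 hw hw')
  have hS := boundary_bound hL hr (nonneg v) (nonneg w) (nonneg f) hD
    (trace_left hcd ht1 hv hv') (trace_left hcd ht2 hw hw')
  have hA := nonneg v
  have hB := nonneg v'
  have hW := nonneg w
  have hF := nonneg f
  generalize (∫ x in c..d, ‖v x‖ ^ 2) = A at *
  generalize (∫ x in c..d, ‖v' x‖ ^ 2) = B at *
  generalize (∫ x in c..d, ‖w x‖ ^ 2) = W at *
  generalize (∫ x in c..d, ‖f x‖ ^ 2) = F at *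
  have hE' := mul_le_mul_of_nonneg_left hE hr0.le
  have h1 : r * (r⁻¹ * (A / 4 + F)) = A / 4 + F := by
    field_simp
  have h2 : A ≤ r ^ 3 * A := le_mul_of_one_le_left hA (one_le_pow₀ hr)
  have h3 : 8224 / (d - c) ^ 2 = 4 * (2056 / (d - c) ^ 2) := by ring
  rw [h3]
  linarith

open Filter

/-- Velocity estimate on the Kelvin–Voigt damping region. -/
theorem velocity_estimate_damping_region
    (a b₀ b₁ b₂ : ℝ) (ha : 0 < a) (hb₀ : 0 < b₀) (hb : b₁ < b₂)
    (lam : ℕ → ℝ) (hlampos : ∀ n, 0 < lam n)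
    (hlam : Tendsto lam atTop atTop)
    (u u' v v' f₁ f₁' f₂ w' : ℕ → ℝ → ℂ)
    (hu : ∀ n, ∀ x ∈ Set.Icc b₁ b₂, HasDerivAt (u n) (u' n x) x)
    (hu'c : ∀ n, ContinuousOn (u' n) (Set.Icc b₁ b₂))
    (hv : ∀ n, ∀ x ∈ Set.Icc b₁ b₂, HasDerivAt (v n) (v' n x) x)
    (hv'c : ∀ n, ContinuousOn (v' n) (Set.Icc b₁ b₂))
    (hf₁ : ∀ n, ∀ x ∈ Set.Icc b₁ b₂, HasDerivAt (f₁ n) (f₁' n x) x)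
    (hf₁'c : ∀ n, ContinuousOn (f₁' n) (Set.Icc b₁ b₂))
    (hf₂c : ∀ n, ContinuousOn (f₂ n) (Set.Icc b₁ b₂))
    (hw : ∀ n, ∀ x ∈ Set.Icc b₁ b₂,
      HasDerivAt (fun t => (a : ℂ) * u' n t + (b₀ : ℂ) * v' n t) (w' n x) x)
    (hw'c : ∀ n, ContinuousOn (w' n) (Set.Icc b₁ b₂))
    (heq1 : ∀ n, ∀ x ∈ Set.Icc b₁ b₂,
      Complex.I * lam n * u n x - v n x
        = ((lam n ^ (-(1 : ℝ) / 2) : ℝ) : ℂ) * f₁ n x)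
    (heq2 : ∀ n, ∀ x ∈ Set.Icc b₁ b₂,
      Complex.I * lam n * v n x - w' n x
        = ((lam n ^ (-(1 : ℝ) / 2) : ℝ) : ℂ) * f₂ n x)
    (h1 : Tendsto (fun n => lam n ^ ((1 : ℝ) / 2) * ∫ x in b₁..b₂, ‖v' n x‖ ^ 2)
      atTop (nhds 0))
    (h2 : Tendsto (fun n => lam n ^ ((5 : ℝ) / 2) * ∫ x in b₁..b₂, ‖u' n x‖ ^ 2)
      atTop (nhds 0))
    (h3 : ∃ M : ℝ, ∀ n, (∫ x in b₁..b₂, ‖v n x‖ ^ 2) ≤ M)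
    (h4 : Tendsto (fun n => ∫ x in b₁..b₂, ‖f₁' n x‖ ^ 2) atTop (nhds 0))
    (h5 : Tendsto (fun n => ∫ x in b₁..b₂, ‖f₂ n x‖ ^ 2) atTop (nhds 0)) :
    Tendsto (fun n => lam n ^ ((3 : ℝ) / 2) * ∫ x in b₁..b₂, ‖v n x‖ ^ 2)
      atTop (nhds 0) := by
  have hr : ∀ n, lam n ^ ((1 : ℝ) / 2) = √(lam n) := fun n => (Real.sqrt_eq_rpow _).symm
  have hsq : ∀ n, lam n = √(lam n) ^ 2 := fun n => (Real.sq_sqrt (hlampos n).le).symm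
  have hr3 : ∀ n, lam n ^ ((3 : ℝ) / 2) = √(lam n) ^ 3 := fun n => by
    rw [← hr, ← Real.rpow_natCast, ← Real.rpow_mul (hlampos n).le]
    norm_num
  have hr5 : ∀ n, lam n ^ ((5 : ℝ) / 2) = √(lam n) ^ 5 := fun n => by
    rw [← hr, ← Real.rpow_natCast, ← Real.rpow_mul (hlampos n).le]
    norm_num
  have hrm : ∀ n, lam n ^ (-(1 : ℝ) / 2) = (√(lam n))⁻¹ := fun n => by
    rw [← hr, ← Real.rpow_neg (hlampos n).le]
    norm_num
  simp only [hr, hr3, hr5, hrm] at *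
  have nonneg : ∀ g : ℝ → ℂ, 0 ≤ ∫ x in b₁..b₂, ‖g x‖ ^ 2 := fun g =>
    integral_nonneg hb.le fun x _ => sq_nonneg _
  have hlim := (((h1.const_mul ((b₂ - b₁) ^ 2 / 8 + 1)).add
    (((h2.const_mul (2 * a ^ 2)).add (h1.const_mul (2 * b₀ ^ 2))).const_mul
      (8224 / (b₂ - b₁) ^ 2 + 1))).add (h5.const_mul (9 / 4)))
  simp only [mul_zero, add_zero] at hlim
  refine squeeze_zero' (Eventually.of_forall fun n => ?_) ?_ hlim
  · have := nonneg (v n)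
    positivity
  filter_upwards [hlam.eventually_ge_atTop 1] with n hn
  have hrn : 1 ≤ √(lam n) := Real.one_le_sqrt.2 hn
  have hkey := key_bound (r := √(lam n)) hb hrn (hv n) (hv'c n) (hw n) (hw'c n) (hf₂c n)
    (by rw [← hsq]; exact heq2 n)
  refine hkey.trans ?_
  have iu' := intervalIntegrable_norm_sq hb.le (hu'c n)
  have iv' := intervalIntegrable_norm_sq hb.le (hv'c n)
  have hW : (∫ x in b₁..b₂, ‖(a : ℂ) * u' n x + (b₀ : ℂ) * v' n x‖ ^ 2) ≤
      2 * a ^ 2 * (∫ x in b₁..b₂, ‖u' n x‖ ^ 2)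
      + 2 * b₀ ^ 2 * ∫ x in b₁..b₂, ‖v' n x‖ ^ 2 := by
    rw [← integral_const_mul, ← integral_const_mul,
      ← integral_add (iu'.const_mul _) (iv'.const_mul _)]
    refine integral_mono_on hb.le (intervalIntegrable_norm_sq hb.le
      ((continuousOn_const.mul (hu'c n)).add (continuousOn_const.mul (hv'c n))))
      ((iu'.const_mul _).add (iv'.const_mul _)) fun x _ => ?_
    have e := norm_add_le ((a : ℂ) * u' n x) ((b₀ : ℂ) * v' n x)
    rw [norm_mul, norm_mul, Complex.norm_real, Complex.norm_real, Real.norm_of_nonneg ha.le,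
      Real.norm_of_nonneg hb₀.le] at e
    have e' := pow_le_pow_left₀ (norm_nonneg _) e 2
    nlinarith [sq_nonneg (a * ‖u' n x‖ - b₀ * ‖v' n x‖)]
  have hU : √(lam n) * (∫ x in b₁..b₂, ‖u' n x‖ ^ 2) ≤
      √(lam n) ^ 5 * ∫ x in b₁..b₂, ‖u' n x‖ ^ 2 :=
    mul_le_mul_of_nonneg_right (le_self_pow₀ hrn (by norm_num)) (nonneg _)
  have hW' : √(lam n) * (∫ x in b₁..b₂, ‖(a : ℂ) * u' n x + (b₀ : ℂ) * v' n x‖ ^ 2) ≤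
      2 * a ^ 2 * (√(lam n) ^ 5 * ∫ x in b₁..b₂, ‖u' n x‖ ^ 2)
      + 2 * b₀ ^ 2 * (√(lam n) * ∫ x in b₁..b₂, ‖v' n x‖ ^ 2) := by
    have g1 := mul_le_mul_of_nonneg_left hW (Real.sqrt_nonneg (lam n))
    have g2 := mul_le_mul_of_nonneg_left hU (show 0 ≤ 2 * a ^ 2 by positivity)
    linarith
  gcongr
end

section
/- Let a > 0, b₀ > 0, and real numbers 0 < b₁ < b₂ < c₁. Let (λₙ) be a sequence of positive reals with λₙ → ∞. For each n, let uₙ, vₙ, f₁ₙ : [0,c₁] → ℂ be continuously differentiable, f₂ₙ : [0,c₁] → ℂ continuous, and wₙ : [0,c₁] → ℂ continuous and continuously differentiable on each of (0,b₁), (b₁,b₂), (b₂,c₁), with wₙ(x) = a·uₙ′(x) + b₀·vₙ′(x) for x ∈ (b₁,b₂) and wₙ(x) = a·uₙ′(x) for x ∈ (0,b₁) ∪ (b₂,c₁). Assume on [0,c₁]: iλₙ·uₙ − vₙ = λₙ^{-1/2}·f₁ₙ, and on (0,b₁) ∪ (b₁,b₂) ∪ (b₂,c₁): iλₙ·vₙ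 − wₙ′ = λₙ^{-1/2}·f₂ₙ. Assume further: λₙ^{1/2}·∫_{b₁}^{b₂}|vₙ′|² dx → 0, λₙ^{5/2}·∫_{b₁}^{b₂}|uₙ′|² dx → 0, λₙ^{3/2}·∫_{b₁}^{b₂}|vₙ|² dx → 0, sup_n ∫_0^{c₁}(|vₙ|² + |uₙ′|²) dx < ∞, ∫_0^{c₁}|f₁ₙ′|² dx → 0, and ∫_0^{c₁}|f₂ₙ|² dx → 0 as n → ∞. Then ∫_0^{c₁}(|vₙ|² + a·|uₙ′|²) dx → 0 as n → ∞. -/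
/-!
The energy density `E = ‖v‖² + ‖w‖² / a` is continuous on `[0, c₁]`, and the proof follows it from
the damping region outwards.

On `(b₁, b₂)` both `E` and `E'` are controlled by the damping: `w = a u' + b₀ v'` and
`w' = iλv - λ^{-1/2} f₂`, so Young's inequality with weight `λ^{1/2}`,
`2‖w‖‖w'‖ ≤ λ^{1/2}‖w‖² + λ^{-1/2}‖w'‖²`, bounds `|E'|` by terms whose integrals over `(b₁, b₂)`
tend to zero. Averaging over `(b₁, b₂)` then shows that `E(b₁)` and `E(b₂)` tend to zero
(`trace_le`).

On `(0, b₁)` and `(b₂, c₁)` one has `w = a u'` and `v' = iλu' - λ^{-1/2} f₁'`, and the terms of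
order `λ` cancel in `E'`. What remains is `O(λ^{-1/2})` in `L¹` (`abs_outer_le`), so `E` is
uniformly small there, and `E = ‖v‖² + a‖u'‖²` is the integrand of the conclusion.

`energy_le` combines these into one inequality for a fixed index, in terms of `s = λ^{1/2}`; every
term of its right-hand side tends to zero.
-/

open Filter Set MeasureTheory
open scoped RealInnerProductSpace

namespace Propagation

theorem abs_sub_le_integral {p q : ℝ} {E E' h : ℝ → ℝ}
    (hE : ContinuousOn E (Icc p q)) (hd : ∀ x ∈ Ioo p q, HasDerivAt E (E' x) x)
    (hh : ContinuousOn h (Icc p q)) (hb : ∀ x ∈ Ioo p q, |E' x| ≤ h x)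
    {x y : ℝ} (hx : x ∈ Icc p q) (hy : y ∈ Icc p q) :
    |E x - E y| ≤ ∫ t in p..q, h t := by
  wlog hxy : x ≤ y generalizing x y
  · rw [abs_sub_comm]
    exact this hy hx (le_of_not_ge hxy)
  have hsub : Icc x y ⊆ Icc p q := Icc_subset_Icc hx.1 hy.2
  have hsubo : Ioo x y ⊆ Ioo p q := Ioo_subset_Ioo hx.1 hy.2
  have hint : IntegrableOn h (Icc x y) := (hh.mono hsub).integrableOn_Icc
  have h1 : E y - E x ≤ ∫ t in x..y, h t :=
    intervalIntegral.sub_le_integral_of_hasDeriv_right_of_le hxy (hE.mono hsub)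
      (fun t ht => (hd t (hsubo ht)).hasDerivWithinAt) hint
      (fun t ht => (le_abs_self _).trans (hb t (hsubo ht)))
  have h2 : -E y - -E x ≤ ∫ t in x..y, h t :=
    intervalIntegral.sub_le_integral_of_hasDeriv_right_of_le hxy (hE.mono hsub).neg
      (fun t ht => (hd t (hsubo ht)).neg.hasDerivWithinAt) hint
      (fun t ht => (neg_le_abs _).trans (hb t (hsubo ht)))
  have h3 : ∫ t in x..y, h t ≤ ∫ t in p..q, h t := by
    have hpq : p ≤ q := hx.1.trans hx.2
    refine intervalIntegral.integral_mono_interval hx.1 hxy hy.2 ?_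
      (hh.intervalIntegrable_of_Icc hpq)
    -- the endpoints, where `h` need not be nonnegative a priori, form a null set
    rw [← restrict_Ioo_eq_restrict_Ioc]
    exact (ae_restrict_mem measurableSet_Ioo).mono
      fun t ht => (abs_nonneg _).trans (hb t ht)
  rw [abs_le]
  constructor <;> linarith

/-- A trace inequality: the value of `E` at any point of `[p, q]` is at most its mean plus its
variation. -/
theorem trace_le {p q : ℝ} (hpq : p < q) {E E' h H : ℝ → ℝ}
    (hE : ContinuousOn E (Icc p q)) (hd : ∀ x ∈ Ioo p q, HasDerivAt E (E' x) x)
    (hh : ContinuousOn h (Icc p q)) (hb : ∀ x ∈ Ioo p q, |E' x| ≤ h x)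
    (hH : ContinuousOn H (Icc p q)) (hEH : ∀ x ∈ Ioo p q, E x ≤ H x)
    {x : ℝ} (hx : x ∈ Icc p q) :
    E x ≤ (∫ t in p..q, h t) + (∫ t in p..q, H t) / (q - p) := by
  have key : ∫ _ in p..q, (E x - ∫ t in p..q, h t) ≤ ∫ t in p..q, H t := by
    refine intervalIntegral.integral_mono_on_of_le_Ioo hpq.le
      intervalIntegrable_const (hH.intervalIntegrable_of_Icc hpq.le) fun y hy => ?_
    have := (abs_le.1 (abs_sub_le_integral hE hd hh hb hx (Ioo_subset_Icc_self hy))).2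
    linarith [hEH y hy]
  rw [intervalIntegral.integral_const, smul_eq_mul] at key
  have hpos : 0 < q - p := sub_pos.2 hpq
  have := (le_div_iff₀' hpos).2 key
  linarith

theorem integral_le_of_bound {p q : ℝ} (hpq : p ≤ q) {E E' h g : ℝ → ℝ}
    (hE : ContinuousOn E (Icc p q)) (hd : ∀ x ∈ Ioo p q, HasDerivAt E (E' x) x)
    (hh : ContinuousOn h (Icc p q)) (hb : ∀ x ∈ Ioo p q, |E' x| ≤ h x)
    (hg : ContinuousOn g (Icc p q)) (hgE : ∀ x ∈ Ioo p q, g x = E x)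
    {x : ℝ} (hx : x ∈ Icc p q) :
    ∫ t in p..q, g t ≤ (q - p) * (E x + ∫ t in p..q, h t) := by
  rw [← smul_eq_mul, ← intervalIntegral.integral_const]
  refine intervalIntegral.integral_mono_on_of_le_Ioo hpq
    (hg.intervalIntegrable_of_Icc hpq) intervalIntegrable_const fun y hy => ?_
  have := (abs_le.1 (abs_sub_le_integral hE hd hh hb hx (Ioo_subset_Icc_self hy))).1
  rw [hgE y hy]
  linarith

theorem two_mul_abs_inner_le (x y : ℂ) : 2 * |⟪x, y⟫| ≤ ‖x‖ ^ 2 + ‖y‖ ^ 2 := by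
  nlinarith [abs_real_inner_le_norm x y, two_mul_le_add_sq ‖x‖ ‖y‖]

theorem two_mul_abs_inner_le_weighted {s : ℝ} (hs : 0 < s) (x y : ℂ) :
    2 * |⟪x, y⟫| ≤ s * ‖x‖ ^ 2 + s⁻¹ * ‖y‖ ^ 2 := by
  have h : 2 * (‖x‖ * ‖y‖) ≤ s * ‖x‖ ^ 2 + s⁻¹ * ‖y‖ ^ 2 := by
    have : s * ‖x‖ ^ 2 + s⁻¹ * ‖y‖ ^ 2 - 2 * (‖x‖ * ‖y‖) = s⁻¹ * (s * ‖x‖ - ‖y‖) ^ 2 := by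
      field_simp
      ring
    have h0 : 0 ≤ s⁻¹ * (s * ‖x‖ - ‖y‖) ^ 2 := by positivity
    linarith
  linarith [abs_real_inner_le_norm x y]

theorem norm_add_sq_le (x y : ℂ) : ‖x + y‖ ^ 2 ≤ 2 * ‖x‖ ^ 2 + 2 * ‖y‖ ^ 2 := by
  nlinarith [norm_add_le x y, norm_nonneg (x + y), sq_nonneg (‖x‖ - ‖y‖)]

theorem norm_sub_sq_le (x y : ℂ) : ‖x - y‖ ^ 2 ≤ 2 * ‖x‖ ^ 2 + 2 * ‖y‖ ^ 2 := by
  simpa [sub_eq_add_neg] using norm_add_sq_le x (-y)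

/-- Outside the damping region the terms of order `λ = s²` cancel in the derivative of
`‖v‖² + ‖w‖² / a`, because multiplication by `i` is skew-adjoint. -/
theorem abs_outer_le {a s : ℝ} (ha : 0 < a) (hs : 0 < s) (V U F G : ℂ) :
    |2 * ⟪V, Complex.I * ((s ^ 2 : ℝ) : ℂ) * U - ((s⁻¹ : ℝ) : ℂ) * F⟫
      + 2 * ⟪(a : ℂ) * U, Complex.I * ((s ^ 2 : ℝ) : ℂ) * V - ((s⁻¹ : ℝ) : ℂ) * G⟫ / a|
      ≤ s⁻¹ * (‖V‖ ^ 2 + ‖U‖ ^ 2 + ‖F‖ ^ 2 + ‖G‖ ^ 2) := by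
  have e : 2 * ⟪V, Complex.I * ((s ^ 2 : ℝ) : ℂ) * U - ((s⁻¹ : ℝ) : ℂ) * F⟫
      + 2 * ⟪(a : ℂ) * U, Complex.I * ((s ^ 2 : ℝ) : ℂ) * V - ((s⁻¹ : ℝ) : ℂ) * G⟫ / a
      = s⁻¹ * (-(2 * ⟪V, F⟫) - 2 * ⟪U, G⟫) := by
    simp only [Complex.inner, Complex.mul_re, Complex.mul_im, Complex.sub_re, Complex.sub_im,
      Complex.conj_re, Complex.conj_im, Complex.ofReal_re, Complex.ofReal_im, Complex.I_re,
      Complex.I_im]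
    field_simp
    ring
  rw [e, abs_mul, abs_of_pos (inv_pos.2 hs)]
  refine mul_le_mul_of_nonneg_left ?_ (inv_pos.2 hs).le
  have h1 := two_mul_abs_inner_le V F
  have h2 := two_mul_abs_inner_le U G
  rw [abs_le]
  constructor <;>
    linarith [le_abs_self ⟪V, F⟫, neg_abs_le ⟪V, F⟫, le_abs_self ⟪U, G⟫, neg_abs_le ⟪U, G⟫]

/-- In the damping region, Young's inequality with weight `s = λ^{1/2}` bounds the derivative of
`‖v‖² + ‖w‖² / a`, where `w = a U + b₀ V'` and `w' = iλV - λ^{-1/2} G`. -/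
theorem abs_mid_le {a b₀ s : ℝ} (ha : 0 < a) (hs : 0 < s) (V V' U G : ℂ) :
    |2 * ⟪V, V'⟫ + 2 * ⟪(a : ℂ) * U + (b₀ : ℂ) * V',
        Complex.I * ((s ^ 2 : ℝ) : ℂ) * V - ((s⁻¹ : ℝ) : ℂ) * G⟫ / a|
      ≤ (s + 2 * s ^ 3 / a) * ‖V‖ ^ 2 + (s⁻¹ + 2 * b₀ ^ 2 * s / a) * ‖V'‖ ^ 2
        + 2 * a * s * ‖U‖ ^ 2 + 2 * s⁻¹ ^ 3 / a * ‖G‖ ^ 2 := by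
  set W := (a : ℂ) * U + (b₀ : ℂ) * V' with hW
  set W' := Complex.I * ((s ^ 2 : ℝ) : ℂ) * V - ((s⁻¹ : ℝ) : ℂ) * G with hW'
  have h1 := two_mul_abs_inner_le_weighted hs V V'
  have h2 := two_mul_abs_inner_le_weighted hs W W'
  have h3 : ‖W‖ ^ 2 ≤ 2 * (a ^ 2 * ‖U‖ ^ 2) + 2 * (b₀ ^ 2 * ‖V'‖ ^ 2) := by
    simpa [mul_pow] using norm_add_sq_le ((a : ℂ) * U) ((b₀ : ℂ) * V')
  have h4 : ‖W'‖ ^ 2 ≤ 2 * ((s ^ 2) ^ 2 * ‖V‖ ^ 2) + 2 * (s⁻¹ ^ 2 * ‖G‖ ^ 2) := by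
    have h := norm_sub_sq_le (Complex.I * ((s ^ 2 : ℝ) : ℂ) * V) (((s⁻¹ : ℝ) : ℂ) * G)
    rw [← hW', norm_mul, norm_mul, norm_mul, Complex.norm_I, Complex.norm_real,
      Complex.norm_real, Real.norm_of_nonneg (sq_nonneg s),
      Real.norm_of_nonneg (inv_pos.2 hs).le, one_mul, mul_pow, mul_pow] at h
    exact h
  have h5 : 2 * |⟪W, W'⟫| ≤ s * (2 * (a ^ 2 * ‖U‖ ^ 2) + 2 * (b₀ ^ 2 * ‖V'‖ ^ 2))
      + s⁻¹ * (2 * ((s ^ 2) ^ 2 * ‖V‖ ^ 2) + 2 * (s⁻¹ ^ 2 * ‖G‖ ^ 2)) := by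
    refine h2.trans ?_
    gcongr
  have h6 : |2 * ⟪V, V'⟫ + 2 * ⟪W, W'⟫ / a| ≤ 2 * |⟪V, V'⟫| + 2 * |⟪W, W'⟫| / a := by
    refine (abs_add_le _ _).trans_eq ?_
    rw [abs_div, abs_mul, abs_mul, abs_of_pos ha, abs_two]
  have h7 := div_le_div_of_nonneg_right h5 ha.le
  refine h6.trans ((add_le_add h1 h7).trans_eq ?_)
  field_simp
  ring

/-- The quantitative estimate for one index, where `s = λ^{1/2}` and `f` stands for `f₁'`. -/
theorem energy_le {a b₀ b₁ b₂ c₁ s : ℝ} (ha : 0 < a) (h0b : 0 < b₁) (hb : b₁ < b₂)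
    (hbc : b₂ < c₁) (hs : 0 < s) {u' v v' f f₂ w w' : ℝ → ℂ}
    (hu'c : ContinuousOn u' (Icc 0 c₁))
    (hv : ∀ x ∈ Icc 0 c₁, HasDerivAt v (v' x) x) (hv'c : ContinuousOn v' (Icc 0 c₁))
    (hfc : ContinuousOn f (Icc 0 c₁)) (hf₂c : ContinuousOn f₂ (Icc 0 c₁))
    (hwc : ContinuousOn w (Icc 0 c₁))
    (hw : ∀ x ∈ Ioo 0 b₁ ∪ Ioo b₁ b₂ ∪ Ioo b₂ c₁, HasDerivAt w (w' x) x)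
    (hwmid : ∀ x ∈ Ioo b₁ b₂, w x = (a : ℂ) * u' x + (b₀ : ℂ) * v' x)
    (hwout : ∀ x ∈ Ioo 0 b₁ ∪ Ioo b₂ c₁, w x = (a : ℂ) * u' x)
    (heq1 : ∀ x ∈ Ioo 0 c₁, v' x = Complex.I * ((s ^ 2 : ℝ) : ℂ) * u' x
      - ((s⁻¹ : ℝ) : ℂ) * f x)
    (heq2 : ∀ x ∈ Ioo 0 b₁ ∪ Ioo b₁ b₂ ∪ Ioo b₂ c₁,
      w' x = Complex.I * ((s ^ 2 : ℝ) : ℂ) * v x - ((s⁻¹ : ℝ) : ℂ) * f₂ x)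
    {A B C M F G : ℝ}
    (hA : ∫ x in b₁..b₂, ‖v x‖ ^ 2 = A) (hB : ∫ x in b₁..b₂, ‖v' x‖ ^ 2 = B)
    (hC : ∫ x in b₁..b₂, ‖u' x‖ ^ 2 = C)
    (hM : ∫ x in (0 : ℝ)..c₁, (‖v x‖ ^ 2 + ‖u' x‖ ^ 2) ≤ M)
    (hF : ∫ x in (0 : ℝ)..c₁, ‖f x‖ ^ 2 = F) (hG : ∫ x in (0 : ℝ)..c₁, ‖f₂ x‖ ^ 2 = G) :
    ∫ x in (0 : ℝ)..c₁, (‖v x‖ ^ 2 + a * ‖u' x‖ ^ 2) ≤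
      (b₁ + (c₁ - b₂)) * ((s + 2 * s ^ 3 / a) * A + (s⁻¹ + 2 * b₀ ^ 2 * s / a) * B
          + 2 * a * s * C + 2 * s⁻¹ ^ 3 / a * G
          + (A + 2 * b₀ ^ 2 / a * B + 2 * a * C) / (b₂ - b₁)
          + s⁻¹ * (M + F + G)) + (A + a * C) := by
  have hsub1 : Icc 0 b₁ ⊆ Icc 0 c₁ := Icc_subset_Icc le_rfl (by linarith)
  have hsub2 : Icc b₁ b₂ ⊆ Icc 0 c₁ := Icc_subset_Icc h0b.le hbc.le
  have hsub3 : Icc b₂ c₁ ⊆ Icc 0 c₁ := Icc_subset_Icc (by linarith) le_rfl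
  have h0c : 0 < c₁ := by linarith
  have hvc : ContinuousOn v (Icc 0 c₁) := fun x hx => (hv x hx).continuousAt.continuousWithinAt
  have cv : ContinuousOn (fun x => ‖v x‖ ^ 2) (Icc 0 c₁) := hvc.norm.pow 2
  have cv' : ContinuousOn (fun x => ‖v' x‖ ^ 2) (Icc 0 c₁) := hv'c.norm.pow 2
  have cu : ContinuousOn (fun x => ‖u' x‖ ^ 2) (Icc 0 c₁) := hu'c.norm.pow 2
  have cf : ContinuousOn (fun x => ‖f x‖ ^ 2) (Icc 0 c₁) := hfc.norm.pow 2
  have cg : ContinuousOn (fun x => ‖f₂ x‖ ^ 2) (Icc 0 c₁) := hf₂c.norm.pow 2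
  have ii : ∀ {k : ℝ → ℝ} {p q : ℝ}, ContinuousOn k (Icc 0 c₁) → p ≤ q → Icc p q ⊆ Icc 0 c₁ →
      IntervalIntegrable k volume p q :=
    fun hk hpq hsub => (hk.mono hsub).intervalIntegrable_of_Icc hpq
  set E : ℝ → ℝ := fun x => ‖v x‖ ^ 2 + ‖w x‖ ^ 2 / a with hEdef
  set E' : ℝ → ℝ := fun x => 2 * ⟪v x, v' x⟫ + 2 * ⟪w x, w' x⟫ / a with hE'def
  set g : ℝ → ℝ := fun x => ‖v x‖ ^ 2 + a * ‖u' x‖ ^ 2 with hgdef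
  set k : ℝ → ℝ := fun x => s⁻¹ * (‖v x‖ ^ 2 + ‖u' x‖ ^ 2 + ‖f x‖ ^ 2 + ‖f₂ x‖ ^ 2) with hkdef
  set h : ℝ → ℝ := fun x => (s + 2 * s ^ 3 / a) * ‖v x‖ ^ 2
      + (s⁻¹ + 2 * b₀ ^ 2 * s / a) * ‖v' x‖ ^ 2
      + 2 * a * s * ‖u' x‖ ^ 2 + 2 * s⁻¹ ^ 3 / a * ‖f₂ x‖ ^ 2 with hhdef
  set H : ℝ → ℝ := fun x => ‖v x‖ ^ 2 + 2 * b₀ ^ 2 / a * ‖v' x‖ ^ 2 + 2 * a * ‖u' x‖ ^ 2 with hHdef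
  have hEc : ContinuousOn E (Icc 0 c₁) := cv.add ((hwc.norm.pow 2).div_const a)
  have hgc : ContinuousOn g (Icc 0 c₁) := cv.add (cu.const_mul a)
  have hkc : ContinuousOn k (Icc 0 c₁) := (((cv.add cu).add cf).add cg).const_mul _
  have hhc : ContinuousOn h (Icc 0 c₁) :=
    (((cv.const_mul _).add (cv'.const_mul _)).add (cu.const_mul _)).add (cg.const_mul _)
  have hHc : ContinuousOn H (Icc 0 c₁) := (cv.add (cv'.const_mul _)).add (cu.const_mul _)
  have hEd : ∀ x ∈ Ioo 0 b₁ ∪ Ioo b₁ b₂ ∪ Ioo b₂ c₁, HasDerivAt E (E' x) x := by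
    intro x hx
    have hxI : x ∈ Icc 0 c₁ := by
      rcases hx with (hx | hx) | hx <;> constructor <;> linarith [hx.1, hx.2]
    exact (hv x hxI).norm_sq.add ((hw x hx).norm_sq.div_const a)
  have hout : ∀ x ∈ Ioo 0 b₁ ∪ Ioo b₂ c₁, |E' x| ≤ k x ∧ g x = E x := by
    intro x hx
    have hxI : x ∈ Ioo 0 c₁ := by
      rcases hx with hx | hx <;> constructor <;> linarith [hx.1, hx.2]
    have hxU : x ∈ Ioo 0 b₁ ∪ Ioo b₁ b₂ ∪ Ioo b₂ c₁ := by
      rcases hx with hx | hx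
      · exact Or.inl (Or.inl hx)
      · exact Or.inr hx
    constructor
    · simp only [hE'def, hkdef]
      rw [heq1 x hxI, heq2 x hxU, hwout x hx]
      exact abs_outer_le ha hs _ _ _ _
    · simp only [hEdef, hgdef]
      rw [hwout x hx, norm_mul, Complex.norm_real, Real.norm_of_nonneg ha.le]
      field_simp
  have hmid : ∀ x ∈ Ioo b₁ b₂, |E' x| ≤ h x ∧ E x ≤ H x := by
    intro x hx
    constructor
    · simp only [hE'def, hhdef]
      rw [heq2 x (Or.inl (Or.inr hx)), hwmid x hx]
      exact abs_mid_le ha hs _ _ _ _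
    · simp only [hEdef, hHdef]
      have h3 : ‖w x‖ ^ 2 ≤ 2 * (a ^ 2 * ‖u' x‖ ^ 2) + 2 * (b₀ ^ 2 * ‖v' x‖ ^ 2) := by
        rw [hwmid x hx]
        simpa [mul_pow] using norm_add_sq_le ((a : ℂ) * u' x) ((b₀ : ℂ) * v' x)
      have h4 := div_le_div_of_nonneg_right h3 ha.le
      have h5 : (2 * (a ^ 2 * ‖u' x‖ ^ 2) + 2 * (b₀ ^ 2 * ‖v' x‖ ^ 2)) / a
          = 2 * b₀ ^ 2 / a * ‖v' x‖ ^ 2 + 2 * a * ‖u' x‖ ^ 2 := by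
        field_simp
        ring
      linarith
  have hk0 : ∀ x, 0 ≤ k x := fun x => by simp only [hkdef]; positivity
  have hkint : ∫ x in (0 : ℝ)..c₁, k x ≤ s⁻¹ * (M + F + G) := by
    simp only [hkdef]
    rw [intervalIntegral.integral_const_mul, intervalIntegral.integral_add,
      intervalIntegral.integral_add, hF, hG]
    · gcongr
    · exact ii (cv.add cu) h0c.le subset_rfl
    · exact ii cf h0c.le subset_rfl
    · exact ii ((cv.add cu).add cf) h0c.le subset_rfl
    · exact ii cg h0c.le subset_rfl
  have hkpart : ∀ {p q : ℝ}, 0 ≤ p → p ≤ q → q ≤ c₁ →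
      ∫ x in p..q, k x ≤ s⁻¹ * (M + F + G) := fun hp hpq hq =>
    (intervalIntegral.integral_mono_interval hp hpq hq (Eventually.of_forall hk0)
      (ii hkc h0c.le subset_rfl)).trans hkint
  have hGmid : ∫ x in b₁..b₂, ‖f₂ x‖ ^ 2 ≤ G := hG ▸
    intervalIntegral.integral_mono_interval h0b.le hb.le hbc.le
      (Eventually.of_forall fun x => by positivity) (ii cg h0c.le subset_rfl)
  have hhint : ∫ x in b₁..b₂, h x ≤ (s + 2 * s ^ 3 / a) * A + (s⁻¹ + 2 * b₀ ^ 2 * s / a) * B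
          + 2 * a * s * C + 2 * s⁻¹ ^ 3 / a * G := by
    simp only [hhdef]
    rw [intervalIntegral.integral_add, intervalIntegral.integral_add,
      intervalIntegral.integral_add]
    · simp only [intervalIntegral.integral_const_mul, hA, hB, hC]
      gcongr
    all_goals refine ii ?_ hb.le hsub2
    · exact cv.const_mul _
    · exact cv'.const_mul _
    · exact (cv.const_mul _).add (cv'.const_mul _)
    · exact cu.const_mul _
    · exact ((cv.const_mul _).add (cv'.const_mul _)).add (cu.const_mul _)
    · exact cg.const_mul _
  have hHint : ∫ x in b₁..b₂, H x = A + 2 * b₀ ^ 2 / a * B + 2 * a * C := by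
    simp only [hHdef]
    rw [intervalIntegral.integral_add, intervalIntegral.integral_add]
    · simp only [intervalIntegral.integral_const_mul, hA, hB, hC]
    all_goals refine ii ?_ hb.le hsub2
    · exact cv
    · exact cv'.const_mul _
    · exact cv.add (cv'.const_mul _)
    · exact cu.const_mul _
  have hgmid : ∫ x in b₁..b₂, g x = A + a * C := by
    simp only [hgdef]
    rw [intervalIntegral.integral_add (ii cv hb.le hsub2) (ii (cu.const_mul a) hb.le hsub2),
      intervalIntegral.integral_const_mul, hA, hC]
  have htrace : ∀ x ∈ Icc b₁ b₂, E x ≤ (∫ t in b₁..b₂, h t) + (∫ t in b₁..b₂, H t) / (b₂ - b₁) :=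
    fun x hx => trace_le hb (hEc.mono hsub2) (fun y hy => hEd y (Or.inl (Or.inr hy)))
      (hhc.mono hsub2) (fun y hy => (hmid y hy).1) (hHc.mono hsub2)
      (fun y hy => (hmid y hy).2) hx
  have t1 := htrace b₁ (left_mem_Icc.2 hb.le)
  have t2 := htrace b₂ (right_mem_Icc.2 hb.le)
  have o1 : ∫ t in (0 : ℝ)..b₁, g t ≤ (b₁ - 0) * (E b₁ + ∫ t in (0 : ℝ)..b₁, k t) :=
    integral_le_of_bound h0b.le (hEc.mono hsub1) (fun y hy => hEd y (Or.inl (Or.inl hy)))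
      (hkc.mono hsub1) (fun y hy => (hout y (Or.inl hy)).1) (hgc.mono hsub1)
      (fun y hy => (hout y (Or.inl hy)).2) (right_mem_Icc.2 h0b.le)
  have o2 : ∫ t in b₂..c₁, g t ≤ (c₁ - b₂) * (E b₂ + ∫ t in b₂..c₁, k t) :=
    integral_le_of_bound hbc.le (hEc.mono hsub3) (fun y hy => hEd y (Or.inr hy))
      (hkc.mono hsub3) (fun y hy => (hout y (Or.inr hy)).1) (hgc.mono hsub3)
      (fun y hy => (hout y (Or.inr hy)).2) (left_mem_Icc.2 hbc.le)
  rw [hHint] at t1 t2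
  have k1 := hkpart le_rfl h0b.le (hb.le.trans hbc.le)
  have k2 := hkpart (h0b.le.trans hb.le) hbc.le le_rfl
  have p1 := o1.trans (mul_le_mul_of_nonneg_left
    (add_le_add (t1.trans (add_le_add_left hhint _)) k1) (by linarith : 0 ≤ b₁ - 0))
  have p2 := o2.trans (mul_le_mul_of_nonneg_left
    (add_le_add (t2.trans (add_le_add_left hhint _)) k2) (by linarith : 0 ≤ c₁ - b₂))
  rw [← intervalIntegral.integral_add_adjacent_intervals
      (ii hgc (hb.le.trans' h0b.le) (Icc_subset_Icc le_rfl hbc.le)) (ii hgc hbc.le hsub3),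
    ← intervalIntegral.integral_add_adjacent_intervals (ii hgc h0b.le hsub1)
      (ii hgc hb.le hsub2), hgmid]
  linarith

end Propagation

/-- Propagation of smallness from the damping region `(b₁,b₂)` to
the whole interval `(0,c₁)` left of the coupling region. -/
theorem propagation_estimate_left_interval
    (a b₀ b₁ b₂ c₁ : ℝ) (ha : 0 < a) (hb₀ : 0 < b₀)
    (h0b : 0 < b₁) (hb : b₁ < b₂) (hbc : b₂ < c₁)
    (lam : ℕ → ℝ) (hlampos : ∀ n, 0 < lam n)
    (hlam : Tendsto lam atTop atTop)
    (u u' v v' f₁ f₁' f₂ w w' : ℕ → ℝ → ℂ)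
    (hu : ∀ n, ∀ x ∈ Set.Icc 0 c₁, HasDerivAt (u n) (u' n x) x)
    (hu'c : ∀ n, ContinuousOn (u' n) (Set.Icc 0 c₁))
    (hv : ∀ n, ∀ x ∈ Set.Icc 0 c₁, HasDerivAt (v n) (v' n x) x)
    (hv'c : ∀ n, ContinuousOn (v' n) (Set.Icc 0 c₁))
    (hf₁ : ∀ n, ∀ x ∈ Set.Icc 0 c₁, HasDerivAt (f₁ n) (f₁' n x) x)
    (hf₁'c : ∀ n, ContinuousOn (f₁' n) (Set.Icc 0 c₁))
    (hf₂c : ∀ n, ContinuousOn (f₂ n) (Set.Icc 0 c₁))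
    (hwc : ∀ n, ContinuousOn (w n) (Set.Icc 0 c₁))
    (hw : ∀ n, ∀ x ∈ Set.Ioo 0 b₁ ∪ Set.Ioo b₁ b₂ ∪ Set.Ioo b₂ c₁,
      HasDerivAt (w n) (w' n x) x)
    (hw'c : ∀ n, ContinuousOn (w' n)
      (Set.Ioo 0 b₁ ∪ Set.Ioo b₁ b₂ ∪ Set.Ioo b₂ c₁))
    (hwmid : ∀ n, ∀ x ∈ Set.Ioo b₁ b₂,
      w n x = (a : ℂ) * u' n x + (b₀ : ℂ) * v' n x)
    (hwout : ∀ n, ∀ x ∈ Set.Ioo 0 b₁ ∪ Set.Ioo b₂ c₁, w n x = (a : ℂ) * u' n x)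
    (heq1 : ∀ n, ∀ x ∈ Set.Icc 0 c₁,
      Complex.I * lam n * u n x - v n x
        = ((lam n ^ (-(1 : ℝ) / 2) : ℝ) : ℂ) * f₁ n x)
    (heq2 : ∀ n, ∀ x ∈ Set.Ioo 0 b₁ ∪ Set.Ioo b₁ b₂ ∪ Set.Ioo b₂ c₁,
      Complex.I * lam n * v n x - w' n x
        = ((lam n ^ (-(1 : ℝ) / 2) : ℝ) : ℂ) * f₂ n x)
    (h1 : Tendsto (fun n => lam n ^ ((1 : ℝ) / 2) * ∫ x in b₁..b₂, ‖v' n x‖ ^ 2)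
      atTop (nhds 0))
    (h2 : Tendsto (fun n => lam n ^ ((5 : ℝ) / 2) * ∫ x in b₁..b₂, ‖u' n x‖ ^ 2)
      atTop (nhds 0))
    (h3 : Tendsto (fun n => lam n ^ ((3 : ℝ) / 2) * ∫ x in b₁..b₂, ‖v n x‖ ^ 2)
      atTop (nhds 0))
    (h4 : ∃ M : ℝ, ∀ n, (∫ x in (0:ℝ)..c₁, (‖v n x‖ ^ 2 + ‖u' n x‖ ^ 2)) ≤ M)
    (h5 : Tendsto (fun n => ∫ x in (0:ℝ)..c₁, ‖f₁' n x‖ ^ 2) atTop (nhds 0))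
    (h6 : Tendsto (fun n => ∫ x in (0:ℝ)..c₁, ‖f₂ n x‖ ^ 2) atTop (nhds 0)) :
    Tendsto (fun n => ∫ x in (0:ℝ)..c₁, (‖v n x‖ ^ 2 + a * ‖u' n x‖ ^ 2))
      atTop (nhds 0) := by
  obtain ⟨M, hM⟩ := h4
  set s : ℕ → ℝ := fun n => lam n ^ ((1 : ℝ) / 2) with hsdef
  have hs : ∀ n, 0 < s n := fun n => Real.rpow_pos_of_pos (hlampos n) _
  have hpow : ∀ n (m : ℕ), lam n ^ ((m : ℝ) / 2) = s n ^ m := fun n m => by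
    rw [hsdef, ← Real.rpow_natCast, ← Real.rpow_mul (hlampos n).le]
    congr 1
    ring
  have hs2 : ∀ n, lam n = s n ^ 2 := fun n => by
    rw [← hpow n 2]
    norm_num
  have hsinv : ∀ n, lam n ^ (-(1 : ℝ) / 2) = (s n)⁻¹ := fun n => by
    rw [hsdef, ← Real.rpow_neg (hlampos n).le]
    congr 1
    ring
  have hst : Tendsto s atTop atTop :=
    (tendsto_rpow_atTop (by norm_num : (0 : ℝ) < 1 / 2)).comp hlam
  have hr : Tendsto (fun n => (s n)⁻¹) atTop (nhds 0) := hst.inv_tendsto_atTop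
  set A : ℕ → ℝ := fun n => ∫ x in b₁..b₂, ‖v n x‖ ^ 2 with hAdef
  set B : ℕ → ℝ := fun n => ∫ x in b₁..b₂, ‖v' n x‖ ^ 2 with hBdef
  set C : ℕ → ℝ := fun n => ∫ x in b₁..b₂, ‖u' n x‖ ^ 2 with hCdef
  set F : ℕ → ℝ := fun n => ∫ x in (0:ℝ)..c₁, ‖f₁' n x‖ ^ 2 with hFdef
  set G : ℕ → ℝ := fun n => ∫ x in (0:ℝ)..c₁, ‖f₂ n x‖ ^ 2 with hGdef
  have sB : Tendsto (fun n => s n * B n) atTop (nhds 0) := h1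
  have s5C : Tendsto (fun n => s n ^ 5 * C n) atTop (nhds 0) :=
    h2.congr fun n => by rw [← hpow n 5]; norm_num; exact Or.inl rfl
  have s3A : Tendsto (fun n => s n ^ 3 * A n) atTop (nhds 0) :=
    h3.congr fun n => by rw [← hpow n 3]; norm_num; exact Or.inl rfl
  have sA : Tendsto (fun n => s n * A n) atTop (nhds 0) := by
    have := (hr.pow 2).mul s3A
    refine (this.congr fun n => ?_).trans_eq (by simp)
    have := (hs n).ne'
    field_simp
  have sC : Tendsto (fun n => s n * C n) atTop (nhds 0) := by
    have := (hr.pow 4).mul s5C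
    refine (this.congr fun n => ?_).trans_eq (by simp)
    have := (hs n).ne'
    field_simp
  have drop : ∀ {X : ℕ → ℝ}, Tendsto (fun n => s n * X n) atTop (nhds 0) →
      Tendsto X atTop (nhds 0) := fun {X} hX => by
    refine ((hr.mul hX).congr fun n => ?_).trans_eq (by simp)
    have := (hs n).ne'
    field_simp
  have tA := drop sA
  have tB := drop sB
  have tC := drop sC
  have lim : Tendsto (fun n => (b₁ + (c₁ - b₂)) *
      (s n * A n + 2 / a * (s n ^ 3 * A n) + (s n)⁻¹ * B n + 2 * b₀ ^ 2 / a * (s n * B n)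
          + 2 * a * (s n * C n) + 2 / a * ((s n)⁻¹ ^ 3 * G n)
          + (A n + 2 * b₀ ^ 2 / a * B n + 2 * a * C n) / (b₂ - b₁)
          + (s n)⁻¹ * (M + F n + G n)) + (A n + a * C n)) atTop (nhds 0) := by
    have hm : Tendsto (fun _ : ℕ => M) atTop (nhds M) := tendsto_const_nhds
    have := (((((((((sA.add (s3A.const_mul (2 / a))).add (hr.mul tB)).add
      (sB.const_mul (2 * b₀ ^ 2 / a))).add (sC.const_mul (2 * a))).add
      (((hr.pow 3).mul h6).const_mul (2 / a))).add
      (((tA.add (tB.const_mul (2 * b₀ ^ 2 / a))).add (tC.const_mul (2 * a))).div_const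
        (b₂ - b₁))).add (hr.mul ((hm.add h5).add h6))).const_mul (b₁ + (c₁ - b₂))).add
      (tA.add (tC.const_mul a)))
    exact this.trans_eq (by simp)
  refine squeeze_zero (fun n => ?_) (fun n => ?_) lim
  · exact intervalIntegral.integral_nonneg (by linarith) fun x _ => by positivity
  -- differentiating the first resolvent equation
  have hd : ∀ x ∈ Set.Ioo 0 c₁, v' n x = Complex.I * ((s n ^ 2 : ℝ) : ℂ) * u' n x
      - (((s n)⁻¹ : ℝ) : ℂ) * f₁' n x := by
    intro x hx
    have hxI := Set.Ioo_subset_Icc_self hx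
    have d1 : HasDerivAt (fun y => Complex.I * lam n * u n y
        - ((lam n ^ (-(1 : ℝ) / 2) : ℝ) : ℂ) * f₁ n y)
        (Complex.I * lam n * u' n x - ((lam n ^ (-(1 : ℝ) / 2) : ℝ) : ℂ) * f₁' n x) x :=
      ((hu n x hxI).const_mul _).sub ((hf₁ n x hxI).const_mul _)
    have d2 := d1.congr_of_eventuallyEq (f₁ := v n) <| by
      filter_upwards [Icc_mem_nhds hx.1 hx.2] with y hy
      rw [← heq1 n y hy]
      ring
    rw [← hs2, ← hsinv]
    exact (hv n x hxI).unique d2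
  have := Propagation.energy_le (b₀ := b₀) ha h0b hb hbc (hs n) (hu'c n) (hv n) (hv'c n)
    (hf₁'c n) (hf₂c n) (hwc n) (hw n) (hwmid n) (hwout n) hd
    (fun x hx => by
      rw [← hs2, ← hsinv, ← heq2 n x hx]
      ring)
    (A := A n) (B := B n) (C := C n) (F := F n) (G := G n) rfl rfl rfl (hM n) rfl rfl
  refine this.trans_eq ?_
  ring
end

section
/- Let a > 0 and real numbers b₂ < c₁. Let (λₙ) be a sequence of positive reals with λₙ → ∞. For each n, let uₙ : [b₂,c₁] → ℂ be twice continuously differentiable, f₁ₙ : [b₂,c₁] → ℂ continuously differentiable, and f₂ₙ : [b₂,c₁] → ℂ continuous, satisfying λₙ²·uₙ(x) + a·uₙ″(x) = −λₙ^{-1/2}·f₂ₙ(x) − i·λₙ^{1/2}·f₁ₙ(x) for all x ∈ [b₂,c₁]. Assume: ∫_{b₂}^{c₁}(λₙ²|uₙ|² + |uₙ′|²) dx → 0 as n → ∞, sup_n sup_{x∈[b₂,c₁]}|f₁ₙ(x)| < ∞, and sup_n ∫_{b₂}^{c₁}(|f₁ₙ|² + |f₁ₙ′|² + |f₂ₙ|²)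 dx < ∞. Then λₙ·uₙ(c₁) → 0 and uₙ′(c₁) → 0 as n → ∞. -/
open Filter

/-!
The proof is a multiplier argument for a corrected energy density. Fix `n`, write `l = lam n`,
`s = l ^ (-1/2)`, so that `l ^ (1/2) = l * s`, and put
`h = l² ‖u‖² + a ‖u'‖² + 2 Re (i l s f₁ ū)`.
The correction term is chosen so that, after substituting the equation, the badly scaled product
`l s f₁ ū'` cancels in `h'`, leaving `h' = 2 Re (-s f₂ ū') + 2 Re (i l s f₁' ū)`. Hence
`|h'| ≤ s (E + F)` pointwise, where `E = l² ‖u‖² + ‖u'‖²` and `F = ‖f₁‖² + ‖f₁'‖² + ‖f₂‖²`, while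
`h ≤ (1 + a) E + s (E + F)`. Integrating the derivative of `(x - b₂) h` bounds `h c₁` by integrals
of `E` and `s (E + F)`. Since the correction term at `c₁` can be absorbed into `l² ‖u c₁‖² / 2` up
to `2 M² s²`, this gives the explicit bound of `trace_bound`, whose right-hand side tends to zero.
-/

/-- The corrected energy density: `2 Re (i l s f₁ ū)` is written as a real inner product. -/
noncomputable def energyDensity (a l s : ℝ) (u u' f : ℝ → ℂ) (x : ℝ) : ℝ :=
  l ^ 2 * ‖u x‖ ^ 2 + a * ‖u' x‖ ^ 2 + 2 * inner ℝ (u x) (Complex.I * (l * s : ℝ) * f x)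

/-- The derivative of the energy density: the equation cancels all terms containing `f₁`. -/
lemma hasDerivAt_energyDensity {a l s x : ℝ} {u u' u'' f₁ f₁' f₂ : ℝ → ℂ}
    (hu : HasDerivAt u (u' x) x) (hu' : HasDerivAt u' (u'' x) x)
    (hf₁ : HasDerivAt f₁ (f₁' x) x)
    (heq : (l : ℂ) ^ 2 * u x + (a : ℂ) * u'' x
      = -(s : ℂ) * f₂ x - Complex.I * ((l * s : ℝ) : ℂ) * f₁ x) :
    HasDerivAt (energyDensity a l s u u' f₁)
      (2 * inner ℝ (u' x) (-(s : ℂ) * f₂ x)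
        + 2 * inner ℝ (u x) (Complex.I * (l * s : ℝ) * f₁' x)) x := by
  have h := ((hu.norm_sq.const_mul (l ^ 2)).add (hu'.norm_sq.const_mul a)).add
    ((hu.inner ℝ (hf₁.const_mul (Complex.I * (l * s : ℝ)))).const_mul 2)
  refine h.congr_deriv ?_
  have hre := congrArg Complex.re heq
  have him := congrArg Complex.im heq
  rw [← Complex.ofReal_pow] at hre him
  simp only [Complex.inner, Complex.add_re, Complex.add_im, Complex.sub_re, Complex.sub_im,
    Complex.mul_re, Complex.mul_im, Complex.neg_re, Complex.neg_im, Complex.I_re, Complex.I_im,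
    Complex.ofReal_re, Complex.ofReal_im, Complex.conj_re, Complex.conj_im] at hre him ⊢
  linear_combination 2 * (u' x).re * hre + 2 * (u' x).im * him

/-- The trace bound for a single solution, with explicit constants. -/
lemma trace_bound {a b c l s M : ℝ} (ha : 0 < a) (hbc : b < c) (hl : 0 < l) (hs : 0 < s)
    {u u' u'' f₁ f₁' f₂ : ℝ → ℂ}
    (hu : ∀ x ∈ Set.Icc b c, HasDerivAt u (u' x) x)
    (hu' : ∀ x ∈ Set.Icc b c, HasDerivAt u' (u'' x) x)
    (hf₁ : ∀ x ∈ Set.Icc b c, HasDerivAt f₁ (f₁' x) x)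
    (hf₁'c : ContinuousOn f₁' (Set.Icc b c))
    (hf₂c : ContinuousOn f₂ (Set.Icc b c))
    (heq : ∀ x ∈ Set.Icc b c, (l : ℂ) ^ 2 * u x + (a : ℂ) * u'' x
      = -(s : ℂ) * f₂ x - Complex.I * ((l * s : ℝ) : ℂ) * f₁ x)
    (hM : ‖f₁ c‖ ≤ M) :
    (l * ‖u c‖) ^ 2 / 2 + a * ‖u' c‖ ^ 2 ≤
      2 * M ^ 2 * s ^ 2
      + ((1 + a + s) * (∫ x in b..c, (l ^ 2 * ‖u x‖ ^ 2 + ‖u' x‖ ^ 2))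
          + s * ∫ x in b..c, (‖f₁ x‖ ^ 2 + ‖f₁' x‖ ^ 2 + ‖f₂ x‖ ^ 2)) / (c - b)
      + s * ((∫ x in b..c, (l ^ 2 * ‖u x‖ ^ 2 + ‖u' x‖ ^ 2))
          + ∫ x in b..c, (‖f₁ x‖ ^ 2 + ‖f₁' x‖ ^ 2 + ‖f₂ x‖ ^ 2)) := by
  have hL : 0 < c - b := sub_pos.2 hbc
  have huc : ContinuousOn u (Set.Icc b c) := fun x hx => (hu x hx).continuousAt.continuousWithinAt
  have hu'c : ContinuousOn u' (Set.Icc b c) :=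
    fun x hx => (hu' x hx).continuousAt.continuousWithinAt
  have hf₁c : ContinuousOn f₁ (Set.Icc b c) :=
    fun x hx => (hf₁ x hx).continuousAt.continuousWithinAt
  set h := energyDensity a l s u u' f₁ with hdef
  set g : ℝ → ℝ := fun x => 2 * inner ℝ (u' x) (-(s : ℂ) * f₂ x)
        + 2 * inner ℝ (u x) (Complex.I * (l * s : ℝ) * f₁' x) with gdef
  have hder : ∀ x ∈ Set.Icc b c, HasDerivAt h (g x) x := fun x hx =>
    hasDerivAt_energyDensity (hu x hx) (hu' x hx) (hf₁ x hx) (heq x hx)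
  have hhc : ContinuousOn h (Set.Icc b c) :=
    fun x hx => (hder x hx).continuousAt.continuousWithinAt
  have hgc : ContinuousOn g (Set.Icc b c) := by
    have h1 : ContinuousOn (fun x => inner ℝ (u' x) (-(s : ℂ) * f₂ x)) (Set.Icc b c) :=
      hu'c.inner (continuousOn_const.mul hf₂c)
    have h2 : ContinuousOn (fun x => inner ℝ (u x) (Complex.I * (l * s : ℝ) * f₁' x))
        (Set.Icc b c) := huc.inner (continuousOn_const.mul hf₁'c)
    exact (continuousOn_const.mul h1).add (continuousOn_const.mul h2)
  set E : ℝ → ℝ := fun x => l ^ 2 * ‖u x‖ ^ 2 + ‖u' x‖ ^ 2 with Edef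
  set F : ℝ → ℝ := fun x => ‖f₁ x‖ ^ 2 + ‖f₁' x‖ ^ 2 + ‖f₂ x‖ ^ 2 with Fdef
  have hE : ContinuousOn E (Set.Icc b c) := by fun_prop
  have hF : ContinuousOn F (Set.Icc b c) := by fun_prop
  have hle := hbc.le
  have hnorm : ∀ z : ℂ, ‖Complex.I * ((l * s : ℝ) : ℂ) * z‖ = l * s * ‖z‖ := fun z => by
    rw [norm_mul, norm_mul, Complex.norm_I, Complex.norm_real,
      Real.norm_of_nonneg (mul_pos hl hs).le, one_mul]
  have hnorm' : ∀ z : ℂ, ‖-(s : ℂ) * z‖ = s * ‖z‖ := fun z => by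
    rw [norm_mul, norm_neg, Complex.norm_real, Real.norm_of_nonneg hs.le]
  have hh_le : ∀ x, h x ≤ (1 + a) * E x + s * (E x + F x) := fun x => by
    have h1 := real_inner_le_norm (u x) (Complex.I * (l * s : ℝ) * f₁ x)
    rw [hnorm] at h1
    simp only [hdef, energyDensity, Edef, Fdef]
    have h2 : 0 ≤ s * ((l * ‖u x‖ - ‖f₁ x‖) ^ 2 + ‖u' x‖ ^ 2 + ‖f₁' x‖ ^ 2 + ‖f₂ x‖ ^ 2) := by
      positivity
    have h3 : 0 ≤ a * (l * ‖u x‖) ^ 2 + ‖u' x‖ ^ 2 := by positivity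
    linarith
  have hg_le : ∀ x, g x ≤ s * (E x + F x) := fun x => by
    have h1 := real_inner_le_norm (u x) (Complex.I * (l * s : ℝ) * f₁' x)
    have h1' := real_inner_le_norm (u' x) (-(s : ℂ) * f₂ x)
    rw [hnorm] at h1
    rw [hnorm'] at h1'
    simp only [gdef, Edef, Fdef]
    have h2 : 0 ≤ s * ((l * ‖u x‖ - ‖f₁' x‖) ^ 2 + (‖u' x‖ - ‖f₂ x‖) ^ 2 + ‖f₁ x‖ ^ 2) := by
      positivity
    linarith
  have hint : ∀ {φ : ℝ → ℝ}, ContinuousOn φ (Set.Icc b c) →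
      IntervalIntegrable φ MeasureTheory.volume b c := fun hφ =>
    ContinuousOn.intervalIntegrable_of_Icc hle hφ
  have hftc : ∫ x in b..c, (1 * h x + (x - b) * g x) = (c - b) * h c := by
    rw [intervalIntegral.integral_eq_sub_of_hasDerivAt (f := fun x => (x - b) * h x)]
    · ring
    · intro x hx
      rw [Set.uIcc_of_le hle] at hx
      exact ((hasDerivAt_id x).sub_const b).mul (hder x hx)
    · exact hint (by fun_prop)
  have hmono : (c - b) * h c ≤
      ∫ x in b..c, ((1 + a + s + (c - b) * s) * E x + (s + (c - b) * s) * F x) := by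
    rw [← hftc]
    refine intervalIntegral.integral_mono_on hle (hint (by fun_prop)) (hint (by fun_prop)) ?_
    intro x hx
    have h0 : 0 ≤ s * (E x + F x) := by simp only [Edef, Fdef]; positivity
    have h1 : (x - b) * g x ≤ (x - b) * (s * (E x + F x)) :=
      mul_le_mul_of_nonneg_left (hg_le x) (sub_nonneg.2 hx.1)
    have h2 : (x - b) * (s * (E x + F x)) ≤ (c - b) * (s * (E x + F x)) :=
      mul_le_mul_of_nonneg_right (by linarith [hx.2]) h0
    linarith [hh_le x]
  rw [intervalIntegral.integral_add (hint (by fun_prop)) (hint (by fun_prop)),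
    intervalIntegral.integral_const_mul, intervalIntegral.integral_const_mul] at hmono
  have hhc_le : h c ≤ ((1 + a + s) * (∫ x in b..c, E x) + s * ∫ x in b..c, F x) / (c - b)
      + s * ((∫ x in b..c, E x) + ∫ x in b..c, F x) := by
    rw [← sub_le_iff_le_add, le_div_iff₀ hL]
    linarith
  have hlow : (l * ‖u c‖) ^ 2 / 2 + a * ‖u' c‖ ^ 2 - 2 * M ^ 2 * s ^ 2 ≤ h c := by
    have h1 := (abs_le.1 (abs_real_inner_le_norm (u c) (Complex.I * (l * s : ℝ) * f₁ c))).1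
    rw [hnorm] at h1
    have h2 : l * s * ‖u c‖ * ‖f₁ c‖ ≤ l * s * ‖u c‖ * M :=
      mul_le_mul_of_nonneg_left hM (by positivity)
    have h3 := sq_nonneg (l * ‖u c‖ - 2 * M * s)
    simp only [hdef, energyDensity]
    linarith
  linarith

/-- Boundary (trace) estimate at the left endpoint of the
coupling region. -/
theorem trace_estimate_at_c1
    (a b₂ c₁ : ℝ) (ha : 0 < a) (hbc : b₂ < c₁)
    (lam : ℕ → ℝ) (hlampos : ∀ n, 0 < lam n)
    (hlam : Tendsto lam atTop atTop)
    (u u' u'' f₁ f₁' f₂ : ℕ → ℝ → ℂ)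
    (hu : ∀ n, ∀ x ∈ Set.Icc b₂ c₁, HasDerivAt (u n) (u' n x) x)
    (hu' : ∀ n, ∀ x ∈ Set.Icc b₂ c₁, HasDerivAt (u' n) (u'' n x) x)
    (hu''c : ∀ n, ContinuousOn (u'' n) (Set.Icc b₂ c₁))
    (hf₁ : ∀ n, ∀ x ∈ Set.Icc b₂ c₁, HasDerivAt (f₁ n) (f₁' n x) x)
    (hf₁'c : ∀ n, ContinuousOn (f₁' n) (Set.Icc b₂ c₁))
    (hf₂c : ∀ n, ContinuousOn (f₂ n) (Set.Icc b₂ c₁))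
    (heq : ∀ n, ∀ x ∈ Set.Icc b₂ c₁,
      ((lam n : ℂ)) ^ 2 * u n x + (a : ℂ) * u'' n x
        = -(((lam n ^ (-(1 : ℝ) / 2) : ℝ) : ℂ)) * f₂ n x
          - Complex.I * ((lam n ^ ((1 : ℝ) / 2) : ℝ) : ℂ) * f₁ n x)
    (h1 : Tendsto
      (fun n => ∫ x in b₂..c₁, ((lam n) ^ 2 * ‖u n x‖ ^ 2 + ‖u' n x‖ ^ 2))
      atTop (nhds 0))
    (h2 : ∃ M : ℝ, ∀ n, ∀ x ∈ Set.Icc b₂ c₁, ‖f₁ n x‖ ≤ M)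
    (h3 : ∃ M : ℝ, ∀ n,
      (∫ x in b₂..c₁, (‖f₁ n x‖ ^ 2 + ‖f₁' n x‖ ^ 2 + ‖f₂ n x‖ ^ 2)) ≤ M) :
    Tendsto (fun n => (lam n : ℂ) * u n c₁) atTop (nhds 0)
      ∧ Tendsto (fun n => u' n c₁) atTop (nhds 0) := by
  obtain ⟨M, hM⟩ := h2
  obtain ⟨K, hK⟩ := h3
  set E : ℕ → ℝ := fun n => ∫ x in b₂..c₁, ((lam n) ^ 2 * ‖u n x‖ ^ 2 + ‖u' n x‖ ^ 2)
  set s : ℕ → ℝ := fun n => lam n ^ (-(1 : ℝ) / 2) with sdef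
  have hs : Tendsto s atTop (nhds 0) := by
    have h := (tendsto_rpow_neg_atTop (show (0 : ℝ) < 1 / 2 by norm_num)).comp hlam
    refine h.congr fun n => ?_
    simp only [sdef, Function.comp_apply]
    norm_num
  have hspos : ∀ n, 0 < s n := fun n => Real.rpow_pos_of_pos (hlampos n) _
  have hhalf : ∀ n, lam n ^ ((1 : ℝ) / 2) = lam n * s n := fun n => by
    simp only [sdef]
    nth_rewrite 2 [← Real.rpow_one (lam n)]
    rw [← Real.rpow_add (hlampos n)]
    norm_num
  have hbound : ∀ n, (lam n * ‖u n c₁‖) ^ 2 / 2 + a * ‖u' n c₁‖ ^ 2 ≤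
      2 * M ^ 2 * s n ^ 2 + ((1 + a + s n) * E n + s n * K) / (c₁ - b₂)
        + s n * (E n + K) := fun n => by
    have hb := trace_bound ha hbc (hlampos n) (hspos n) (hu n) (hu' n) (hf₁ n) (hf₁'c n) (hf₂c n)
      (fun x hx => by rw [heq n x hx, hhalf]) (hM n c₁ (Set.right_mem_Icc.2 hbc.le))
    refine hb.trans ?_
    have hL : 0 ≤ c₁ - b₂ := (sub_pos.2 hbc).le
    have := (hspos n).le
    gcongr <;> exact hK n
  have hlim : Tendsto (fun n => 2 * M ^ 2 * s n ^ 2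
      + ((1 + a + s n) * E n + s n * K) / (c₁ - b₂) + s n * (E n + K)) atTop (nhds 0) := by
    have h := (((hs.pow 2).const_mul (2 * M ^ 2)).add
      ((((hs.const_add (1 + a)).mul h1).add (hs.mul_const K)).div_const (c₁ - b₂))).add
      (hs.mul (h1.add_const K))
    simpa using h
  have hsqrt : ∀ v : ℕ → ℝ, (∀ n, 0 ≤ v n) → Tendsto (fun n => v n ^ 2) atTop (nhds 0) →
      Tendsto v atTop (nhds 0) := fun v hv h => by
    have h' := h.sqrt
    rw [Real.sqrt_zero] at h'
    exact h'.congr fun n => Real.sqrt_sq (hv n)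
  constructor
  · rw [tendsto_zero_iff_norm_tendsto_zero]
    refine hsqrt _ (fun n => norm_nonneg _) ?_
    refine squeeze_zero (fun n => sq_nonneg _) (fun n => ?_) (by simpa using hlim.const_mul 2)
    have h0 : 0 ≤ a * ‖u' n c₁‖ ^ 2 := by positivity
    rw [norm_mul, Complex.norm_real, Real.norm_of_nonneg (hlampos n).le]
    linarith [hbound n]
  · rw [tendsto_zero_iff_norm_tendsto_zero]
    refine hsqrt _ (fun n => norm_nonneg _) ?_
    refine squeeze_zero (fun n => sq_nonneg _) (fun n => ?_) (by simpa using hlim.div_const a)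
    rw [le_div_iff₀ ha]
    linarith [hbound n, sq_nonneg (lam n * ‖u n c₁‖)]
end
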